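/- arXiv:2503.11211 — 3 statements merged into one kernel-verified Lean document; each statement's English description precedes it below -/
import Mathlib

section
/- Let (X; A, B) be an excisive triad, i.e. X is the union of the interiors of subspaces A and B, and set C = A ∩ B (assumed nonempty). Suppose the pair (A, C) is n-connected and the pair (B, C) is m-connected. Then the inclusion of pairs i : (A, C) → (X, B) induces isomorphisms on relative homotopy groups π_q(A, C) → π_q(X, B) for all q < m + n and a surjection for q = m + n; that is, i is an (m+n)-equivalence. -/
/-!
# Statement 0: Homotopy excision (Blakers–Massey)

Relative homotopy "groups" are formalized as the set of homotopy classes of maps of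
triples `(I^{q+1}, ∂I^{q+1}, J^q) → (X, A, a)`; an `(m+n)`-equivalence is expressed as
bijectivity of the induced map in degrees `q+1 < m+n` and surjectivity in degree
`q+1 = m+n`.
-/

open scoped Topology Topology.Homotopy unitInterval
open ContinuousMap Function

universe u v

namespace Paper

variable {X : Type u} {Y : Type v} [TopologicalSpace X] [TopologicalSpace Y]

/-- The subset `J^q ⊆ ∂I^{q+1}`: the closure of the boundary minus the top face
(the top face being `{y | y 0 = 1}`). -/
def JSet (q : ℕ) : Set (I^ Fin (q + 1)) :=
  {y | y 0 = 0 ∨ ∃ i, i ≠ 0 ∧ (y i = 0 ∨ y i = 1)}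

/-- Maps of triples `(I^{q+1}, ∂I^{q+1}, J^q) → (X, A, a)`, the representatives of
elements of the relative homotopy group `π_{q+1}(X, A, a)`. -/
def RelGenLoop (q : ℕ) (X : Type u) [TopologicalSpace X] (A : Set X) (a : X) :
    Set C(I^ Fin (q + 1), X) :=
  {f | (∀ y ∈ Cube.boundary (Fin (q + 1)), f y ∈ A) ∧ ∀ y ∈ JSet q, f y = a}

/-- Homotopy through maps of triples. -/
def RelHomotopic {q : ℕ} {A : Set X} {a : X} (f g : RelGenLoop q X A a) : Prop :=
  ∃ H : C(I × (I^ Fin (q + 1)), X),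
    (∀ y, H (0, y) = f.1 y) ∧ (∀ y, H (1, y) = g.1 y) ∧
    (∀ (t : I), ∀ y ∈ Cube.boundary (Fin (q + 1)), H (t, y) ∈ A) ∧
    (∀ (t : I), ∀ y ∈ JSet q, H (t, y) = a)

/-- The relative homotopy group (as a set) `π_{q+1}(X, A, a)`. -/
def RelPi (q : ℕ) (X : Type u) [TopologicalSpace X] (A : Set X) (a : X) : Type u :=
  Quot (@RelHomotopic X _ q A a)

/-- A map of pairs pushes relative generalized loops forward. -/
def RelGenLoop.push {q : ℕ} {A : Set X} {B : Set Y} {a : X} {b : Y}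
    (φ : C(X, Y)) (hAB : Set.MapsTo φ A B) (hab : φ a = b)
    (f : RelGenLoop q X A a) : RelGenLoop q Y B b :=
  ⟨φ.comp f.1, fun y hy => hAB (f.2.1 y hy), fun y hy => by
    simp only [ContinuousMap.comp_apply, f.2.2 y hy, hab]⟩

theorem RelGenLoop.push_homotopic {q : ℕ} {A : Set X} {B : Set Y} {a : X} {b : Y}
    (φ : C(X, Y)) (hAB : Set.MapsTo φ A B) (hab : φ a = b)
    {f g : RelGenLoop q X A a} (h : RelHomotopic f g) :
    RelHomotopic (RelGenLoop.push φ hAB hab f) (RelGenLoop.push φ hAB hab g) := by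
  obtain ⟨H, h0, h1, hbd, hJ⟩ := h
  exact ⟨φ.comp H, fun y => by simp [h0 y]; rfl, fun y => by simp [h1 y]; rfl,
    fun t y hy => hAB (hbd t y hy), fun t y hy => by simp [hJ t y hy, hab]⟩

/-- The map on relative homotopy groups induced by a map of pairs. -/
def relPiMap {q : ℕ} {A : Set X} {B : Set Y} {a : X} {b : Y}
    (φ : C(X, Y)) (hAB : Set.MapsTo φ A B) (hab : φ a = b) :
    RelPi q X A a → RelPi q Y B b :=
  Quot.map (RelGenLoop.push φ hAB hab) fun _ _ h => RelGenLoop.push_homotopic φ hAB hab h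

/-- A pair `(X, A)` is `n`-connected: `π₀(A) → π₀(X)` is surjective and the relative
homotopy groups `π_q(X, A, a)` vanish for all `1 ≤ q ≤ n` and all basepoints `a ∈ A`. -/
def PairConnected (X : Type u) [TopologicalSpace X] (A : Set X) (n : ℕ) : Prop :=
  (∀ x : X, ∃ a ∈ A, Joined x a) ∧
    ∀ (q : ℕ) (a : X), a ∈ A → q + 1 ≤ n → Subsingleton (RelPi q X A a)

section Helpers
open Set

/-- Radial projection onto the closed unit ball (sup norm). -/
noncomputable def rad {ι : Type} [Fintype ι] (z : ι → ℝ) : ι → ℝ := (max 1 ‖z‖)⁻¹ • z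

section rad
variable {ι : Type} [Fintype ι]

theorem rad_continuous : Continuous (rad : (ι → ℝ) → (ι → ℝ)) := by
  unfold rad
  refine Continuous.smul (Continuous.inv₀ (continuous_const.max continuous_norm) ?_) continuous_id
  intro x
  positivity

theorem rad_of_le {z : ι → ℝ} (h : ‖z‖ ≤ 1) : rad z = z := by
  simp [rad, max_eq_left h]

theorem norm_rad_of_ge {z : ι → ℝ} (h : 1 ≤ ‖z‖) : ‖rad z‖ = 1 := by
  have : ‖z‖ ≠ 0 := by positivity
  simp [rad, max_eq_right h, norm_smul, this]

theorem norm_rad_le (z : ι → ℝ) : ‖rad z‖ ≤ 1 := by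
  rcases le_total ‖z‖ 1 with h | h
  · rwa [rad_of_le h]
  · exact (norm_rad_of_ge h).le

theorem rad_smul_of_sphere {z : ι → ℝ} (h : ‖z‖ = 1) {r : ℝ} (hr : 1 ≤ r) :
    rad (r • z) = z := by
  have h0 : 0 ≤ r := by linarith
  have : r ≠ 0 := by positivity
  simp [rad, norm_smul, h, abs_of_nonneg h0, max_eq_right hr, smul_smul, this]

end rad

/-- The pair `(S, C)` has the compression property for cubes of dimension at most `n`. -/
def Compress {X : Type*} [TopologicalSpace X] (S C : Set X) (n : ℕ) : Prop :=
  ∀ (ι : Type) [Fintype ι], Fintype.card ι ≤ n → ∀ f : (ι → ℝ) → X,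
    ContinuousOn f {z | ‖z‖ ≤ 1} → (∀ z, ‖z‖ ≤ 1 → f z ∈ S) → (∀ z, ‖z‖ = 1 → f z ∈ C) →
    ∃ G : ℝ × (ι → ℝ) → X, ContinuousOn G (Icc 0 1 ×ˢ {z | ‖z‖ ≤ 1}) ∧
      (∀ z, ‖z‖ ≤ 1 → G (0, z) = f z) ∧
      (∀ t ∈ Icc (0:ℝ) 1, ∀ z, ‖z‖ ≤ 1 → G (t, z) ∈ S) ∧
      (∀ t ∈ Icc (0:ℝ) 1, ∀ z, ‖z‖ = 1 → G (t, z) ∈ C) ∧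
      (∀ z, ‖z‖ ≤ 1 → G (1, z) ∈ C)

/-- Homotopy extension for the ball. -/
theorem ball_hep {X : Type*} [TopologicalSpace X] {S : Set X} {ι : Type} [Fintype ι]
    (f : (ι → ℝ) → X) (h : ℝ × (ι → ℝ) → X)
    (hf : ContinuousOn f {z | ‖z‖ ≤ 1}) (hfS : ∀ z, ‖z‖ ≤ 1 → f z ∈ S)
    (hh : ContinuousOn h (Icc 0 1 ×ˢ {z | ‖z‖ = 1}))
    (hhS : ∀ t ∈ Icc (0:ℝ) 1, ∀ z, ‖z‖ = 1 → h (t, z) ∈ S)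
    (h0 : ∀ z, ‖z‖ = 1 → h (0, z) = f z) :
    ∃ H : ℝ × (ι → ℝ) → X, ContinuousOn H (Icc 0 1 ×ˢ {z | ‖z‖ ≤ 1}) ∧
      (∀ z, ‖z‖ ≤ 1 → H (0, z) = f z) ∧
      (∀ t ∈ Icc (0:ℝ) 1, ∀ z, ‖z‖ ≤ 1 → H (t, z) ∈ S) ∧
      (∀ t ∈ Icc (0:ℝ) 1, ∀ z, ‖z‖ = 1 → H (t, z) = h (t, z)) := by
  classical
  let o : ℝ × (ι → ℝ) → ℝ := fun p => (1 + p.1) * ‖p.2‖ - 1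
  have ho : Continuous o := by fun_prop
  have hb : Continuous (fun p : ℝ × (ι → ℝ) => rad ((1 + p.1) • p.2)) :=
    rad_continuous.comp (by fun_prop)
  have hn : ∀ p : ℝ × (ι → ℝ), 0 ≤ p.1 → ‖(1 + p.1) • p.2‖ = (1 + p.1) * ‖p.2‖ := by
    intro p hp
    rw [norm_smul, Real.norm_of_nonneg (by linarith)]
  let H : ℝ × (ι → ℝ) → X := fun p =>
    if o p ≤ 0 then f (rad ((1 + p.1) • p.2)) else h (o p, rad ((1 + p.1) • p.2))
  -- on the part where `0 ≤ o p`
  have hge : ∀ p : ℝ × (ι → ℝ), p ∈ (Icc (0:ℝ) 1 ×ˢ {z : ι → ℝ | ‖z‖ ≤ 1}) → 0 ≤ o p →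
      o p ∈ Icc (0:ℝ) 1 ∧ ‖rad ((1 + p.1) • p.2)‖ = 1 := by
    rintro ⟨t, z⟩ ⟨⟨ht0, ht1⟩, hz⟩ hop
    simp only [mem_ofPred_eq] at hz ht0 ht1
    have hop' : 0 ≤ (1 + t) * ‖z‖ - 1 := hop
    refine ⟨⟨hop, ?_⟩, norm_rad_of_ge ?_⟩
    · show (1 + t) * ‖z‖ - 1 ≤ 1
      nlinarith [norm_nonneg z]
    · rw [hn (t, z) ht0]
      show 1 ≤ (1 + t) * ‖z‖
      linarith
  have hH2 : ∀ p : ℝ × (ι → ℝ), p ∈ (Icc (0:ℝ) 1 ×ˢ {z : ι → ℝ | ‖z‖ ≤ 1}) → 0 ≤ o p →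
      H p = h (o p, rad ((1 + p.1) • p.2)) := by
    intro p hp hop
    simp only [H]
    split_ifs with hle
    · have e : o p = 0 := le_antisymm hle hop
      rw [e, h0 _ (hge p hp hop).2]
    · rfl
  refine ⟨H, ?_, ?_, ?_, ?_⟩
  · have hcov : (Icc (0:ℝ) 1 ×ˢ {z : ι → ℝ | ‖z‖ ≤ 1}) =
        ((Icc (0:ℝ) 1 ×ˢ {z : ι → ℝ | ‖z‖ ≤ 1}) ∩ {p | o p ≤ 0}) ∪
        ((Icc (0:ℝ) 1 ×ˢ {z : ι → ℝ | ‖z‖ ≤ 1}) ∩ {p | 0 ≤ o p}) := by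
      rw [← inter_union_distrib_left]
      symm
      apply inter_eq_left.2
      intro p _
      exact le_total (o p) 0
    have hcl : IsClosed (Icc (0:ℝ) 1 ×ˢ {z : ι → ℝ | ‖z‖ ≤ 1}) :=
      isClosed_Icc.prod (isClosed_le continuous_norm continuous_const)
    rw [hcov]
    refine ContinuousOn.union_of_isClosed ?_ ?_
      (hcl.inter (isClosed_le ho continuous_const)) (hcl.inter (isClosed_le continuous_const ho))
    · refine ContinuousOn.congr (f := fun p => f (rad ((1 + p.1) • p.2))) ?_ ?_
      · exact hf.comp hb.continuousOn (fun p _ => norm_rad_le _)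
      · rintro p ⟨_, hp⟩
        simp only [H]
        rw [if_pos (show o p ≤ 0 from hp)]
    · refine ContinuousOn.congr (f := fun p => h (o p, rad ((1 + p.1) • p.2))) ?_ ?_
      · exact hh.comp (ho.prodMk hb).continuousOn (fun p hp => hge p hp.1 hp.2)
      · rintro p ⟨hp, hp'⟩
        exact hH2 p hp hp'
  · intro z hz
    simp only [H, o]
    rw [if_pos (by simpa using hz)]
    simp [rad_of_le hz]
  · intro t ht z hz
    by_cases hop : o (t, z) ≤ 0
    · simp only [H]
      rw [if_pos hop]
      exact hfS _ (norm_rad_le _)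
    · have := hge (t, z) ⟨ht, hz⟩ (le_of_not_ge hop)
      rw [hH2 (t, z) ⟨ht, hz⟩ (le_of_not_ge hop)]
      exact hhS _ this.1 _ this.2
  · intro t ht z hz
    have e : o (t, z) = t := by simp [o, hz]
    rw [hH2 (t, z) ⟨ht, hz.le⟩ (by rw [e]; exact ht.1), e]
    simp only
    rw [rad_smul_of_sphere hz (by linarith [ht.1])]

open Classical in
/-- The abstract cell lemma. -/
theorem ball_cell {X : Type*} [TopologicalSpace X] {S C : Set X} {n : ℕ} (hSC : Compress S C n)
    {ι : Type} [Fintype ι]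
    (f : (ι → ℝ) → X) (h : ℝ × (ι → ℝ) → X)
    (hf : ContinuousOn f {z | ‖z‖ ≤ 1}) (hfS : ∀ z, ‖z‖ ≤ 1 → f z ∈ S)
    (hh : ContinuousOn h (Icc 0 1 ×ˢ {z | ‖z‖ = 1}))
    (hhS : ∀ t ∈ Icc (0:ℝ) 1, ∀ z, ‖z‖ = 1 → h (t, z) ∈ S)
    (h0 : ∀ z, ‖z‖ = 1 → h (0, z) = f z)
    (h1 : ∀ z, ‖z‖ = 1 → h (1, z) ∉ C →
      n + 1 ≤ (Finset.univ.filter (fun i => |z i| ≤ 1 / 4)).card) :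
    ∃ H : ℝ × (ι → ℝ) → X, ContinuousOn H (Icc 0 1 ×ˢ {z | ‖z‖ ≤ 1}) ∧
      (∀ z, ‖z‖ ≤ 1 → H (0, z) = f z) ∧
      (∀ t ∈ Icc (0:ℝ) 1, ∀ z, ‖z‖ ≤ 1 → H (t, z) ∈ S) ∧
      (∀ t ∈ Icc (0:ℝ) 1, ∀ z, ‖z‖ = 1 → H (t, z) = h (t, z)) ∧
      (∀ z, ‖z‖ ≤ 1 → H (1, z) ∉ C →
        n + 1 ≤ (Finset.univ.filter (fun i => |z i| ≤ 1 / 4)).card) := by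
  obtain ⟨H', hc, hH0, hHS, hHb⟩ := ball_hep f h hf hfS hh hhS h0
  have I1 : (1:ℝ) ∈ Icc (0:ℝ) 1 := ⟨zero_le_one, le_rfl⟩
  by_cases hcard : Fintype.card ι ≤ n
  · have hbC : ∀ z, ‖z‖ = 1 → H' (1, z) ∈ C := by
      intro z hz
      by_contra hcon
      rw [hHb 1 I1 z hz] at hcon
      have := h1 z hz hcon
      have h2 := Finset.card_le_univ (Finset.univ.filter (fun i => |z i| ≤ 1 / 4))
      omega
    obtain ⟨G, gc, g0, gS, gb, g1⟩ := hSC ι hcard (fun z => H' (1, z))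
      (hc.comp (by fun_prop) (fun z hz => ⟨I1, hz⟩)) (fun z hz => hHS 1 I1 z hz) hbC
    let sg : ℝ × (ι → ℝ) → ℝ := fun p => p.1 * (1 + min 1 (2 * (1 - ‖p.2‖)))
    have hsg : Continuous sg := by fun_prop
    have hb : Continuous (fun p : ℝ × (ι → ℝ) => rad ((1 + p.1) • p.2)) :=
      rad_continuous.comp (by fun_prop)
    let H : ℝ × (ι → ℝ) → X := fun p =>
      if sg p ≤ 1 then H' (sg p, rad ((1 + p.1) • p.2)) else G (sg p - 1, rad ((1 + p.1) • p.2))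
    have hsgr : ∀ p : ℝ × (ι → ℝ), p ∈ (Icc (0:ℝ) 1 ×ˢ {z : ι → ℝ | ‖z‖ ≤ 1}) →
        0 ≤ sg p ∧ sg p ≤ 2 := by
      rintro ⟨t, z⟩ ⟨⟨ht0, ht1⟩, hz⟩
      simp only [mem_ofPred_eq] at hz ht0 ht1
      have a1 : 0 ≤ min 1 (2 * (1 - ‖z‖)) := le_min zero_le_one (by linarith)
      have a2 : min 1 (2 * (1 - ‖z‖)) ≤ 1 := min_le_left _ _
      simp only [sg]
      constructor
      · positivity
      · nlinarith
    have hH2 : ∀ p : ℝ × (ι → ℝ), 1 ≤ sg p → H p = G (sg p - 1, rad ((1 + p.1) • p.2)) := by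
      intro p hop
      simp only [H]
      split_ifs with hle
      · have e : sg p = 1 := le_antisymm hle hop
        rw [e, sub_self, g0 _ (norm_rad_le _)]
      · rfl
    refine ⟨H, ?_, ?_, ?_, ?_, ?_⟩
    · have hcov : (Icc (0:ℝ) 1 ×ˢ {z : ι → ℝ | ‖z‖ ≤ 1}) =
          ((Icc (0:ℝ) 1 ×ˢ {z : ι → ℝ | ‖z‖ ≤ 1}) ∩ {p | sg p ≤ 1}) ∪
          ((Icc (0:ℝ) 1 ×ˢ {z : ι → ℝ | ‖z‖ ≤ 1}) ∩ {p | 1 ≤ sg p}) := by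
        rw [← inter_union_distrib_left]
        symm
        apply inter_eq_left.2
        intro p _
        exact le_total (sg p) 1
      have hcl : IsClosed (Icc (0:ℝ) 1 ×ˢ {z : ι → ℝ | ‖z‖ ≤ 1}) :=
        isClosed_Icc.prod (isClosed_le continuous_norm continuous_const)
      rw [hcov]
      refine ContinuousOn.union_of_isClosed ?_ ?_
        (hcl.inter (isClosed_le hsg continuous_const)) (hcl.inter (isClosed_le continuous_const hsg))
      · refine ContinuousOn.congr (f := fun p => H' (sg p, rad ((1 + p.1) • p.2))) ?_ ?_
        · exact hc.comp (hsg.prodMk hb).continuousOn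
            (fun p hp => ⟨⟨(hsgr p hp.1).1, hp.2⟩, norm_rad_le _⟩)
        · rintro p ⟨_, hp⟩
          simp only [H]
          rw [if_pos (show sg p ≤ 1 from hp)]
      · refine ContinuousOn.congr (f := fun p => G (sg p - 1, rad ((1 + p.1) • p.2))) ?_ ?_
        · refine gc.comp ((hsg.sub continuous_const).prodMk hb).continuousOn
            (fun p hp => ⟨⟨?_, ?_⟩, norm_rad_le _⟩)
          · have := hp.2
            simp only [mem_ofPred_eq] at this
            show 0 ≤ sg p - 1
            linarith
          · have := (hsgr p hp.1).2
            show sg p - 1 ≤ 1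
            linarith
        · rintro p ⟨hp, hp'⟩
          exact hH2 p hp'
    · intro z hz
      simp only [H, sg]
      rw [if_pos (by simp)]
      simp [rad_of_le hz, hH0 z hz]
    · intro t ht z hz
      have := hsgr (t, z) ⟨ht, hz⟩
      by_cases hop : sg (t, z) ≤ 1
      · simp only [H]
        rw [if_pos hop]
        exact hHS _ ⟨this.1, hop⟩ _ (norm_rad_le _)
      · rw [hH2 (t, z) (le_of_not_ge hop)]
        exact gS _ ⟨by linarith, by linarith⟩ _ (norm_rad_le _)
    · intro t ht z hz
      have e : sg (t, z) = t := by simp [sg, hz]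
      simp only [H]
      rw [if_pos (by rw [e]; exact ht.2), e, rad_smul_of_sphere hz (by linarith [ht.1])]
      exact hHb t ht z hz
    · intro z hz hzC
      exfalso
      apply hzC
      have hm : 0 ≤ min 1 (2 * (1 - ‖z‖)) := le_min zero_le_one (by linarith)
      have hs1 : 1 ≤ sg (1, z) := by
        simp only [sg]; linarith
      rw [hH2 _ hs1]
      by_cases hz2 : ‖z‖ ≤ 1 / 2
      · have e : sg (1, z) = 2 := by
          simp only [sg]
          rw [min_eq_left (by linarith)]
          norm_num
        rw [e]
        norm_num
        exact g1 _ (norm_rad_le _)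
      · refine gb _ ⟨by linarith, by linarith [(hsgr (1, z) ⟨I1, hz⟩).2]⟩ _ ?_
        apply norm_rad_of_ge
        rw [norm_smul]
        norm_num
        linarith
  · refine ⟨fun p => H' (p.1, rad ((1 + 3 * p.1) • p.2)), ?_, ?_, ?_, ?_, ?_⟩
    · have hb : Continuous (fun p : ℝ × (ι → ℝ) => rad ((1 + 3 * p.1) • p.2)) :=
        rad_continuous.comp (by fun_prop)
      exact hc.comp (continuous_fst.prodMk hb).continuousOn
        (fun p hp => ⟨hp.1, norm_rad_le _⟩)
    · intro z hz
      simp [rad_of_le hz, hH0 z hz]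
    · intro t ht z hz
      exact hHS t ht _ (norm_rad_le _)
    · intro t ht z hz
      simp only
      rw [rad_smul_of_sphere hz (by linarith [ht.1])]
      exact hHb t ht z hz
    · intro z hz hzC
      simp only at hzC
      by_cases hz4 : ‖z‖ ≤ 1 / 4
      · have : Finset.univ.filter (fun i => |z i| ≤ 1 / 4) = Finset.univ := by
          apply Finset.filter_true_of_mem
          intro i _
          exact (norm_le_pi_norm z i).trans hz4
        rw [this, Finset.card_univ]
        omega
      · have hn4 : ‖(1 + 3 * (1:ℝ)) • z‖ = 4 * ‖z‖ := by
          rw [norm_smul]; norm_num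
        have hw : ‖rad ((1 + 3 * (1:ℝ)) • z)‖ = 1 := norm_rad_of_ge (by rw [hn4]; linarith)
        rw [hHb 1 I1 _ hw] at hzC
        refine (h1 _ hw hzC).trans (Finset.card_le_card ?_)
        intro i
        simp only [Finset.mem_filter, Finset.mem_univ, true_and]
        intro hi
        refine le_trans ?_ hi
        simp only [rad, hn4, Pi.smul_apply, smul_eq_mul]
        rw [max_eq_right (by linarith), abs_mul, abs_mul]
        have hzp : 0 < ‖z‖ := by linarith
        have e1 : |(4 * ‖z‖)⁻¹| = (4 * ‖z‖)⁻¹ := abs_of_pos (by positivity)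
        have e2 : |(1 + 3 * 1 : ℝ)| = 4 := by norm_num
        have hz0 : ‖z‖ ≠ 0 := hzp.ne'
        have : (4 * ‖z‖)⁻¹ * (4 * |z i|) = |z i| / ‖z‖ := by
          rw [mul_inv, div_eq_mul_inv]; ring
        rw [e1, e2, this, le_div_iff₀ hzp]
        nlinarith [abs_nonneg (z i)]

open Classical in
/-- Number of coordinates of `x` which lie in the middle part (w.r.t. `φ`) of their unit cell. -/
noncomputable def cnt {N : ℕ} (φ : ℝ ≃o ℝ) (x : Fin N → ℝ) : ℕ :=
  (Finset.univ.filter (fun i => |φ (Int.fract (x i))| ≤ 1 / 4)).card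

/-- The closed grid cell with index `c`: even entries are vertices, odd ones are edges. -/
def cell {N : ℕ} (c : Fin N → ℤ) : Set (Fin N → ℝ) :=
  {x | ∀ i, ((c i / 2 : ℤ) : ℝ) ≤ x i ∧ x i ≤ (((c i + 1) / 2 : ℤ) : ℝ)}

/-- The smallest cell containing `x`. -/
noncomputable def car {N : ℕ} (x : Fin N → ℝ) : Fin N → ℤ := fun i => ⌊x i⌋ + ⌈x i⌉

/-- The dimension of a cell. -/
def cdim {N : ℕ} (c : Fin N → ℤ) : ℕ := (Finset.univ.filter (fun i => Odd (c i))).card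

theorem floor_ceil_cases (x : ℝ) : (x = ⌊x⌋ ∧ ⌈x⌉ = ⌊x⌋) ∨
    ((⌊x⌋ : ℝ) < x ∧ x < ⌊x⌋ + 1 ∧ ⌈x⌉ = ⌊x⌋ + 1) := by
  rcases eq_or_lt_of_le (Int.floor_le x) with h | h
  · left
    refine ⟨h.symm, ?_⟩
    conv_lhs => rw [← h]
    simp
  · right
    refine ⟨h, Int.lt_floor_add_one x, ?_⟩
    rw [Int.ceil_eq_iff]
    push_cast
    refine ⟨by linarith, (Int.lt_floor_add_one x).le⟩

theorem car1 {j : ℤ} {x : ℝ} (h1 : ((j / 2 : ℤ) : ℝ) ≤ x) (h2 : x ≤ (((j + 1) / 2 : ℤ) : ℝ)) :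
    ⌊x⌋ + ⌈x⌉ = j ∨ (Odd j ∧ ∃ k : ℤ, x = k ∧ ⌊x⌋ + ⌈x⌉ = 2 * k ∧ (k = j / 2 ∨ k = j / 2 + 1)) := by
  have a1 : j / 2 ≤ ⌊x⌋ := Int.le_floor.2 h1
  have a2 : ⌈x⌉ ≤ (j + 1) / 2 := Int.ceil_le.2 h2
  rcases floor_ceil_cases x with ⟨e, e2⟩ | ⟨_, _, e2⟩
  · by_cases hj : Odd j
    · right
      refine ⟨hj, ⌊x⌋, e, by omega, ?_⟩
      obtain ⟨r, rfl⟩ := hj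
      omega
    · left
      rw [Int.not_odd_iff_even] at hj
      obtain ⟨r, rfl⟩ := hj
      omega
  · left
    omega

theorem mem_cell_car {N : ℕ} (x : Fin N → ℝ) : x ∈ cell (car x) := by
  intro i
  have h1 := Int.floor_le (x i)
  have h2 := Int.le_ceil (x i)
  simp only [car]
  rcases floor_ceil_cases (x i) with ⟨e, e2⟩ | ⟨_, _, e2⟩
  · have q1 : (⌊x i⌋ + ⌈x i⌉) / 2 = ⌊x i⌋ := by omega
    have q2 : (⌊x i⌋ + ⌈x i⌉ + 1) / 2 = ⌊x i⌋ := by omega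
    rw [q1, q2]
    exact ⟨h1, e.le⟩
  · have q1 : (⌊x i⌋ + ⌈x i⌉) / 2 = ⌊x i⌋ := by omega
    have q2 : (⌊x i⌋ + ⌈x i⌉ + 1) / 2 = ⌈x i⌉ := by omega
    rw [q1, q2]
    exact ⟨h1, h2⟩

theorem cell_car_subset {N : ℕ} {c : Fin N → ℤ} {x : Fin N → ℝ} (hx : x ∈ cell c) :
    cell (car x) ⊆ cell c := by
  intro y hy i
  have hyi := hy i
  simp only [car] at hyi
  rcases car1 (hx i).1 (hx i).2 with h | ⟨hj, k, e, e2, hk⟩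
  · rwa [h] at hyi
  · rw [e2] at hyi
    have q1 : 2 * k / 2 = k := by omega
    have q2 : (2 * k + 1) / 2 = k := by omega
    rw [q1, q2] at hyi
    have : y i = x i := by rw [e]; exact le_antisymm hyi.2 hyi.1
    rw [this]
    exact hx i

theorem odd_car_imp {N : ℕ} {c : Fin N → ℤ} {x : Fin N → ℝ} (hx : x ∈ cell c) (i : Fin N)
    (h : Odd (car x i)) : car x i = c i := by
  rcases car1 (hx i).1 (hx i).2 with h' | ⟨hj, k, e, e2, hk⟩
  · exact h'
  · exfalso
    simp only [car] at h
    rw [e2] at h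
    obtain ⟨r, hr⟩ := h
    omega

theorem cdim_car_lt {N : ℕ} {c : Fin N → ℤ} {x : Fin N → ℝ} (hx : x ∈ cell c) (hne : car x ≠ c) :
    cdim (car x) < cdim c := by
  apply Finset.card_lt_card
  rw [Finset.ssubset_iff_subset_ne]
  constructor
  · intro i
    simp only [Finset.mem_filter, Finset.mem_univ, true_and]
    intro h
    rwa [odd_car_imp hx i h] at h
  · intro heq
    apply hne
    funext i
    rcases car1 (hx i).1 (hx i).2 with h' | ⟨hj, k, e, e2, hk⟩
    · exact h'
    · have : i ∈ Finset.univ.filter (fun i => Odd (car x i)) := by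
        rw [heq]; simpa using hj
      exact odd_car_imp hx i (by simpa using this)

theorem isClosed_cell {N : ℕ} (c : Fin N → ℤ) : IsClosed (cell c) := by
  have : cell c = ⋂ i, {x : Fin N → ℝ | ((c i / 2 : ℤ) : ℝ) ≤ x i ∧ x i ≤ (((c i + 1) / 2 : ℤ) : ℝ)} := by
    ext x
    simp [cell]
  rw [this]
  refine isClosed_iInter fun i => ?_
  exact (isClosed_le continuous_const (continuous_apply i)).inter
    (isClosed_le (continuous_apply i) continuous_const)

theorem locallyFinite_cell {N : ℕ} : LocallyFinite (cell : (Fin N → ℤ) → Set (Fin N → ℝ)) := by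
  intro x
  refine ⟨Metric.ball x 1, Metric.ball_mem_nhds x one_pos, ?_⟩
  refine Set.Finite.subset (Set.finite_Icc (fun i => 2 * ⌊x i⌋ - 6) (fun i => 2 * ⌊x i⌋ + 6)) ?_
  rintro c ⟨y, hyc, hyx⟩
  rw [Metric.mem_ball] at hyx
  have key : ∀ i, 2 * ⌊x i⌋ - 6 ≤ c i ∧ c i ≤ 2 * ⌊x i⌋ + 6 := by
    intro i
    have h := (dist_le_pi_dist y x i).trans_lt hyx
    rw [Real.dist_eq, abs_lt] at h
    have h1 := (hyc i).1
    have h2 := (hyc i).2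
    have f1 := Int.floor_le (x i)
    have f2 := Int.lt_floor_add_one (x i)
    have g1 : ((c i / 2 : ℤ) : ℝ) < ((⌊x i⌋ + 2 : ℤ) : ℝ) := by push_cast; linarith
    have g2 : ((⌊x i⌋ - 1 : ℤ) : ℝ) < (((c i + 1) / 2 : ℤ) : ℝ) := by push_cast; linarith
    rw [Int.cast_lt] at g1 g2
    omega
  exact ⟨fun i => (key i).1, fun i => (key i).2⟩

/-! Parametrisation of cells by balls. -/
section param
variable {N : ℕ} (c : Fin N → ℤ) (φ : ℝ ≃o ℝ)

open Classical in
/-- Parametrisation of the cell `c` by the unit ball. -/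
noncomputable def pz (z : {i // Odd (c i)} → ℝ) : Fin N → ℝ := fun i =>
  if h : Odd (c i) then ((c i / 2 : ℤ) : ℝ) + φ.symm (z ⟨i, h⟩) else ((c i / 2 : ℤ) : ℝ)

/-- Inverse parametrisation. -/
noncomputable def pinv (x : Fin N → ℝ) : {i // Odd (c i)} → ℝ := fun i =>
  φ (x i - ((c i / 2 : ℤ) : ℝ))

theorem pz_continuous : Continuous (pz c φ) := by
  refine continuous_pi fun i => ?_
  unfold pz
  split_ifs with h
  · exact continuous_const.add (φ.symm.continuous.comp (continuous_apply _))
  · exact continuous_const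

theorem pinv_continuous : Continuous (pinv c φ) := by
  refine continuous_pi fun i => ?_
  exact φ.continuous.comp ((continuous_apply _).sub continuous_const)

theorem odd_hi {j : ℤ} (h : Odd j) : (((j + 1) / 2 : ℤ) : ℝ) = ((j / 2 : ℤ) : ℝ) + 1 := by
  obtain ⟨r, rfl⟩ := h
  have e1 : (2 * r + 1 + 1) / 2 = r + 1 := by omega
  have e2 : (2 * r + 1) / 2 = r := by omega
  rw [e1, e2]; push_cast; rfl

theorem even_hi {j : ℤ} (h : ¬ Odd j) : (((j + 1) / 2 : ℤ) : ℝ) = ((j / 2 : ℤ) : ℝ) := by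
  rw [Int.not_odd_iff_even] at h
  obtain ⟨r, rfl⟩ := h
  congr 1
  omega


theorem pz_mem (h0 : φ 0 = -1) (h1 : φ 1 = 1) {z : {i // Odd (c i)} → ℝ} (hz : ‖z‖ ≤ 1) : pz c φ z ∈ cell c := by
  intro i
  unfold pz
  split_ifs with h
  · rw [odd_hi h]
    have hzi := (norm_le_pi_norm z ⟨i, h⟩).trans hz
    rw [Real.norm_eq_abs, abs_le] at hzi
    have a1 : 0 ≤ φ.symm (z ⟨i, h⟩) := by rw [φ.le_symm_apply, h0]; exact hzi.1
    have a2 : φ.symm (z ⟨i, h⟩) ≤ 1 := by rw [φ.symm_apply_le, h1]; exact hzi.2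
    constructor <;> linarith
  · rw [even_hi h]; simp

theorem pz_pinv {x : Fin N → ℝ} (hx : x ∈ cell c) : pz c φ (pinv c φ x) = x := by
  funext i
  unfold pz
  split_ifs with h
  · simp [pinv]
  · have := hx i
    rw [even_hi h] at this
    exact le_antisymm this.1 this.2

theorem pinv_pz (z : {i // Odd (c i)} → ℝ) : pinv c φ (pz c φ z) = z := by
  funext i
  simp [pinv, pz, i.2]

theorem norm_pinv (h0 : φ 0 = -1) (h1 : φ 1 = 1) {x : Fin N → ℝ} (hx : x ∈ cell c) : ‖pinv c φ x‖ ≤ 1 := by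
  rw [pi_norm_le_iff_of_nonneg zero_le_one]
  intro i
  have := hx i
  rw [odd_hi i.2] at this
  rw [Real.norm_eq_abs, abs_le]
  simp only [pinv]
  constructor
  · rw [← h0, φ.le_iff_le]; linarith
  · rw [← h1, φ.le_iff_le]; linarith

theorem pz_bd (h0 : φ 0 = -1) (h1 : φ 1 = 1) {z : {i // Odd (c i)} → ℝ} (hz : ‖z‖ = 1) : car (pz c φ z) ≠ c := by
  intro heq
  have : ‖z‖ < 1 := by
    rw [pi_norm_lt_iff one_pos]
    rintro ⟨i, hi⟩
    have hzi := (norm_le_pi_norm z ⟨i, hi⟩).trans hz.le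
    refine lt_of_le_of_ne hzi ?_
    intro habs
    have hc := congrFun heq i
    have hint : ∃ k : ℤ, pz c φ z i = k := by
      rw [Real.norm_eq_abs] at habs
      rcases eq_or_eq_neg_of_abs_eq habs with h | h
      · refine ⟨c i / 2 + 1, ?_⟩
        simp only [pz, hi, dif_pos, h]
        rw [← h1, φ.symm_apply_apply]; push_cast; rfl
      · refine ⟨c i / 2, ?_⟩
        simp only [pz, hi, dif_pos, h]
        rw [← h0, φ.symm_apply_apply]; simp
    obtain ⟨k, hk⟩ := hint
    simp only [car, hk, Int.floor_intCast, Int.ceil_intCast] at hc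
    rw [← hc] at hi
    obtain ⟨r, hr⟩ := hi
    omega
  exact absurd hz this.ne

theorem pinv_bd (h0 : φ 0 = -1) (h1 : φ 1 = 1) {x : Fin N → ℝ} (hx : x ∈ cell c) (hne : car x ≠ c) : ‖pinv c φ x‖ = 1 := by
  refine le_antisymm (norm_pinv c φ h0 h1 hx) ?_
  obtain ⟨i, hi⟩ := Function.ne_iff.1 hne
  rcases car1 (hx i).1 (hx i).2 with h' | ⟨hj, k, e, e2, hk⟩
  · exact absurd h' hi
  · refine le_trans (le_of_eq ?_) (norm_le_pi_norm (pinv c φ x) ⟨i, hj⟩)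
    simp only [pinv]
    rcases hk with rfl | rfl
    · rw [e, sub_self, h0]; simp
    · rw [e]
      push_cast
      rw [add_sub_cancel_left, h1]; simp

open Classical in
theorem cnt_eq (h0 : φ 0 = -1) (h1 : φ 1 = 1) {x : Fin N → ℝ} (hx : x ∈ cell c) :
    (Finset.univ.filter (fun i => |pinv c φ x i| ≤ 1 / 4)).card = cnt φ x := by
  unfold cnt
  have hiff : ∀ i, |φ (Int.fract (x i))| ≤ 1 / 4 ↔
      ∃ h : Odd (c i), |pinv c φ x ⟨i, h⟩| ≤ 1 / 4 := by
    intro i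
    have hxi := hx i
    by_cases h : Odd (c i)
    · simp only [h, exists_true_left]
      rw [odd_hi h] at hxi
      rcases eq_or_lt_of_le hxi.2 with e | e
      · have : Int.fract (x i) = 0 := by
          rw [e]
          have : (((c i / 2 : ℤ) : ℝ) + 1) = ((c i / 2 + 1 : ℤ) : ℝ) := by push_cast; rfl
          rw [this, Int.fract_intCast]
        rw [this, h0]
        simp only [pinv]
        rw [e, add_sub_cancel_left, h1]
        norm_num
      · have : Int.fract (x i) = x i - ((c i / 2 : ℤ) : ℝ) := by
          rw [Int.fract]
          congr 2
          rw [Int.floor_eq_iff]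
          exact ⟨hxi.1, e⟩
        rw [this]
        rfl
    · simp only [h, IsEmpty.exists_iff, iff_false]
      rw [even_hi h] at hxi
      have e : x i = ((c i / 2 : ℤ) : ℝ) := le_antisymm hxi.2 hxi.1
      rw [e, Int.fract_intCast, h0]
      norm_num
  apply Finset.card_bij (fun i _ => i.1)
  · intro i hi
    simp only [Finset.mem_filter, Finset.mem_univ, true_and] at hi ⊢
    exact (hiff i).2 ⟨i.2, hi⟩
  · intro i _ j _ hij
    exact Subtype.ext hij
  · intro i hi
    simp only [Finset.mem_filter, Finset.mem_univ, true_and] at hi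
    obtain ⟨h, h'⟩ := (hiff i).1 hi
    exact ⟨⟨i, h⟩, by simpa using h', rfl⟩

theorem cell_step (h0 : φ 0 = -1) (h1 : φ 1 = 1) {X : Type*} [TopologicalSpace X] {S C : Set X} {n : ℕ} (hSC : Compress S C n)
    (f : (Fin N → ℝ) → X) (h : ℝ × (Fin N → ℝ) → X)
    (hf : ContinuousOn f (cell c)) (hfS : ∀ x ∈ cell c, f x ∈ S)
    (hh : ContinuousOn h (Icc 0 1 ×ˢ {x | x ∈ cell c ∧ car x ≠ c}))
    (hhS : ∀ t ∈ Icc (0:ℝ) 1, ∀ x ∈ cell c, car x ≠ c → h (t, x) ∈ S)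
    (hh0 : ∀ x ∈ cell c, car x ≠ c → h (0, x) = f x)
    (hh1 : ∀ x ∈ cell c, car x ≠ c → h (1, x) ∉ C → n + 1 ≤ cnt φ x) :
    ∃ H : ℝ × (Fin N → ℝ) → X, ContinuousOn H (Icc 0 1 ×ˢ cell c) ∧
      (∀ x ∈ cell c, H (0, x) = f x) ∧
      (∀ t ∈ Icc (0:ℝ) 1, ∀ x ∈ cell c, H (t, x) ∈ S) ∧
      (∀ t ∈ Icc (0:ℝ) 1, ∀ x ∈ cell c, car x ≠ c → H (t, x) = h (t, x)) ∧
      (∀ x ∈ cell c, H (1, x) ∉ C → n + 1 ≤ cnt φ x) := by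
  obtain ⟨H, Hc, H0, HS, Hb, H1⟩ := ball_cell hSC (fun z => f (pz c φ z))
    (fun p => h (p.1, pz c φ p.2))
    (hf.comp (pz_continuous c φ).continuousOn (fun z hz => pz_mem c φ h0 h1 hz))
    (fun z hz => hfS _ (pz_mem c φ h0 h1 hz))
    (hh.comp ((continuous_fst.prodMk ((pz_continuous c φ).comp continuous_snd)).continuousOn)
      (fun p hp => ⟨hp.1, pz_mem c φ h0 h1 (le_of_eq hp.2), pz_bd c φ h0 h1 hp.2⟩))
    (fun t ht z hz => hhS t ht _ (pz_mem c φ h0 h1 hz.le) (pz_bd c φ h0 h1 hz))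
    (fun z hz => hh0 _ (pz_mem c φ h0 h1 hz.le) (pz_bd c φ h0 h1 hz))
    (fun z hz hC => by
      have := hh1 _ (pz_mem c φ h0 h1 hz.le) (pz_bd c φ h0 h1 hz) hC
      rwa [← cnt_eq c φ h0 h1 (pz_mem c φ h0 h1 hz.le), pinv_pz] at this)
  refine ⟨fun p => H (p.1, pinv c φ p.2), ?_, ?_, ?_, ?_, ?_⟩
  · exact Hc.comp ((continuous_fst.prodMk ((pinv_continuous c φ).comp continuous_snd)).continuousOn)
      (fun p hp => ⟨hp.1, norm_pinv c φ h0 h1 hp.2⟩)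
  · intro x hx
    simp only
    rw [H0 _ (norm_pinv c φ h0 h1 hx), pz_pinv c φ hx]
  · intro t ht x hx
    exact HS t ht _ (norm_pinv c φ h0 h1 hx)
  · intro t ht x hx hne
    simp only
    rw [Hb t ht _ (pinv_bd c φ h0 h1 hx hne)]
    simp only
    rw [pz_pinv c φ hx]
  · intro x hx hC
    rw [← cnt_eq c φ h0 h1 hx]
    exact H1 _ (norm_pinv c φ h0 h1 hx) hC

end param

/-- Building a function cell by cell. -/
theorem cell_extension {X : Type*} {N : ℕ} (G : (Fin N → ℤ) → (ℝ × (Fin N → ℝ) → X) → Prop)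
    (hcongr : ∀ c H H', G c H → (∀ t ∈ Icc (0:ℝ) 1, ∀ x ∈ cell c, H' (t, x) = H (t, x)) → G c H')
    (hstep : ∀ c H, (∀ c', cdim c' < cdim c → G c' H) →
      ∃ H', G c H' ∧ ∀ t ∈ Icc (0:ℝ) 1, ∀ x ∈ cell c, car x ≠ c → H' (t, x) = H (t, x))
    (Hinit : ℝ × (Fin N → ℝ) → X) :
    ∃ H, ∀ c, G c H := by
  classical
  have key : ∀ k : ℕ, ∃ H, ∀ c, cdim c < k → G c H := by
    intro k
    induction k with
    | zero => exact ⟨Hinit, fun c hc => absurd hc (Nat.not_lt_zero _)⟩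
    | succ k ih =>
      obtain ⟨H, hH⟩ := ih
      have hex : ∀ c : Fin N → ℤ, ∃ H', cdim c = k → (G c H' ∧
          ∀ t ∈ Icc (0:ℝ) 1, ∀ x ∈ cell c, car x ≠ c → H' (t, x) = H (t, x)) := by
        intro c
        by_cases hc : cdim c = k
        · obtain ⟨H', h1⟩ := hstep c H (fun c' hc' => hH c' (by omega))
          exact ⟨H', fun _ => h1⟩
        · exact ⟨H, fun h => absurd h hc⟩
      choose E hE using hex
      refine ⟨fun p => if cdim (car p.2) < k then H p else E (car p.2) p, ?_⟩
      intro c hc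
      rcases Nat.lt_succ_iff_lt_or_eq.1 hc with hlt | heq
      · refine hcongr c H _ (hH c hlt) ?_
        intro t ht x hx
        have : cdim (car x) < k := by
          by_cases he : car x = c
          · rwa [he]
          · exact (cdim_car_lt hx he).trans hlt
        simp only [this, if_true]
      · refine hcongr c (E c) _ (hE c heq).1 ?_
        intro t ht x hx
        by_cases he : car x = c
        · simp only [he, heq, lt_irrefl, if_false]
        · have : cdim (car x) < k := heq ▸ cdim_car_lt hx he
          simp only [this, if_true]
          exact ((hE c heq).2 t ht x hx he).symm
  obtain ⟨H, hH⟩ := key (N + 1)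
  refine ⟨H, fun c => hH c ?_⟩
  refine Nat.lt_succ_of_le ?_
  unfold cdim
  exact (Finset.card_le_univ _).trans (by simp)

/-- The properties required of the deformation on a cell. -/
structure Good {X : Type*} [TopologicalSpace X] {N : ℕ} (A B : Set X) (n m : ℕ) (φ ψ : ℝ ≃o ℝ)
    (f : (Fin N → ℝ) → X) (c : Fin N → ℤ) (H : ℝ × (Fin N → ℝ) → X) : Prop where
  cont : ContinuousOn H (Icc 0 1 ×ˢ cell c)
  zero : ∀ x ∈ cell c, H (0, x) = f x
  inA : (∀ x ∈ cell c, f x ∈ A) → ∀ t ∈ Icc (0:ℝ) 1, ∀ x ∈ cell c, H (t, x) ∈ A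
  inB : (∀ x ∈ cell c, f x ∈ B) → ∀ t ∈ Icc (0:ℝ) 1, ∀ x ∈ cell c, H (t, x) ∈ B
  inC : (∀ x ∈ cell c, f x ∈ A) → (∀ x ∈ cell c, f x ∈ B) →
    ∀ t ∈ Icc (0:ℝ) 1, ∀ x ∈ cell c, H (t, x) = f x
  cntA : (∀ x ∈ cell c, f x ∈ A) → ∀ x ∈ cell c, H (1, x) ∉ A ∩ B → n + 1 ≤ cnt φ x
  cntB : (∀ x ∈ cell c, f x ∈ B) → ∀ x ∈ cell c, H (1, x) ∉ A ∩ B → m + 1 ≤ cnt ψ x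

theorem locallyFinite_prod_cell {N : ℕ} {κ : Type} (e : κ → (Fin N → ℤ)) (he : Function.Injective e) :
    LocallyFinite (fun k => (Icc (0:ℝ) 1 ×ˢ cell (e k) : Set (ℝ × (Fin N → ℝ)))) := by
  have h1 := (locallyFinite_cell (N := N)).comp_injective he
  have h2 := h1.preimage_continuous (continuous_snd : Continuous (Prod.snd : ℝ × (Fin N → ℝ) → _))
  exact h2.subset (fun k p hp => hp.2)

/-- The preparation theorem. -/
theorem preparation {X : Type*} [TopologicalSpace X] {N : ℕ} {A B : Set X} {n m : ℕ}
    (hA : Compress A (A ∩ B) n) (hB : Compress B (A ∩ B) m) (φ ψ : ℝ ≃o ℝ)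
    (φ0 : φ 0 = -1) (φ1 : φ 1 = 1) (ψ0 : ψ 0 = -1) (ψ1 : ψ 1 = 1)
    (f : (Fin N → ℝ) → X) (hf : Continuous f)
    (hcov : ∀ c : Fin N → ℤ, (∀ x ∈ cell c, f x ∈ A) ∨ (∀ x ∈ cell c, f x ∈ B)) :
    ∃ H : ℝ × (Fin N → ℝ) → X, ContinuousOn H (Icc 0 1 ×ˢ univ) ∧
      ∀ c, Good A B n m φ ψ f c H := by
  have I0 : (0:ℝ) ∈ Icc (0:ℝ) 1 := ⟨le_rfl, zero_le_one⟩
  have I1 : (1:ℝ) ∈ Icc (0:ℝ) 1 := ⟨zero_le_one, le_rfl⟩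
  have main : ∃ H, ∀ c, Good A B n m φ ψ f c H := by
    refine cell_extension (Good A B n m φ ψ f) ?_ ?_ (fun p => f p.2)
    · intro c H H' hG he
      refine ⟨?_, ?_, ?_, ?_, ?_, ?_, ?_⟩
      · exact hG.cont.congr (fun p hp => he p.1 hp.1 p.2 hp.2)
      · intro x hx; rw [he 0 I0 x hx]; exact hG.zero x hx
      · intro h t ht x hx; rw [he t ht x hx]; exact hG.inA h t ht x hx
      · intro h t ht x hx; rw [he t ht x hx]; exact hG.inB h t ht x hx
      · intro h h' t ht x hx; rw [he t ht x hx]; exact hG.inC h h' t ht x hx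
      · intro h x hx; rw [he 1 I1 x hx]; exact hG.cntA h x hx
      · intro h x hx; rw [he 1 I1 x hx]; exact hG.cntB h x hx
    · intro c H hH
      have hface : ∀ x ∈ cell c, car x ≠ c → Good A B n m φ ψ f (car x) H :=
        fun x hx hne => hH _ (cdim_car_lt hx hne)
      have hcb : ContinuousOn H (Icc 0 1 ×ˢ {x | x ∈ cell c ∧ car x ≠ c}) := by
        have h := (locallyFinite_prod_cell (fun k : {c' : Fin N → ℤ // cdim c' < cdim c} => k.1)
          Subtype.val_injective).continuousOn_iUnion
          (fun k => isClosed_Icc.prod (isClosed_cell _)) (fun k => (hH k.1 k.2).cont)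
        refine h.mono ?_
        rintro p ⟨hp1, hp2, hp3⟩
        exact mem_iUnion.2 ⟨⟨car p.2, cdim_car_lt hp2 hp3⟩, hp1, mem_cell_car _⟩
      by_cases hcA : ∀ x ∈ cell c, f x ∈ A
      · by_cases hcB : ∀ x ∈ cell c, f x ∈ B
        · refine ⟨fun p => f p.2, ⟨?_, ?_, ?_, ?_, ?_, ?_, ?_⟩, ?_⟩
          · exact (hf.comp continuous_snd).continuousOn
          · intro x hx; rfl
          · intro h t ht x hx; exact h x hx
          · intro h t ht x hx; exact h x hx
          · intro h h' t ht x hx; rfl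
          · intro h x hx hn; exact absurd ⟨hcA x hx, hcB x hx⟩ hn
          · intro h x hx hn; exact absurd ⟨hcA x hx, hcB x hx⟩ hn
          · intro t ht x hx hne
            refine ((hface x hx hne).inC ?_ ?_ t ht x (mem_cell_car x)).symm
            · exact fun y hy => hcA y (cell_car_subset hx hy)
            · exact fun y hy => hcB y (cell_car_subset hx hy)
        · have hfA : ∀ x ∈ cell c, ∀ y ∈ cell (car x), f y ∈ A :=
            fun x hx y hy => hcA y (cell_car_subset hx hy)
          obtain ⟨H', c', z', S', b', k'⟩ := cell_step c φ φ0 φ1 hA f H hf.continuousOn hcA hcb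
            (fun t ht x hx hne => (hface x hx hne).inA (hfA x hx) t ht x (mem_cell_car x))
            (fun x hx hne => (hface x hx hne).zero x (mem_cell_car x))
            (fun x hx hne => (hface x hx hne).cntA (hfA x hx) x (mem_cell_car x))
          exact ⟨H', ⟨c', z', fun _ => S', fun h => absurd h hcB, fun _ h => absurd h hcB,
            fun _ => k', fun h => absurd h hcB⟩, b'⟩
      · have hcB := (hcov c).resolve_left hcA
        have hfB : ∀ x ∈ cell c, ∀ y ∈ cell (car x), f y ∈ B :=
          fun x hx y hy => hcB y (cell_car_subset hx hy)
        obtain ⟨H', c', z', S', b', k'⟩ := cell_step c ψ ψ0 ψ1 hB f H hf.continuousOn hcB hcb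
          (fun t ht x hx hne => (hface x hx hne).inB (hfB x hx) t ht x (mem_cell_car x))
          (fun x hx hne => (hface x hx hne).zero x (mem_cell_car x))
          (fun x hx hne => (hface x hx hne).cntB (hfB x hx) x (mem_cell_car x))
        exact ⟨H', ⟨c', z', fun h => absurd h hcA, fun _ => S', fun h => absurd h hcA,
          fun h => absurd h hcA, fun _ => k'⟩, b'⟩
  obtain ⟨H, hH⟩ := main
  refine ⟨H, ?_, hH⟩
  have h := (locallyFinite_prod_cell (fun k : (Fin N → ℤ) => k)
    Function.injective_id).continuousOn_iUnion
    (fun k => isClosed_Icc.prod (isClosed_cell _)) (fun k => (hH k).cont)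
  refine h.mono ?_
  rintro p ⟨hp1, _⟩
  exact mem_iUnion.2 ⟨car p.2, hp1, mem_cell_car _⟩

theorem phiA_exists : ∃ φ : ℝ ≃o ℝ, φ 0 = -1 ∧ φ 1 = 1 ∧
    ∀ u, |φ u| ≤ 1 / 4 → 3 / 16 ≤ u ∧ u ≤ 7 / 16 := by
  let g : ℝ → ℝ := fun u => min (4 * u - 1) ((4 * u - 1) / 3)
  have hm : StrictMono g := by
    intro a b h
    simp only [g]
    exact min_lt_min (by linarith) (by linarith)
  have hr : Function.RightInverse (fun z : ℝ => max ((z + 1) / 4) ((3 * z + 1) / 4)) g := by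
    intro z
    simp only [g]
    rcases le_total 0 z with h | h
    · rw [max_eq_right (by linarith), min_eq_right (by linarith)]; ring
    · rw [max_eq_left (by linarith), min_eq_left (by linarith)]; ring
  refine ⟨StrictMono.orderIsoOfRightInverse g hm _ hr, ?_, ?_, ?_⟩
  · show g 0 = -1
    norm_num [g]
  · show g 1 = 1
    norm_num [g]
  · intro u hu
    have hu' : |g u| ≤ 1 / 4 := hu
    rw [abs_le] at hu'
    have h1 := min_le_left (4 * u - 1) ((4 * u - 1) / 3)
    simp only [g] at hu'
    refine ⟨by linarith, ?_⟩
    by_contra hc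
    push Not at hc
    have : 1 / 4 < min (4 * u - 1) ((4 * u - 1) / 3) := lt_min (by linarith) (by linarith)
    linarith [hu'.2]

theorem phiB_exists : ∃ φ : ℝ ≃o ℝ, φ 0 = -1 ∧ φ 1 = 1 ∧
    ∀ u, |φ u| ≤ 1 / 4 → 9 / 16 ≤ u ∧ u ≤ 13 / 16 := by
  let g : ℝ → ℝ := fun u => max (4 * u - 3) ((4 * u - 3) / 3)
  have hm : StrictMono g := by
    intro a b h
    simp only [g]
    exact max_lt_max (by linarith) (by linarith)
  have hr : Function.RightInverse (fun z : ℝ => min ((z + 3) / 4) ((3 * z + 3) / 4)) g := by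
    intro z
    simp only [g]
    rcases le_total 0 z with h | h
    · rw [min_eq_left (by linarith), max_eq_left (by linarith)]; ring
    · rw [min_eq_right (by linarith), max_eq_right (by linarith)]; ring
  refine ⟨StrictMono.orderIsoOfRightInverse g hm _ hr, ?_, ?_, ?_⟩
  · show g 0 = -1
    norm_num [g]
  · show g 1 = 1
    norm_num [g]
  · intro u hu
    have hu' : |g u| ≤ 1 / 4 := hu
    rw [abs_le] at hu'
    have h1 := le_max_left (4 * u - 3) ((4 * u - 3) / 3)
    simp only [g] at hu'
    refine ⟨?_, by linarith⟩
    by_contra hc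
    push Not at hc
    have : max (4 * u - 3) ((4 * u - 3) / 3) < -(1 / 4) := max_lt (by linarith) (by linarith)
    linarith [hu'.1]

theorem kappa_exists : ∃ κ : ℝ → ℝ, Continuous κ ∧ (∀ x, 0 ≤ κ x) ∧ (∀ x, κ x ≤ 1) ∧
    (∀ x, 3 / 16 ≤ Int.fract x → Int.fract x ≤ 7 / 16 → κ x = 1) ∧
    (∀ x, 9 / 16 ≤ Int.fract x → Int.fract x ≤ 13 / 16 → κ x = 0) := by
  let g : ℝ → ℝ := fun u => max 0 (min 1 (1 / 2 + 32 * (u * (1 - u)) * (1 - 2 * u)))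
  have hg : Continuous g := by
    refine continuous_const.max (continuous_const.min ?_)
    fun_prop
  refine ⟨g ∘ Int.fract, ContinuousOn.comp_fract'' hg.continuousOn (by norm_num [g]), ?_, ?_, ?_, ?_⟩
  · intro x; exact le_max_left _ _
  · intro x; exact max_le zero_le_one (min_le_left _ _)
  · intro x h1 h2
    have a : 39 / 256 ≤ Int.fract x * (1 - Int.fract x) := by nlinarith
    have b : 39 / 256 * (1 / 8) ≤ (Int.fract x * (1 - Int.fract x)) * (1 - 2 * Int.fract x) :=
      mul_le_mul a (by linarith) (by norm_num) (by linarith)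
    simp only [g, Function.comp]
    rw [min_eq_left (by linarith)]
    simp
  · intro x h1 h2
    have a : 39 / 256 ≤ Int.fract x * (1 - Int.fract x) := by nlinarith
    have b : 39 / 256 * (1 / 8) ≤ (Int.fract x * (1 - Int.fract x)) * (2 * Int.fract x - 1) :=
      mul_le_mul a (by linarith) (by norm_num) (by linarith)
    simp only [g, Function.comp]
    rw [max_eq_left]
    refine (min_le_right _ _).trans ?_
    linarith

/-- The invariants preserved by the deformation. -/
def Inv {X : Type*} [TopologicalSpace X] {N : ℕ} (A B : Set X) (Φ g : C(Fin (N + 1) → I, X)) :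
    Prop :=
  (∀ y, y 0 = 1 → g y ∈ B) ∧ ∀ (i : Fin (N + 1)) (v : I), (v = 0 ∨ v = 1) → (i ≠ 0 ∨ v = 0) →
    ((∀ y, y i = v → Φ y ∈ A) → ∀ y, y i = v → g y ∈ A) ∧
    ∀ a ∈ A ∩ B, (∀ y, y i = v → Φ y = a) → ∀ y, y i = v → g y = a

theorem cnt_tail {N : ℕ} (φ : ℝ ≃o ℝ) (x : Fin (N + 1) → ℝ) (μ : ℝ → ℝ) (h0 : ∀ x, 0 ≤ μ x)
    (h1 : ∀ x, |φ (Int.fract x)| ≤ 1 / 4 → μ x = 1) {p : ℕ} (hp : p + 1 ≤ cnt φ x) :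
    (p : ℝ) ≤ ∑ i : Fin N, μ (x i.succ) := by
  classical
  unfold cnt at hp
  rw [Finset.card_filter, Fin.sum_univ_succ] at hp
  have h2 : p ≤ ∑ i : Fin N, if |φ (Int.fract (x i.succ))| ≤ 1 / 4 then 1 else 0 := by
    split_ifs at hp <;> omega
  calc (p : ℝ) ≤ ((∑ i : Fin N, if |φ (Int.fract (x i.succ))| ≤ 1 / 4 then 1 else 0 : ℕ) : ℝ) := by
        exact_mod_cast h2
    _ = ∑ i : Fin N, (if |φ (Int.fract (x i.succ))| ≤ 1 / 4 then (1:ℝ) else 0) := by push_cast; rfl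
    _ ≤ _ := by
        refine Finset.sum_le_sum fun i _ => ?_
        split_ifs with h
        · rw [h1 _ h]
        · exact h0 _

theorem main_deform {X : Type*} [TopologicalSpace X] {N : ℕ} {A B : Set X} {n m : ℕ}
    (hN : N + 1 ≤ n + m)
    (hA : Compress A (A ∩ B) n) (hB : Compress B (A ∩ B) m)
    (hcover : interior A ∪ interior B = Set.univ)
    (Φ : C(Fin (N + 1) → I, X)) (hbot : ∀ y, y 0 = 0 → Φ y ∈ A) (htop : ∀ y, y 0 = 1 → Φ y ∈ B) :
    ∃ Ψ : C(Fin (N + 1) → I, X), ContinuousMap.HomotopicWith Φ Ψ (Inv A B Φ) ∧ ∀ y, Ψ y ∈ A := by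
  classical
  obtain ⟨φ, φ0, φ1, φr⟩ := phiA_exists
  obtain ⟨ψ, ψ0, ψ1, ψr⟩ := phiB_exists
  obtain ⟨κ, κc, κ0, κ1, κA, κB⟩ := kappa_exists
  -- subdivision
  obtain ⟨δ, δpos, hδ⟩ := lebesgue_number_lemma_of_metric (s := (univ : Set (Fin (N + 1) → I)))
    (c := fun b : Bool => if b then Φ ⁻¹' interior A else Φ ⁻¹' interior B) isCompact_univ
    (by
      intro b
      cases b
      · simpa using isOpen_interior.preimage Φ.continuous
      · simpa using isOpen_interior.preimage Φ.continuous)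
    (by
      intro y _
      have : Φ y ∈ interior A ∪ interior B := by rw [hcover]; trivial
      rcases this with h | h
      · exact mem_iUnion.2 ⟨true, by simpa using h⟩
      · exact mem_iUnion.2 ⟨false, by simpa using h⟩)
  obtain ⟨M, hM⟩ := exists_nat_gt (1 / δ)
  have Mpos : (0:ℝ) < M := lt_trans (by positivity) hM
  have hM1 : 1 / (M:ℝ) < δ := by
    rw [div_lt_iff₀ Mpos]
    rw [div_lt_iff₀ δpos] at hM
    linarith
  let cl : (Fin (N + 1) → ℝ) → (Fin (N + 1) → I) := fun x i => projIcc 0 1 zero_le_one (x i / M)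
  let sc : (Fin (N + 1) → I) → (Fin (N + 1) → ℝ) := fun y i => M * (y i : ℝ)
  have clc : Continuous cl := by
    refine continuous_pi fun i => continuous_projIcc.comp ?_
    fun_prop
  have scc : Continuous sc := by
    refine continuous_pi fun i => ?_
    fun_prop
  have clsc : ∀ y, cl (sc y) = y := by
    intro y
    funext i
    simp only [cl, sc]
    rw [mul_div_cancel_left₀ _ Mpos.ne']
    exact projIcc_val zero_le_one (y i)
  let f : (Fin (N + 1) → ℝ) → X := fun x => Φ (cl x)
  have hf : Continuous f := Φ.continuous.comp clc
  have hcov : ∀ c : Fin (N + 1) → ℤ, (∀ x ∈ cell c, f x ∈ A) ∨ (∀ x ∈ cell c, f x ∈ B) := by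
    intro c
    obtain ⟨b, hb⟩ := hδ (cl (fun i => ((c i / 2 : ℤ) : ℝ))) (mem_univ _)
    have hmem : ∀ x ∈ cell c, cl x ∈ Metric.ball (cl (fun i => ((c i / 2 : ℤ) : ℝ))) δ := by
      intro x hx
      rw [Metric.mem_ball]
      refine lt_of_le_of_lt ?_ hM1
      rw [dist_pi_le_iff (by positivity)]
      intro i
      rw [Subtype.dist_eq, Real.dist_eq]
      refine (abs_projIcc_sub_projIcc zero_le_one).trans ?_
      have hxi := hx i
      have hh : (((c i + 1) / 2 : ℤ) : ℝ) ≤ ((c i / 2 : ℤ) : ℝ) + 1 := by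
        have : (c i + 1) / 2 ≤ c i / 2 + 1 := by omega
        exact_mod_cast this
      rw [← sub_div, abs_div, abs_of_pos Mpos]
      refine div_le_div_of_nonneg_right ?_ Mpos.le
      rw [abs_le]
      constructor <;> linarith
    cases b
    · right
      intro x hx
      have := hb (hmem x hx)
      simp only [Bool.false_eq_true, if_false] at this
      exact interior_subset this
    · left
      intro x hx
      have := hb (hmem x hx)
      simp only [if_true] at this
      exact interior_subset this
  obtain ⟨H, Hc, HG⟩ := preparation hA hB φ ψ φ0 φ1 ψ0 ψ1 f hf hcov
  have I1 : (1:ℝ) ∈ Icc (0:ℝ) 1 := ⟨zero_le_one, le_rfl⟩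
  -- faces
  have face : ∀ (x : Fin (N + 1) → ℝ) (i) (v : I), (v = 0 ∨ v = 1) → x i = M * v →
      ∀ y ∈ cell (car x), cl y i = v := by
    intro x i v hv hx y hy
    have hk : ∃ k : ℤ, x i = k := by
      rcases hv with rfl | rfl
      · exact ⟨0, by simp [hx]⟩
      · exact ⟨M, by simp [hx]⟩
    obtain ⟨k, hk⟩ := hk
    have hyi := hy i
    simp only [car, hk, Int.floor_intCast, Int.ceil_intCast] at hyi
    have q1 : (k + k) / 2 = k := by omega
    have q2 : (k + k + 1) / 2 = k := by omega
    rw [q1, q2] at hyi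
    have e : y i = M * v := by rw [← hx, hk]; exact le_antisymm hyi.2 hyi.1
    simp only [cl]
    rw [e, mul_div_cancel_left₀ _ Mpos.ne']
    exact projIcc_val zero_le_one v
  have faceA : ∀ (i) (v : I), (v = 0 ∨ v = 1) → (∀ y, y i = v → Φ y ∈ A) →
      ∀ t ∈ Icc (0:ℝ) 1, ∀ x : Fin (N + 1) → ℝ, x i = M * v → H (t, x) ∈ A := by
    intro i v hv h t ht x hx
    exact (HG (car x)).inA (fun y hy => h _ (face x i v hv hx y hy)) t ht x (mem_cell_car x)
  have faceB : ∀ (i) (v : I), (v = 0 ∨ v = 1) → (∀ y, y i = v → Φ y ∈ B) →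
      ∀ t ∈ Icc (0:ℝ) 1, ∀ x : Fin (N + 1) → ℝ, x i = M * v → H (t, x) ∈ B := by
    intro i v hv h t ht x hx
    exact (HG (car x)).inB (fun y hy => h _ (face x i v hv hx y hy)) t ht x (mem_cell_car x)
  have faceC : ∀ (i) (v : I), (v = 0 ∨ v = 1) → ∀ a ∈ A ∩ B, (∀ y, y i = v → Φ y = a) →
      ∀ t ∈ Icc (0:ℝ) 1, ∀ x : Fin (N + 1) → ℝ, x i = M * v → H (t, x) = a := by
    intro i v hv a ha h t ht x hx
    have hfx : ∀ y ∈ cell (car x), f y = a := fun y hy => h _ (face x i v hv hx y hy)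
    rw [(HG (car x)).inC (fun y hy => by rw [hfx y hy]; exact ha.1)
      (fun y hy => by rw [hfx y hy]; exact ha.2) t ht x (mem_cell_car x)]
    exact hfx x (mem_cell_car x)
  let τ : (Fin (N + 1) → ℝ) → ℝ := fun x =>
    max 0 (min 1 ((∑ i : Fin N, κ (x i.succ)) - n + 1))
  have τc : Continuous τ := by
    refine continuous_const.max (continuous_const.min ?_)
    refine Continuous.add (Continuous.sub ?_ continuous_const) continuous_const
    exact continuous_finsetSum _ (fun i _ => κc.comp (continuous_apply _))
  have τ0 : ∀ x, 0 ≤ τ x := fun x => le_max_left _ _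
  have τ1 : ∀ x, τ x ≤ 1 := fun x => max_le zero_le_one (min_le_left _ _)
  have τu : ∀ x r, τ (Function.update x 0 r) = τ x := by
    intro x r
    simp only [τ]
    congr 5
  have LB : ∀ x, H (1, x) ∉ B → τ x = 1 := by
    intro x hx
    have hcA : ∀ y ∈ cell (car x), f y ∈ A := by
      rcases hcov (car x) with h | h
      · exact h
      · exact absurd ((HG (car x)).inB h 1 I1 x (mem_cell_car x)) hx
    have h1 := (HG (car x)).cntA hcA x (mem_cell_car x) (fun h => hx h.2)
    have h2 := cnt_tail φ x κ κ0 (fun u hu => κA u (φr _ hu).1 (φr _ hu).2) h1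
    simp only [τ]
    rw [min_eq_left (by linarith)]
    simp
  have LA : ∀ x, H (1, x) ∉ A → τ x = 0 := by
    intro x hx
    have hcB : ∀ y ∈ cell (car x), f y ∈ B := by
      rcases hcov (car x) with h | h
      · exact absurd ((HG (car x)).inA h 1 I1 x (mem_cell_car x)) hx
      · exact h
    have h1 := (HG (car x)).cntB hcB x (mem_cell_car x) (fun h => hx h.1)
    have h2 := cnt_tail ψ x (fun u => 1 - κ u) (fun u => by linarith [κ1 u])
      (fun u hu => by rw [κB u (ψr _ hu).1 (ψr _ hu).2]; simp) h1
    rw [Finset.sum_sub_distrib] at h2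
    simp only [Finset.sum_const, Finset.card_univ, Fintype.card_fin, nsmul_eq_mul, mul_one] at h2
    have hN' : (N:ℝ) + 1 ≤ n + m := by exact_mod_cast hN
    simp only [τ]
    rw [max_eq_left]
    refine (min_le_right _ _).trans ?_
    linarith
  -- second deformation
  let up : I × (Fin (N + 1) → I) → (Fin (N + 1) → ℝ) := fun p =>
    Function.update (sc p.2) 0 (sc p.2 0 * (1 - p.1 + p.1 * τ (sc p.2)))
  have upc : Continuous up := by
    refine Continuous.update (scc.comp continuous_snd) 0 ?_
    refine Continuous.mul ((continuous_apply 0).comp (scc.comp continuous_snd)) ?_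
    refine Continuous.add ?_ (Continuous.mul ?_ (τc.comp (scc.comp continuous_snd)))
    · fun_prop
    · fun_prop
  have upface : ∀ p i (v : I), (i ≠ 0 ∨ v = 0) → p.2 i = v → up p i = M * v := by
    intro p i v hiv hp
    by_cases hi : i = 0
    · subst hi
      have hv : v = 0 := hiv.resolve_left (by simp)
      subst hv
      simp [up, sc, hp]
    · simp [up, sc, hp, hi]
  let F1 : C(I × (Fin (N + 1) → I), X) := ⟨fun p => H (p.1, sc p.2), by
    have : Continuous (fun p : I × (Fin (N + 1) → I) => ((p.1 : ℝ), sc p.2)) := by fun_prop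
    exact Hc.comp_continuous this (fun p => ⟨p.1.2, mem_univ _⟩)⟩
  let F2 : C(I × (Fin (N + 1) → I), X) := ⟨fun p => H (1, up p), by
    have : Continuous (fun p : I × (Fin (N + 1) → I) => ((1 : ℝ), up p)) := by fun_prop
    exact Hc.comp_continuous this (fun p => ⟨I1, mem_univ _⟩)⟩
  have F1inv : ∀ t : I, Inv A B Φ (F1.curry t) := by
    intro t
    refine ⟨?_, ?_⟩
    · intro y hy
      exact faceB 0 1 (Or.inr rfl) htop t t.2 (sc y) (by simp [sc, hy])
    · intro i v hv _
      refine ⟨?_, ?_⟩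
      · intro h y hy
        exact faceA i v hv h t t.2 (sc y) (by simp [sc, hy])
      · intro a ha h y hy
        exact faceC i v hv a ha h t t.2 (sc y) (by simp [sc, hy])
  have F2inv : ∀ t : I, Inv A B Φ (F2.curry t) := by
    intro t
    refine ⟨?_, ?_⟩
    · intro y hy
      show H (1, up (t, y)) ∈ B
      by_contra hcon
      have h1 := LB _ hcon
      simp only [up] at h1
      rw [τu] at h1
      apply hcon
      refine faceB 0 1 (Or.inr rfl) htop 1 I1 _ ?_
      simp [up, h1, sc, hy]
    · intro i v hv hiv
      refine ⟨?_, ?_⟩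
      · intro h y hy
        exact faceA i v hv h 1 I1 (up (t, y)) (upface (t, y) i v hiv hy)
      · intro a ha h y hy
        exact faceC i v hv a ha h 1 I1 (up (t, y)) (upface (t, y) i v hiv hy)
  refine ⟨F2.curry 1, ?_, ?_⟩
  · refine ContinuousMap.HomotopicWith.trans (g := F1.curry 1) ⟨⟨⟨F1, ?_, ?_⟩, ?_⟩⟩ ⟨⟨⟨F2, ?_, ?_⟩, ?_⟩⟩
    · intro y
      show H (((0 : I) : ℝ), sc y) = Φ y
      have := (HG (car (sc y))).zero (sc y) (mem_cell_car _)
      simp only [f] at this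
      rw [clsc] at this
      simpa using this
    · intro y; rfl
    · exact F1inv
    · intro y
      show H (1, up (0, y)) = H (((1 : I) : ℝ), sc y)
      have : up (0, y) = sc y := by simp [up]
      rw [this]; simp
    · intro y; rfl
    · exact F2inv
  · intro y
    show H (1, up (1, y)) ∈ A
    by_contra hcon
    have h1 := LA _ hcon
    simp only [up] at h1
    rw [τu] at h1
    apply hcon
    refine faceA 0 0 (Or.inl rfl) hbot 1 I1 _ ?_
    simp [up, h1]

theorem crush_exists (q : ℕ) : ∃ r : ℝ × (Fin (q + 1) → ℝ) → (Fin (q + 1) → ℝ),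
    Continuous r ∧ (∀ z, ‖z‖ ≤ 1 → r (0, z) = z) ∧ (∀ p, ‖r p‖ ≤ 1) ∧
    (∀ s ∈ Icc (0:ℝ) 1, ∀ z, ‖z‖ = 1 → ‖r (s, z)‖ = 1) ∧
    (∀ z, ‖z‖ ≤ 1 → (z 0 = -1 ∨ ∃ i, i ≠ 0 ∧ |z i| = 1) →
      r (1, z) = -(Pi.single 0 1)) := by
  classical
  let e0 : Fin (q + 1) → ℝ := Pi.single 0 1
  let mm : (Fin (q + 1) → ℝ) → ℝ := fun z => ‖Function.update z 0 0‖
  let k : (Fin (q + 1) → ℝ) → ℝ := fun z => max 0 (min 1 (min (z 0 + 1) (3 * (1 - mm z))))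
  let b : ℝ × (Fin (q + 1) → ℝ) → ℝ := fun p => p.1 * (1 - k p.2)
  let v : ℝ × (Fin (q + 1) → ℝ) → (Fin (q + 1) → ℝ) := fun p =>
    (1 + 20 * p.1) • ((1 - b p) • p.2 - b p • e0)
  have mmc : Continuous mm := by
    have : Continuous fun z : Fin (q + 1) → ℝ => Function.update z 0 (0:ℝ) :=
      continuous_id.update 0 continuous_const
    exact this.norm
  have kc : Continuous k := by fun_prop
  have bc : Continuous b := by fun_prop
  have vc : Continuous v := by fun_prop
  have v0 : ∀ p, v p 0 = (1 + 20 * p.1) * ((1 - b p) * p.2 0 - b p) := by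
    intro p; simp [v, e0]
  have vi : ∀ p i, i ≠ 0 → v p i = (1 + 20 * p.1) * ((1 - b p) * p.2 i) := by
    intro p i hi; simp [v, e0, hi]
  have k0 : ∀ z, 0 ≤ k z := fun z => le_max_left _ _
  have k1 : ∀ z, k z ≤ 1 := fun z => max_le zero_le_one (min_le_left _ _)
  have coordle : ∀ (z : Fin (q + 1) → ℝ) i, |z i| ≤ ‖z‖ := fun z i => norm_le_pi_norm z i
  have mcoord : ∀ z i, i ≠ 0 → |z i| ≤ mm z := by
    intro z i hi
    have := coordle (Function.update z 0 0) i
    simpa [hi] using this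
  have kJ : ∀ z, (z 0 = -1 ∨ ∃ i, i ≠ 0 ∧ |z i| = 1) → k z = 0 := by
    intro z hz
    apply max_eq_left
    rcases hz with hz | ⟨i, hi, hz⟩
    · refine (min_le_right _ _).trans ((min_le_left _ _).trans ?_)
      rw [hz]; norm_num
    · refine (min_le_right _ _).trans ((min_le_right _ _).trans ?_)
      have := mcoord z i hi
      linarith
  have e0n : ‖-e0‖ = 1 := by
    rw [norm_neg]
    apply le_antisymm
    · rw [pi_norm_le_iff_of_nonneg zero_le_one]
      intro i
      by_cases hi : i = 0
      · subst hi; simp [e0]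
      · simp [e0, hi]
    · have := coordle e0 0
      simpa [e0] using this
  refine ⟨fun p => rad (v p), rad_continuous.comp vc, ?_, fun p => norm_rad_le _, ?_, ?_⟩
  · intro z hz
    have : v (0, z) = z := by simp [v, b]
    simp only [this]
    exact rad_of_le hz
  · intro s hs z hz
    apply norm_rad_of_ge
    obtain ⟨hs0, hs1⟩ := hs
    have hb0 : 0 ≤ b (s, z) := mul_nonneg hs0 (by linarith [k1 z])
    have hbs : b (s, z) ≤ s := by
      have : s * (1 - k z) ≤ s * 1 := mul_le_mul_of_nonneg_left (by linarith [k0 z]) hs0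
      simpa [b] using this
    have c0 := coordle (v (s, z)) 0
    rw [v0] at c0
    -- some coordinate has absolute value one
    have hex : ∃ i, |z i| = 1 := by
      obtain ⟨i, hi⟩ := Finite.exists_max (fun i => |z i|)
      refine ⟨i, le_antisymm (by linarith [coordle z i]) ?_⟩
      rw [← hz, pi_norm_le_iff_of_nonneg (abs_nonneg _)]
      exact hi
    obtain ⟨i, hi⟩ := hex
    by_cases hi0 : i = 0
    · subst hi0
      rcases (abs_eq zero_le_one).1 hi with h1 | h1
      · simp only [h1] at c0
        by_cases hm : mm z ≤ 2 / 3
        · have hk : k z = 1 := by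
            apply le_antisymm (k1 z)
            refine le_max_of_le_right (le_min le_rfl (le_min ?_ ?_))
            · rw [h1]; norm_num
            · linarith
          have hb : b (s, z) = 0 := by simp [b, hk]
          rw [hb] at c0
          have := le_abs_self ((1 + 20 * s) * ((1 - 0) * 1 - 0))
          linarith
        · push Not at hm
          by_cases hs3 : s ≤ 3 / 10
          · have := le_abs_self ((1 + 20 * s) * ((1 - b (s, z)) * 1 - b (s, z)))
            nlinarith
          · push Not at hs3
            by_cases ha : 2 / 3 ≤ 1 - b (s, z)
            · have := le_abs_self ((1 + 20 * s) * ((1 - b (s, z)) * 1 - b (s, z)))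
              nlinarith
            · by_cases ha' : 1 - b (s, z) ≤ 1 / 3
              · have := neg_abs_le ((1 + 20 * s) * ((1 - b (s, z)) * 1 - b (s, z)))
                nlinarith
              · push Not at ha ha'
                have hj : ∃ j, j ≠ 0 ∧ 2 / 3 < |z j| := by
                  by_contra hcon
                  push Not at hcon
                  apply absurd hm
                  push Not
                  simp only [mm]
                  rw [pi_norm_le_iff_of_nonneg (by norm_num)]
                  intro j
                  by_cases hj : j = 0
                  · subst hj; simp; norm_num
                  · simpa [hj] using hcon j hj
                obtain ⟨j, hj0, hj⟩ := hj
                have cj := coordle (v (s, z)) j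
                rw [vi _ _ hj0, abs_mul, abs_mul, abs_of_nonneg (by simp; linarith),
                  abs_of_nonneg (a := 1 - b (s, z)) (by linarith)] at cj
                simp only at cj
                have e1 : (2 / 9 : ℝ) ≤ (1 - b (s, z)) * |z j| := by nlinarith
                have e2 : (7 : ℝ) ≤ 1 + 20 * s := by linarith
                nlinarith
      · simp only [h1] at c0
        have := neg_abs_le ((1 + 20 * s) * ((1 - b (s, z)) * -1 - b (s, z)))
        nlinarith
    · have hk : k z = 0 := kJ z (Or.inr ⟨i, hi0, hi⟩)
      have hb : b (s, z) = s := by simp [b, hk]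
      by_cases hs9 : s ≤ 19 / 20
      · have ci := coordle (v (s, z)) i
        rw [vi _ _ hi0, abs_mul, abs_mul, hb] at ci
        simp only [hi] at ci
        rw [abs_of_nonneg (by linarith), abs_of_nonneg (by linarith)] at ci
        nlinarith
      · push Not at hs9
        rw [hb] at c0
        simp only at c0
        have z0 := (abs_le.1 ((coordle z 0).trans hz.le)).2
        have := neg_abs_le ((1 + 20 * s) * ((1 - s) * z 0 - s))
        have e1 : (1 - s) * z 0 - s ≤ -9 / 10 := by nlinarith
        nlinarith
  · intro z hz hJ
    have hb : b (1, z) = 1 := by simp [b, kJ z hJ]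
    have : v (1, z) = (21 : ℝ) • (-e0) := by
      simp only [v, hb]
      norm_num
    simp only [this]
    exact rad_smul_of_sphere e0n (by norm_num)

theorem relHomotopic_iff {X : Type*} [TopologicalSpace X] {q : ℕ} {A : Set X} {a : X}
    (f g : RelGenLoop q X A a) :
    RelHomotopic f g ↔ ContinuousMap.HomotopicWith f.1 g.1 (fun h => h ∈ RelGenLoop q X A a) := by
  constructor
  · rintro ⟨H, h0, h1, hb, hJ⟩
    exact ⟨⟨⟨H, h0, h1⟩, fun t => ⟨hb t, hJ t⟩⟩⟩
  · rintro ⟨H⟩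
    exact ⟨H.toContinuousMap, H.apply_zero, H.apply_one, fun t => (H.prop t).1,
      fun t => (H.prop t).2⟩

theorem relHomotopic_of_eq {X : Type*} [TopologicalSpace X] {q : ℕ} {A : Set X} {a : X}
    (f g : RelGenLoop q X A a) (h : Quot.mk (@RelHomotopic X _ q A a) f = Quot.mk _ g) :
    RelHomotopic f g := by
  have h2 := Quot.eqvGen_exact h
  clear h
  induction h2 with
  | rel x y h => exact h
  | refl x => exact (relHomotopic_iff _ _).2 (ContinuousMap.HomotopicWith.refl _ x.2)
  | symm x y _ ih => exact (relHomotopic_iff _ _).2 ((relHomotopic_iff _ _).1 ih).symm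
  | trans x y z _ _ ih1 ih2 =>
    exact (relHomotopic_iff _ _).2 (((relHomotopic_iff _ _).1 ih1).trans ((relHomotopic_iff _ _).1 ih2))

theorem compress_of_pairConnected {X : Type*} [TopologicalSpace X] {S C : Set X} {n : ℕ}
    (h : PairConnected (↥S) (Subtype.val ⁻¹' C) n) : Compress S C n := by
  intro ι _ hcard f hf hfS hfC
  obtain ⟨hpath, hsub⟩ := h
  rcases hq : Fintype.card ι with _ | q
  · have hι : IsEmpty ι := Fintype.card_eq_zero_iff.1 hq
    have hz : ∀ z : ι → ℝ, ‖z‖ = 0 := by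
      intro z
      have : z = 0 := Subsingleton.elim _ _
      simp [this]
    obtain ⟨a, ha, ⟨γ⟩⟩ := hpath ⟨f 0, hfS 0 (by simp)⟩
    refine ⟨fun p => (γ (projIcc 0 1 zero_le_one p.1) : X), ?_, ?_, ?_, ?_, ?_⟩
    · apply Continuous.continuousOn
      fun_prop
    · intro z _
      have : z = 0 := Subsingleton.elim _ _
      simp [this]
    · intro t _ z _
      exact Subtype.property _
    · intro t _ z h1
      rw [hz] at h1
      norm_num at h1
    · intro z _
      simpa using ha
  · obtain ⟨e⟩ : Nonempty (ι ≃ Fin (q + 1)) := ⟨Fintype.equivFinOfCardEq hq⟩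
    obtain ⟨r, rc, r0, rn, rs, rJ⟩ := crush_exists q
    let T : (Fin (q + 1) → ℝ) → (ι → ℝ) := fun z i => z (e i)
    have Tn : ∀ z, ‖T z‖ = ‖z‖ := by
      intro z
      apply le_antisymm
      · rw [pi_norm_le_iff_of_nonneg (norm_nonneg _)]
        intro i; exact norm_le_pi_norm z (e i)
      · rw [pi_norm_le_iff_of_nonneg (norm_nonneg _)]
        intro j
        have := norm_le_pi_norm (T z) (e.symm j)
        simpa [T] using this
    have Tc : Continuous T := by fun_prop
    let cb : (Fin (q + 1) → I) → (Fin (q + 1) → ℝ) := fun y j => 2 * (y j : ℝ) - 1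
    have cbc : Continuous cb := by fun_prop
    have cbn : ∀ y, ‖cb y‖ ≤ 1 := by
      intro y
      rw [pi_norm_le_iff_of_nonneg zero_le_one]
      intro j
      rw [Real.norm_eq_abs, abs_le]
      have := (y j).2.1
      have := (y j).2.2
      constructor <;> simp only [cb] <;> linarith
    have cb1 : ∀ (y : Fin (q + 1) → I) i, (y i = 0 ∨ y i = 1) → |cb y i| = 1 := by
      intro y i hi
      rcases hi with hi | hi <;> simp [cb, hi] <;> norm_num
    have cbb : ∀ y ∈ Cube.boundary (Fin (q + 1)), ‖cb y‖ = 1 := by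
      rintro y ⟨i, hi⟩
      apply le_antisymm (cbn y)
      rw [← cb1 y i hi]
      exact norm_le_pi_norm (cb y) i
    have gc : Continuous (fun p : I × (Fin (q + 1) → I) => f (T (r ((p.1 : ℝ), cb p.2)))) := by
      refine hf.comp_continuous (by fun_prop) ?_
      intro p
      show ‖_‖ ≤ (1:ℝ)
      rw [Tn]; exact rn _
    have gS : ∀ p : I × (Fin (q + 1) → I), f (T (r ((p.1 : ℝ), cb p.2))) ∈ S := by
      intro p
      apply hfS
      rw [Tn]; exact rn _
    let F1 : C(I × (Fin (q + 1) → I), ↥S) := ⟨fun p => ⟨_, gS p⟩, gc.subtype_mk gS⟩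
    have F1C : ∀ t : I, ∀ y ∈ Cube.boundary (Fin (q + 1)), (F1 (t, y) : X) ∈ C := by
      intro t y hy
      apply hfC
      rw [Tn]
      exact rs _ t.2 _ (cbb y hy)
    let y0 : Fin (q + 1) → I := fun _ => 0
    have y0J : y0 ∈ JSet q := Or.inl rfl
    have y0b : y0 ∈ Cube.boundary (Fin (q + 1)) := ⟨0, Or.inl rfl⟩
    have rJ' : ∀ y ∈ JSet q, r (1, cb y) = -(Pi.single 0 1) := by
      intro y hy
      apply rJ _ (cbn y)
      rcases hy with hy | ⟨i, hi, hy⟩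
      · left; simp [cb, hy]
      · exact Or.inr ⟨i, hi, cb1 y i hy⟩
    let a : ↥S := F1 (1, y0)
    have ha : (a : X) ∈ C := F1C 1 y0 y0b
    let f1 : RelGenLoop q (↥S) (Subtype.val ⁻¹' C) a := ⟨F1.curry 1, F1C 1, by
      intro y hy
      apply Subtype.ext
      show f (T (r (((1 : I) : ℝ), cb y))) = f (T (r (((1 : I) : ℝ), cb y0)))
      rw [Icc.coe_one, rJ' y hy, rJ' y0 y0J]⟩
    let c1 : RelGenLoop q (↥S) (Subtype.val ⁻¹' C) a :=
      ⟨ContinuousMap.const _ a, fun _ _ => ha, fun _ _ => rfl⟩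
    have hs : Subsingleton (RelPi q (↥S) (Subtype.val ⁻¹' C) a) := hsub q a ha (by omega)
    have h2 := (relHomotopic_iff _ _).1
      (relHomotopic_of_eq f1 c1 (Subsingleton.elim (α := RelPi q (↥S) (Subtype.val ⁻¹' C) a) _ _))
    obtain ⟨K2⟩ := h2
    have h3 : ContinuousMap.HomotopicWith (F1.curry 0) (ContinuousMap.const _ a)
        (fun g => ∀ y ∈ Cube.boundary (Fin (q + 1)), (g y : X) ∈ C) := by
      refine ContinuousMap.HomotopicWith.trans (g := F1.curry 1)
        ⟨⟨⟨F1, fun _ => rfl, fun _ => rfl⟩, F1C⟩⟩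
        ⟨⟨K2.toHomotopy, fun t => (K2.prop t).1⟩⟩
    obtain ⟨K⟩ := h3
    let pj : (ι → ℝ) → (Fin (q + 1) → I) := fun z j =>
      projIcc 0 1 zero_le_one ((z (e.symm j) + 1) / 2)
    have pjc : Continuous pj := by
      refine continuous_pi fun j => continuous_projIcc.comp ?_
      fun_prop
    have pjb : ∀ z, ‖z‖ = 1 → pj z ∈ Cube.boundary (Fin (q + 1)) := by
      intro z hz
      have : Nonempty ι := ⟨e.symm 0⟩
      obtain ⟨i, hi⟩ := Finite.exists_max (fun i => |z i|)
      have h1 : |z i| = 1 := by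
        refine le_antisymm (by rw [← hz]; exact norm_le_pi_norm z i) ?_
        rw [← hz, pi_norm_le_iff_of_nonneg (abs_nonneg _)]
        exact hi
      refine ⟨e i, ?_⟩
      rcases (abs_eq zero_le_one).1 h1 with h1 | h1
      · right; simp [pj, h1]
      · left; simp [pj, h1]
    have cbpj : ∀ z, ‖z‖ ≤ 1 → T (cb (pj z)) = z := by
      intro z hz
      funext i
      have := abs_le.1 ((norm_le_pi_norm z i).trans hz)
      simp only [T, cb, pj, Equiv.symm_apply_apply]
      rw [projIcc_of_mem zero_le_one (x := (z i + 1) / 2) ⟨by linarith, by linarith⟩]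
      simp only
      ring
    refine ⟨fun p => (K (projIcc 0 1 zero_le_one p.1, pj p.2) : X), ?_, ?_, ?_, ?_, ?_⟩
    · apply Continuous.continuousOn
      refine continuous_subtype_val.comp (K.continuous.comp ?_)
      exact (continuous_projIcc.comp continuous_fst).prodMk (pjc.comp continuous_snd)
    · intro z hz
      have e1 : K (0, pj z) = F1 (0, pj z) := K.apply_zero _
      simp only [projIcc_left]
      show ((K (0, pj z) : ↥S) : X) = f z
      rw [e1]
      show f (T (r (((0 : I) : ℝ), cb (pj z)))) = f z
      rw [Icc.coe_zero, r0 _ (cbn _), cbpj z hz]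
    · intro t _ z _
      exact Subtype.property _
    · intro t _ z hz
      exact K.prop _ _ (pjb z hz)
    · intro z hz
      have e1 : K (1, pj z) = a := K.apply_one _
      simp only [projIcc_right]
      show ((K (1, pj z) : ↥S) : X) ∈ C
      rw [e1]; exact ha

theorem boundary_cases {q : ℕ} {y : Fin (q + 1) → I} (hy : y ∈ Cube.boundary (Fin (q + 1))) :
    y 0 = 1 ∨ y ∈ JSet q := by
  obtain ⟨i, hi⟩ := hy
  by_cases h0 : i = 0
  · subst h0
    rcases hi with hi | hi
    · exact Or.inr (Or.inl hi)
    · exact Or.inl hi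
  · exact Or.inr (Or.inr ⟨i, h0, hi⟩)

/-- Corestrict a map with image in `A` to a relative loop of `(A, A ∩ B)`. -/
theorem exists_loop {X : Type*} [TopologicalSpace X] {A B : Set X} {a : X} (haA : a ∈ A)
    (haB : a ∈ B) {q : ℕ} (g : C(Fin (q + 1) → I, X)) (hgA : ∀ y, g y ∈ A)
    (htop : ∀ y, y 0 = 1 → g y ∈ B) (hJ : ∀ y ∈ JSet q, g y = a) :
    ∃ f : RelGenLoop q (↥A) (Subtype.val ⁻¹' (A ∩ B)) ⟨a, haA⟩, ∀ y, (f.1 y : X) = g y := by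
  refine ⟨⟨⟨fun y => ⟨g y, hgA y⟩, g.continuous.subtype_mk hgA⟩, ?_, ?_⟩, fun y => rfl⟩
  · intro y hy
    refine ⟨hgA y, ?_⟩
    rcases boundary_cases hy with h | h
    · exact htop y h
    · show g y ∈ B
      rw [hJ y h]; exact haB
  · intro y hy
    exact Subtype.ext (hJ y hy)

theorem relHomotopic_of_map {X : Type*} [TopologicalSpace X] {A B : Set X} {a : X} (haA : a ∈ A)
    (haB : a ∈ B) {q : ℕ} (f g : RelGenLoop q (↥A) (Subtype.val ⁻¹' (A ∩ B)) ⟨a, haA⟩)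
    (H : C(I × (Fin (q + 1) → I), X)) (hHA : ∀ p, H p ∈ A)
    (h0 : ∀ y, H (0, y) = f.1 y) (h1 : ∀ y, H (1, y) = g.1 y)
    (htop : ∀ t y, y 0 = 1 → H (t, y) ∈ B) (hJ : ∀ t, ∀ y ∈ JSet q, H (t, y) = a) :
    RelHomotopic f g := by
  refine ⟨⟨fun p => ⟨H p, hHA p⟩, H.continuous.subtype_mk hHA⟩, fun y => Subtype.ext (h0 y),
    fun y => Subtype.ext (h1 y), ?_, ?_⟩
  · intro t y hy
    refine ⟨hHA _, ?_⟩
    rcases boundary_cases hy with h | h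
    · exact htop t y h
    · show H (t, y) ∈ B
      rw [hJ t y h]; exact haB
  · intro t y hy
    exact Subtype.ext (hJ t y hy)

theorem excision_surj {X : Type*} [TopologicalSpace X] {A B : Set X} {m n : ℕ}
    (hA : Compress A (A ∩ B) n) (hB : Compress B (A ∩ B) m)
    (hcover : interior A ∪ interior B = univ) {a : X} (haA : a ∈ A) (haB : a ∈ B) {q : ℕ}
    (hq : q + 1 ≤ n + m) (f : RelGenLoop q X B a) :
    ∃ g : RelGenLoop q (↥A) (Subtype.val ⁻¹' (A ∩ B)) ⟨a, haA⟩,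
      RelHomotopic (RelGenLoop.push (B := B) (b := a) ⟨Subtype.val, continuous_subtype_val⟩
            (fun z hz => hz.2) rfl g) f := by
  obtain ⟨Ψ, ⟨K⟩, hΨ⟩ := main_deform hq hA hB hcover f.1
    (fun y hy => by rw [f.2.2 y (Or.inl hy)]; exact haA)
    (fun y hy => f.2.1 y ⟨0, Or.inr hy⟩)
  have kJ : ∀ g, Inv A B f.1 g → ∀ y ∈ JSet q, g y = a := by
    intro g hg y hy
    rcases hy with hy | ⟨i, hi, hy⟩
    · exact (hg.2 0 0 (Or.inl rfl) (Or.inr rfl)).2 a ⟨haA, haB⟩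
        (fun y hy => f.2.2 y (Or.inl hy)) y hy
    · refine (hg.2 i (y i) hy (Or.inl hi)).2 a ⟨haA, haB⟩ ?_ y rfl
      intro y' hy'
      exact f.2.2 y' (Or.inr ⟨i, hi, by rw [hy']; exact hy⟩)
  have kI : ∀ t, Inv A B f.1 (K.toHomotopy.curry t) := K.prop
  have kL : ∀ g, Inv A B f.1 g → g ∈ RelGenLoop q X B a := by
    intro g hg
    refine ⟨?_, kJ g hg⟩
    intro y hy
    rcases boundary_cases hy with h | h
    · exact hg.1 y h
    · rw [kJ g hg y h]; exact haB
  have hΨI : Inv A B f.1 Ψ := by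
    have := kI 1
    have e : K.toHomotopy.curry 1 = Ψ := by ext y; exact K.apply_one y
    rwa [e] at this
  obtain ⟨g, hg⟩ := exists_loop haA haB Ψ hΨ hΨI.1 (kJ Ψ hΨI)
  refine ⟨g, ?_⟩
  rw [relHomotopic_iff]
  apply ContinuousMap.HomotopicWith.symm
  have e : (RelGenLoop.push (B := B) (b := a) ⟨Subtype.val, continuous_subtype_val⟩
            (fun z hz => hz.2) rfl g).1 = Ψ := by ext y; exact hg y
  rw [e]
  exact ⟨⟨K.toHomotopy, fun t => kL _ (kI t)⟩⟩

theorem excision_inj {X : Type*} [TopologicalSpace X] {A B : Set X} {m n : ℕ}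
    (hA : Compress A (A ∩ B) n) (hB : Compress B (A ∩ B) m)
    (hcover : interior A ∪ interior B = univ) {a : X} (haA : a ∈ A) (haB : a ∈ B) {q : ℕ}
    (hq : q + 1 + 1 ≤ n + m) (f g : RelGenLoop q (↥A) (Subtype.val ⁻¹' (A ∩ B)) ⟨a, haA⟩)
    (h : RelHomotopic
      (RelGenLoop.push (B := B) (b := a) ⟨Subtype.val, continuous_subtype_val⟩
            (fun z hz => hz.2) rfl f)
      (RelGenLoop.push (B := B) (b := a) ⟨Subtype.val, continuous_subtype_val⟩
            (fun z hz => hz.2) rfl g)) :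
    RelHomotopic f g := by
  obtain ⟨H, h0, h1, hb, hJ⟩ := h
  let Φ : C(Fin (q + 1 + 1) → I, X) :=
    ⟨fun w => H (w (Fin.last (q + 1)), fun j => w j.castSucc), by fun_prop⟩
  have Φa : ∀ w, (fun j => w (Fin.castSucc j)) ∈ JSet q → Φ w = a := fun w hw => hJ _ _ hw
  obtain ⟨Ψ, ⟨K⟩, hΨ⟩ := main_deform hq hA hB hcover Φ
    (fun y hy => by rw [Φa y (Or.inl hy)]; exact haA)
    (fun y hy => hb _ _ ⟨0, Or.inr hy⟩)
  have kI : ∀ t, Inv A B Φ (K.toHomotopy.curry t) := K.prop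
  let sn : (Fin (q + 1) → I) → I → (Fin (q + 1 + 1) → I) := fun y v => Fin.snoc (α := fun _ => I) y v
  have snc : ∀ y v j, sn y v (Fin.castSucc j) = y j := by intro y v j; simp [sn]
  have snl : ∀ y v, sn y v (Fin.last (q + 1)) = v := by intro y v; simp [sn]
  have sncont : Continuous (fun p : (Fin (q + 1) → I) × I => sn p.1 p.2) := by
    refine continuous_pi fun j => ?_
    refine Fin.lastCases ?_ ?_ j
    · simp only [snl]; fun_prop
    · intro j; simp only [snc]; fun_prop
  have kJ : ∀ t, ∀ v, ∀ y ∈ JSet q, K (t, sn y v) = a := by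
    intro t v y hy
    rcases hy with hy | ⟨i, hi, hy⟩
    · exact ((kI t).2 0 0 (Or.inl rfl) (Or.inr rfl)).2 a ⟨haA, haB⟩
        (fun y hy => Φa y (Or.inl hy)) (sn y v) ((snc y v 0).trans hy)
    · have hi' : i.castSucc ≠ 0 := by
        intro h; apply hi; apply Fin.castSucc_injective; rw [h]; rfl
      refine ((kI t).2 i.castSucc (y i) hy (Or.inl hi')).2 a ⟨haA, haB⟩ ?_ (sn y v) (snc y v i)
      intro y' hy'
      exact Φa y' (Or.inr ⟨i, hi, by simp only [hy']; exact hy⟩)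
  have kT : ∀ t, ∀ v y, y 0 = 1 → K (t, sn y v) ∈ B := by
    intro t v y hy
    exact (kI t).1 (sn y v) ((snc y v 0).trans hy)
  have hlast : Fin.last (q + 1) ≠ 0 := by simp
  have kA0 : ∀ t y, K (t, sn y 0) ∈ A := by
    intro t y
    refine ((kI t).2 (Fin.last (q + 1)) 0 (Or.inl rfl) (Or.inl hlast)).1 ?_ (sn y 0) (snl y 0)
    intro w hw
    show H (w (Fin.last (q + 1)), _) ∈ A
    rw [hw, h0]
    exact Subtype.property (f.1 _)
  have kA1 : ∀ t y, K (t, sn y 1) ∈ A := by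
    intro t y
    refine ((kI t).2 (Fin.last (q + 1)) 1 (Or.inr rfl) (Or.inl hlast)).1 ?_ (sn y 1) (snl y 1)
    intro w hw
    show H (w (Fin.last (q + 1)), _) ∈ A
    rw [hw, h1]
    exact Subtype.property (g.1 _)
  have K1 : ∀ w, K (1, w) = Ψ w := K.apply_one
  have K0 : ∀ y v, K (0, sn y v) = H (v, y) := by
    intro y v
    rw [K.apply_zero]
    show H (sn y v (Fin.last (q + 1)), fun j => sn y v j.castSucc) = H (v, y)
    simp only [snl, snc]
  have sl : ∀ v, Continuous (fun y => Ψ (sn y v)) := by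
    intro v
    exact Ψ.continuous.comp (sncont.comp (Continuous.prodMk_left v))
  have slK : ∀ v, Continuous (fun p : I × (Fin (q + 1) → I) => K (p.1, sn p.2 v)) := by
    intro v
    refine K.continuous.comp (continuous_fst.prodMk ?_)
    exact sncont.comp (continuous_snd.prodMk continuous_const)
  obtain ⟨f', hf'⟩ := exists_loop haA haB ⟨fun y => Ψ (sn y 0), sl 0⟩ (fun y => hΨ _)
    (fun y hy => by have := kT 1 0 y hy; rwa [K1] at this)
    (fun y hy => by have := kJ 1 0 y hy; rwa [K1] at this)
  obtain ⟨g', hg'⟩ := exists_loop haA haB ⟨fun y => Ψ (sn y 1), sl 1⟩ (fun y => hΨ _)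
    (fun y hy => by have := kT 1 1 y hy; rwa [K1] at this)
    (fun y hy => by have := kJ 1 1 y hy; rwa [K1] at this)
  have r1 : RelHomotopic f f' := by
    refine relHomotopic_of_map haA haB f f' ⟨_, slK 0⟩ (fun p => kA0 p.1 p.2) ?_ ?_
      (fun t y hy => kT t 0 y hy) (fun t y hy => kJ t 0 y hy)
    · intro y
      exact (K0 y 0).trans (h0 y)
    · intro y
      exact (K1 _).trans (hf' y).symm
  have r2 : RelHomotopic g g' := by
    refine relHomotopic_of_map haA haB g g' ⟨_, slK 1⟩ (fun p => kA1 p.1 p.2) ?_ ?_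
      (fun t y hy => kT t 1 y hy) (fun t y hy => kJ t 1 y hy)
    · intro y
      exact (K0 y 1).trans (h1 y)
    · intro y
      exact (K1 _).trans (hg' y).symm
  have r3 : RelHomotopic f' g' := by
    refine relHomotopic_of_map haA haB f' g'
      ⟨fun p => Ψ (sn p.2 p.1), Ψ.continuous.comp (sncont.comp continuous_swap)⟩
      (fun p => hΨ _) ?_ ?_ ?_ ?_
    · intro y
      exact (hf' y).symm
    · intro y
      exact (hg' y).symm
    · intro t y hy
      have := kT 1 t y hy; rwa [K1] at this
    · intro t y hy
      have := kJ 1 t y hy; rwa [K1] at this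
  rw [relHomotopic_iff] at r1 r2 r3 ⊢
  exact (r1.trans r3).trans r2.symm

end Helpers

/-- **Homotopy excision / Blakers–Massey.**  If `(X; A, B)` is an excisive triad with
`C = A ∩ B` nonempty, `(A, C)` is `n`-connected and `(B, C)` is `m`-connected, then the
inclusion `(A, C) → (X, B)` induces isomorphisms on relative homotopy groups in degrees
`< m + n` and a surjection in degree `m + n`. -/
theorem homotopy_excision (A B : Set X) (m n : ℕ)
    (hcover : interior A ∪ interior B = Set.univ)
    (hne : (A ∩ B).Nonempty)
    (hAC : PairConnected (↥A) (Subtype.val ⁻¹' (A ∩ B)) n)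
    (hBC : PairConnected (↥B) (Subtype.val ⁻¹' (A ∩ B)) m) :
    ∀ (a : X) (haA : a ∈ A), a ∈ B → ∀ q : ℕ,
      (q + 1 < m + n →
        Function.Bijective
          (relPiMap (q := q) (A := Subtype.val ⁻¹' (A ∩ B)) (B := B)
            (a := (⟨a, haA⟩ : ↥A)) (b := a)
            ⟨Subtype.val, continuous_subtype_val⟩
            (fun z hz => hz.2) rfl)) ∧
      (q + 1 = m + n →
        Function.Surjective
          (relPiMap (q := q) (A := Subtype.val ⁻¹' (A ∩ B)) (B := B)
            (a := (⟨a, haA⟩ : ↥A)) (b := a)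
            ⟨Subtype.val, continuous_subtype_val⟩
            (fun z hz => hz.2) rfl)) := by
  have hA := compress_of_pairConnected hAC
  have hB := compress_of_pairConnected hBC
  intro a haA haB q
  have surj : q + 1 ≤ m + n → Function.Surjective
          (relPiMap (q := q) (A := Subtype.val ⁻¹' (A ∩ B)) (B := B)
            (a := (⟨a, haA⟩ : ↥A)) (b := a)
            ⟨Subtype.val, continuous_subtype_val⟩
            (fun z hz => hz.2) rfl) := by
    intro hq x
    induction x using Quot.ind with
    | mk f =>
      obtain ⟨g, hg⟩ := excision_surj hA hB hcover haA haB (by omega) f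
      exact ⟨Quot.mk _ g, Quot.sound hg⟩
  refine ⟨fun hq => ⟨?_, surj hq.le⟩, fun hq => surj hq.le⟩
  intro x y hxy
  induction x using Quot.ind with
  | mk f =>
    induction y using Quot.ind with
    | mk g =>
      exact Quot.sound (excision_inj hA hB hcover haA haB (by omega) f g
        (relHomotopic_of_eq _ _ hxy))

end Paper
end

section
/- For every n ≥ 1, the map SP^n(S²) → ℂP^n which sends the unordered n-tuple [a₁, …, a_n] of points of the Riemann sphere S² = ℂ ∪ {∞} to the projective class of the polynomial (x + a₁)(x + a₂)⋯(x + a_n) (with factors corresponding to a_i = ∞ omitted, lowering the degree) is a homeomorphism from the n-th symmetric product of S² onto complex projective n-space. -/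
/-!
# Statement 12: `SP^n(S²) ≅ ℂP^n`

The Riemann sphere is the one-point compactification `OnePoint ℂ`, the symmetric product
`SP^n(X) = X^n/S_n` is a quotient by the permutation action, and `ℂP^n` is the space of
nonzero coefficient vectors `(c_0, …, c_n)` (polynomials of degree ≤ n) up to a nonzero
scalar.  The map sends `[a₁, …, a_n]` to the class of `∏_{a_i ≠ ∞} (x + a_i)`.
-/

open scoped Topology
open Polynomial

noncomputable section

namespace Paper

/-- The `n`-th symmetric product `SP^n(X) = X^n / S_n`. -/
def SymmetricProduct (n : ℕ) (X : Type*) [TopologicalSpace X] : Type _ :=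
  Quot (fun u v : Fin n → X => ∃ e : Equiv.Perm (Fin n), u = v ∘ e)

instance (n : ℕ) (X : Type*) [TopologicalSpace X] :
    TopologicalSpace (SymmetricProduct n X) :=
  inferInstanceAs (TopologicalSpace (Quot _))

/-- `ℂP^n` as the space of nonzero polynomials of degree at most `n` (coefficient
vectors) up to multiplication by a nonzero scalar. -/
def CP (n : ℕ) : Type :=
  Quot (fun u v : {w : Fin (n + 1) → ℂ // w ≠ 0} => ∃ c : ℂ, c ≠ 0 ∧ u.1 = c • v.1)

instance (n : ℕ) : TopologicalSpace (CP n) :=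
  inferInstanceAs (TopologicalSpace (Quot _))

/-- The polynomial `∏ (x + a_i)`, factors with `a_i = ∞` omitted. -/
def polyOf {n : ℕ} (a : Fin n → OnePoint ℂ) : Polynomial ℂ :=
  ∏ i : Fin n, Option.elim (a i) 1 fun c => Polynomial.X + Polynomial.C c

theorem polyOf_monic {n : ℕ} (a : Fin n → OnePoint ℂ) : (polyOf a).Monic := by
  refine Polynomial.monic_prod_of_monic _ _ fun i _ => ?_
  cases h : a i with
  | infty => exact monic_one
  | coe c => exact monic_X_add_C c

theorem polyOf_natDegree_le {n : ℕ} (a : Fin n → OnePoint ℂ) :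
    (polyOf a).natDegree ≤ n := by
  have h1 := Polynomial.natDegree_prod_le (Finset.univ : Finset (Fin n))
    (fun i => Option.elim (a i) 1 fun c => Polynomial.X + Polynomial.C c)
  have h2 : ∑ i : Fin n,
      (Option.elim (a i) 1 fun c => Polynomial.X + Polynomial.C c).natDegree
      ≤ ∑ _i : Fin n, 1 := by
    refine Finset.sum_le_sum fun i _ => ?_
    cases h : a i with
    | infty =>
        show (1 : Polynomial ℂ).natDegree ≤ 1
        simp
    | coe c =>
        show (Polynomial.X + Polynomial.C c).natDegree ≤ 1
        simp [Polynomial.natDegree_X_add_C]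
  have := le_trans h1 h2
  simpa [polyOf] using this

/-- The coefficient vector of `∏ (x + a_i)`. -/
def coeffVec {n : ℕ} (a : Fin n → OnePoint ℂ) : {w : Fin (n + 1) → ℂ // w ≠ 0} :=
  ⟨fun k => (polyOf a).coeff k, by
    intro h0
    have h1 : (polyOf a).coeff (polyOf a).natDegree = 1 := polyOf_monic a
    have h2 : (polyOf a).coeff
        ((⟨(polyOf a).natDegree, Nat.lt_succ_of_le (polyOf_natDegree_le a)⟩ : Fin (n+1)) : ℕ)
          = 0 := congrFun h0 _
    rw [show ((⟨(polyOf a).natDegree, Nat.lt_succ_of_le (polyOf_natDegree_le a)⟩ :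
        Fin (n+1)) : ℕ) = (polyOf a).natDegree from rfl] at h2
    rw [h1] at h2
    exact one_ne_zero h2⟩

/-- The linear factor attached to a point of the sphere. -/
def el (z : OnePoint ℂ) : Polynomial ℂ := Option.elim z 1 fun c => Polynomial.X + Polynomial.C c

theorem el_infty : el OnePoint.infty = 1 := rfl

theorem el_coe (c : ℂ) : el (c : OnePoint ℂ) = X + C c := rfl

theorem polyOf_eq {n : ℕ} (a : Fin n → OnePoint ℂ) : polyOf a = ∏ i, el (a i) := rfl

theorem polyOf_eq_multiset {n : ℕ} (a : Fin n → OnePoint ℂ) :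
    polyOf a = ((Finset.univ.val.map a).map el).prod := by
  rw [polyOf_eq, Multiset.map_map]; rfl

theorem el_ne_zero (z : OnePoint ℂ) : el z ≠ 0 := by
  cases z with
  | infty => exact one_ne_zero
  | coe c => exact (monic_X_add_C c).ne_zero

theorem prod_el_ne_zero (M : Multiset (OnePoint ℂ)) : (M.map el).prod ≠ 0 := by
  refine Multiset.prod_ne_zero fun h => ?_
  obtain ⟨z, -, hz⟩ := Multiset.mem_map.1 h
  exact el_ne_zero z hz

theorem multiset_recover (M : Multiset (OnePoint ℂ)) :
    ∃ k, M = ((M.map el).prod.roots.map fun c : ℂ => ((-c : ℂ) : OnePoint ℂ))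
      + Multiset.replicate k OnePoint.infty := by
  induction M using Multiset.induction_on with
  | empty => exact ⟨0, by simp⟩
  | cons z M ih =>
    obtain ⟨k, hk⟩ := ih
    have h0 := prod_el_ne_zero M
    cases z with
    | infty =>
      refine ⟨k + 1, ?_⟩
      rw [Multiset.map_cons, Multiset.prod_cons, el_infty, one_mul, Multiset.replicate_succ,
        Multiset.add_cons, ← hk]
    | coe c =>
      refine ⟨k, ?_⟩
      rw [Multiset.map_cons, Multiset.prod_cons, el_coe,
        Polynomial.roots_mul (mul_ne_zero (monic_X_add_C c).ne_zero h0), roots_X_add_C,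
        Multiset.map_add, Multiset.map_singleton, neg_neg, add_assoc, ← hk,
        Multiset.singleton_add]

theorem multiset_inj (M N : Multiset (OnePoint ℂ)) (hc : M.card = N.card)
    (h : (M.map el).prod = (N.map el).prod) : M = N := by
  obtain ⟨k, hk⟩ := multiset_recover M
  obtain ⟨l, hl⟩ := multiset_recover N
  rw [h] at hk
  have h1 := congrArg Multiset.card hk
  have h2 := congrArg Multiset.card hl
  rw [Multiset.card_add, Multiset.card_replicate] at h1 h2
  have : k = l := by omega
  rw [hk, this, ← hl]

theorem exists_perm {n : ℕ} {X : Type*} (a b : Fin n → X)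
    (h : Finset.univ.val.map a = Finset.univ.val.map b) :
    ∃ e : Equiv.Perm (Fin n), a = b ∘ e := by
  classical
  have key : ∀ z, Nonempty ({i // a i = z} ≃ {i // b i = z}) := by
    intro z
    have h1 := congrArg (Multiset.count z) h
    rw [Multiset.count_map, Multiset.count_map] at h1
    refine ⟨Fintype.equivOfCardEq ?_⟩
    rw [Fintype.card_subtype, Fintype.card_subtype]
    simp only [eq_comm (a := z)] at h1
    exact h1
  let e := fun z => (key z).some
  exact ⟨Equiv.ofFiberEquiv fun z => (e z), funext fun i => (Equiv.ofFiberEquiv_map _ i).symm⟩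

theorem coeffVec_rel {n : ℕ} (a b : Fin n → OnePoint ℂ) (c : ℂ)
    (h : (coeffVec a).1 = c • (coeffVec b).1) : ∃ e : Equiv.Perm (Fin n), a = b ∘ e := by
  have hp : polyOf a = C c * polyOf b := by
    ext k
    rw [coeff_C_mul]
    by_cases hk : k < n + 1
    · exact congrFun h ⟨k, hk⟩
    · have h1 := polyOf_natDegree_le a
      have h2 := polyOf_natDegree_le b
      rw [coeff_eq_zero_of_natDegree_lt (by omega), coeff_eq_zero_of_natDegree_lt (by omega),
        mul_zero]
  have hc : c = 1 := by
    have := congrArg leadingCoeff hp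
    rw [(polyOf_monic a).leadingCoeff, leadingCoeff_mul, (polyOf_monic b).leadingCoeff,
      leadingCoeff_C, mul_one] at this
    exact this.symm
  rw [hc, C_1, one_mul, polyOf_eq_multiset, polyOf_eq_multiset] at hp
  exact exists_perm a b (multiset_inj _ _ (by simp) hp)

theorem exists_fin {n : ℕ} {X : Type*} (M : Multiset X) (h : M.card = n) :
    ∃ a : Fin n → X, Finset.univ.val.map a = M := by
  subst h
  induction M using Quotient.inductionOn with
  | h l =>
    refine ⟨fun i : Fin l.length => l.get i, ?_⟩
    have h := Fin.univ_val_map l.get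
    rw [List.ofFn_get] at h
    exact h

theorem exists_coeffVec {n : ℕ} (w : {w : Fin (n + 1) → ℂ // w ≠ 0}) :
    ∃ a : Fin n → OnePoint ℂ, ∃ c : ℂ, c ≠ 0 ∧ w.1 = c • (coeffVec a).1 := by
  obtain ⟨w, hw⟩ := w
  set p : ℂ[X] := ∑ k : Fin (n + 1), C (w k) * X ^ (k : ℕ) with hp
  have hcoeff : ∀ k : Fin (n + 1), p.coeff k = w k := by
    intro k
    rw [hp, finsetSum_coeff, Finset.sum_eq_single k]
    · simp
    · intro b _ hb
      rw [coeff_C_mul_X_pow, if_neg]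
      exact fun h => hb (Fin.ext h.symm)
    · simp
  have hdeg : p.natDegree ≤ n := by
    refine natDegree_sum_le_of_forall_le _ _ fun k _ => ?_
    exact (natDegree_C_mul_X_pow_le _ _).trans (by omega)
  have hp0 : p ≠ 0 := by
    intro h
    apply hw
    funext k
    rw [← hcoeff, h]; simp
  have hroots : p.roots.card = p.natDegree :=
    (splits_iff_card_roots.1 (IsAlgClosed.splits p))
  obtain ⟨a, ha⟩ := exists_fin (n := n)
    ((p.roots.map fun c : ℂ => ((-c : ℂ) : OnePoint ℂ))
      + Multiset.replicate (n - p.natDegree) OnePoint.infty) (by simp [hroots, hdeg])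
  refine ⟨a, p.leadingCoeff, leadingCoeff_ne_zero.2 hp0, ?_⟩
  have : p = C p.leadingCoeff * polyOf a := by
    rw [polyOf_eq_multiset, ha, Multiset.map_add, Multiset.prod_add, Multiset.map_map,
      Multiset.map_replicate, el_infty, Multiset.prod_replicate, one_pow, mul_one]
    have h := C_leadingCoeff_mul_prod_multiset_X_sub_C hroots
    conv_lhs => rw [← h]
    congr 3
    funext c
    simp [el_coe, sub_eq_add_neg]
  funext k
  have h2 := congrArg (fun q => q.coeff (k : ℕ)) this
  simp only [coeff_C_mul, hcoeff] at h2
  exact h2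

theorem coeff_prod_continuousAt {T ι : Type*} [TopologicalSpace T] (s : Finset ι)
    (F : ι → T → ℂ[X]) (t : T) (h : ∀ i k, ContinuousAt (fun x => (F i x).coeff k) t) (k : ℕ) :
    ContinuousAt (fun x => (∏ i ∈ s, F i x).coeff k) t := by
  classical
  induction s using Finset.induction_on generalizing k with
  | empty => simpa using continuousAt_const
  | insert i s hi ih =>
    simp only [Finset.prod_insert hi, coeff_mul]
    exact tendsto_finsetSum _ fun p _ => (h i p.1).mul (ih p.2)

theorem exists_scale (z : OnePoint ℂ) : ∃ t : OnePoint ℂ → ℂ, (∀ y, t y ≠ 0) ∧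
    ∀ k, ContinuousAt (fun y => (C (t y) * el y).coeff k) z := by
  classical
  cases z with
  | coe c =>
    refine ⟨fun _ => 1, fun _ => one_ne_zero, fun k => ?_⟩
    rw [OnePoint.continuousAt_coe]
    have : ((fun y : OnePoint ℂ => (C (1 : ℂ) * el y).coeff k) ∘ ((↑) : ℂ → OnePoint ℂ))
        = fun y : ℂ => X.coeff k + if k = 0 then y else 0 := by
      funext y
      simp only [Function.comp, el_coe, C_1, one_mul, coeff_add, coeff_C]
    rw [this]
    split_ifs <;> fun_prop
  | infty =>
    let t : OnePoint ℂ → ℂ := fun y => Option.elim y 1 fun c => if c = 0 then 1 else c⁻¹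
    have ht : ∀ c : ℂ, t c = if c = 0 then 1 else c⁻¹ := fun c => rfl
    have hti : t OnePoint.infty = 1 := rfl
    refine ⟨t, fun y => ?_, fun k => ?_⟩
    · cases y with
      | infty => exact one_ne_zero
      | coe c => rw [ht]; split_ifs with h <;> simp [h]
    · have hne : ∀ᶠ c : ℂ in Bornology.cobounded ℂ, c ≠ 0 := by
        have : Bornology.IsBounded ({0} : Set ℂ) := Bornology.isBounded_singleton
        exact Bornology.isBounded_def.1 this
      rw [OnePoint.continuousAt_infty', Filter.coclosedCompact_eq_cocompact,
        ← Metric.cobounded_eq_cocompact]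
      have hev : (fun c : ℂ => c⁻¹ * X.coeff k + if k = 0 then 1 else 0)
          =ᶠ[Bornology.cobounded ℂ]
          ((fun y : OnePoint ℂ => (C (t y) * el y).coeff k) ∘ ((↑) : ℂ → OnePoint ℂ)) := by
        filter_upwards [hne] with c hc
        simp only [Function.comp, ht, if_neg hc, el_coe, coeff_C_mul, coeff_add, coeff_C]
        split_ifs
        · field_simp
        · simp
      refine Filter.Tendsto.congr' hev ?_
      have h3 : (C (t OnePoint.infty) * el OnePoint.infty).coeff k
          = 0 * (X : ℂ[X]).coeff k + if k = 0 then 1 else 0 := by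
        rw [hti, el_infty]; simp [coeff_one]
      rw [h3]
      exact (Filter.tendsto_inv₀_cobounded.mul tendsto_const_nhds).add tendsto_const_nhds

theorem continuous_coeffVec (n : ℕ) :
    Continuous (fun a : Fin n → OnePoint ℂ => (Quot.mk _ (coeffVec a) : CP n)) := by
  rw [continuous_iff_continuousAt]
  intro a₀
  choose t ht hc using fun i => exists_scale (a₀ i)
  have hs : ∀ a : Fin n → OnePoint ℂ, ∏ i, t i (a i) ≠ 0 := fun a =>
    Finset.prod_ne_zero_iff.2 fun i _ => ht i _
  let v : (Fin n → OnePoint ℂ) → {w : Fin (n + 1) → ℂ // w ≠ 0} := fun a =>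
    ⟨(∏ i, t i (a i)) • (coeffVec a).1, smul_ne_zero (hs a) (coeffVec a).2⟩
  have hv : ContinuousAt v a₀ := by
    refine Topology.IsInducing.subtypeVal.continuousAt_iff.2 (continuousAt_pi.2 ?_)
    intro k
    have h1 := coeff_prod_continuousAt Finset.univ
      (fun i (a : Fin n → OnePoint ℂ) => C (t i (a i)) * el (a i)) a₀
      (fun i k => ContinuousAt.comp (f := fun a : Fin n → OnePoint ℂ => a i) (hc i k)
        (continuousAt_apply i a₀)) k
    convert h1 using 2 with a
    rw [Finset.prod_mul_distrib, ← map_prod, coeff_C_mul]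
    rfl
  have hq : (fun a : Fin n → OnePoint ℂ => (Quot.mk _ (coeffVec a) : CP n))
      = fun a => Quot.mk _ (v a) := by
    funext a
    exact (Quot.sound ⟨_, hs a, rfl⟩).symm
  rw [hq]
  exact ContinuousAt.comp (g := fun w => (Quot.mk _ w : CP n)) continuous_quot_mk.continuousAt hv

/-- Squared norm. -/
def nsq {n : ℕ} (w : Fin (n + 1) → ℂ) : ℂ := ∑ i, w i * star (w i)

theorem nsq_ne_zero {n : ℕ} (w : Fin (n + 1) → ℂ) (hw : w ≠ 0) : nsq w ≠ 0 := by
  intro h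
  apply hw
  have h1 : ((∑ i, Complex.normSq (w i) : ℝ) : ℂ) = 0 := by
    rw [← h, nsq, Complex.ofReal_sum]
    exact Finset.sum_congr rfl fun i _ => (Complex.mul_conj (w i)).symm
  have h2 := (Finset.sum_eq_zero_iff_of_nonneg fun i _ => Complex.normSq_nonneg (w i)).1
    (Complex.ofReal_eq_zero.1 h1)
  funext i
  exact Complex.normSq_eq_zero.1 (h2 i (Finset.mem_univ i))

/-- The projector attached to a point of projective space. -/
def proj (n : ℕ) : CP n → (Fin (n + 1) → Fin (n + 1) → ℂ) :=
  Quot.lift (fun w i j => w.1 i * star (w.1 j) / nsq w.1) (by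
    rintro ⟨u, hu⟩ ⟨v, hv⟩ ⟨c, hc, h⟩
    dsimp only at h
    subst h
    funext i j
    have h1 : nsq (c • v) = c * star c * nsq v := by
      simp only [nsq, Pi.smul_apply, smul_eq_mul, star_mul', Finset.mul_sum]
      exact Finset.sum_congr rfl fun i _ => by ring
    have h2 := nsq_ne_zero v hv
    have h3 : star c ≠ 0 := star_ne_zero.2 hc
    simp only [h1, Pi.smul_apply, smul_eq_mul, star_mul']
    field_simp)

theorem continuous_proj (n : ℕ) : Continuous (proj n) := by
  refine continuous_quot_lift _ ?_
  refine continuous_pi fun i => continuous_pi fun j => ?_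
  have hc : ∀ i, Continuous fun w : {w : Fin (n + 1) → ℂ // w ≠ 0} => w.1 i :=
    fun i => (continuous_apply i).comp continuous_subtype_val
  refine Continuous.div ?_ ?_ fun w => nsq_ne_zero _ w.2
  · exact (hc i).mul (hc j).star
  · exact continuous_finsetSum _ fun i _ => (hc i).mul (hc i).star

theorem proj_injective (n : ℕ) : Function.Injective (proj n) := by
  intro x y
  induction x using Quot.ind with | mk u
  induction y using Quot.ind with | mk v
  intro h
  obtain ⟨u, hu⟩ := u
  obtain ⟨v, hv⟩ := v
  have h' : ∀ i j, u i * star (u j) / nsq u = v i * star (v j) / nsq v :=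
    fun i j => congrFun (congrFun h i) j
  obtain ⟨j, hj⟩ := Function.ne_iff.1 hu
  have hj : u j ≠ 0 := hj
  have hsj : star (u j) ≠ 0 := star_ne_zero.2 hj
  have h1 := nsq_ne_zero u hu
  have h2 := nsq_ne_zero v hv
  have hvj : star (v j) ≠ 0 := by
    intro h0
    have := h' j j
    rw [h0, mul_zero, zero_div] at this
    exact div_ne_zero (mul_ne_zero hj hsj) h1 this
  refine Quot.sound ⟨star (v j) * nsq u / (nsq v * star (u j)), ?_, ?_⟩
  · exact div_ne_zero (mul_ne_zero hvj h1) (mul_ne_zero h2 hsj)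
  · funext i
    have := h' i j
    rw [div_eq_div_iff h1 h2] at this
    simp only [Pi.smul_apply, smul_eq_mul]
    rw [div_mul_eq_mul_div, eq_div_iff (mul_ne_zero h2 hsj)]
    linear_combination this

instance (n : ℕ) : T2Space (CP n) :=
  T2Space.of_injective_continuous (proj_injective n) (continuous_proj n)

instance (n : ℕ) : CompactSpace (SymmetricProduct n (OnePoint ℂ)) :=
  inferInstanceAs (CompactSpace (Quot _))

/-- The map of the theorem. -/
def spMap (n : ℕ) : SymmetricProduct n (OnePoint ℂ) → CP n :=
  Quot.lift (fun a => Quot.mk _ (coeffVec a)) (by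
    rintro a b ⟨e, rfl⟩
    have : polyOf (b ∘ e) = polyOf b := by
      rw [polyOf_eq, polyOf_eq]
      exact Equiv.prod_comp e fun i => el (b i)
    congr 1
    apply Subtype.ext
    funext k
    change (polyOf (b ∘ e)).coeff k = (polyOf b).coeff k
    rw [this])

theorem spMap_continuous (n : ℕ) : Continuous (spMap n) :=
  continuous_quot_lift _ (continuous_coeffVec n)

theorem cp_exact {n : ℕ} {u v : {w : Fin (n + 1) → ℂ // w ≠ 0}}
    (h : (Quot.mk _ u : CP n) = Quot.mk _ v) : ∃ c : ℂ, c ≠ 0 ∧ u.1 = c • v.1 := by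
  have := Quot.eqvGen_exact h
  refine (Equivalence.eqvGen_iff ⟨?_, ?_, ?_⟩).1 this
  · exact fun u => ⟨1, one_ne_zero, (one_smul _ _).symm⟩
  · rintro u v ⟨c, hc, h⟩
    exact ⟨c⁻¹, inv_ne_zero hc, by rw [h, inv_smul_smul₀ hc]⟩
  · rintro u v w ⟨c, hc, h⟩ ⟨d, hd, h'⟩
    exact ⟨c * d, mul_ne_zero hc hd, by rw [h, h', mul_smul]⟩

theorem spMap_bijective (n : ℕ) : Function.Bijective (spMap n) := by
  constructor
  · intro x y
    induction x using Quot.ind with | mk a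
    induction y using Quot.ind with | mk b
    intro h
    obtain ⟨c, -, h⟩ := cp_exact h
    exact Quot.sound (coeffVec_rel a b c h)
  · intro y
    induction y using Quot.ind with | mk w
    obtain ⟨a, c, hc, h⟩ := exists_coeffVec w
    exact ⟨Quot.mk _ a, (Quot.sound ⟨c, hc, h⟩).symm⟩

/-- **Statement 12.**  For every `n ≥ 1`, the map
`SP^n(S²) → ℂP^n`, `[a₁, …, a_n] ↦ [(x + a₁)⋯(x + a_n)]` (with `∞`-factors omitted),
is a homeomorphism. -/
theorem symmetricProduct_riemannSphere_homeo (n : ℕ) (hn : 1 ≤ n) :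
    ∃ h : SymmetricProduct n (OnePoint ℂ) ≃ₜ CP n,
      ∀ a : Fin n → OnePoint ℂ, h (Quot.mk _ a) = Quot.mk _ (coeffVec a) := by
  exact ⟨Continuous.homeoOfEquivCompactToT2 (f := Equiv.ofBijective _ (spMap_bijective n))
    (spMap_continuous n), fun a => rfl⟩

end Paper
end
end

section
/- (Product Neighborhood Theorem) Let N be a compact framed submanifold of codimension p of a boundaryless smooth manifold M, with framing ν. Then some neighborhood of N in M is diffeomorphic to N × ℝ^p; moreover the diffeomorphism can be chosen so that each x ∈ N corresponds to (x, 0) ∈ N × ℝ^p and so that the normal frame ν(x) corresponds to the standard basis of ℝ^p. -/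
/-!
# Statement 15: The product neighborhood theorem

Manifolds are formalized as smooth submanifolds (local regular level sets) of an ambient
real inner-product space, with the Riemannian metric induced from the ambient space;
a framing of `N ⊆ M` of codimension `p` is a smooth field of bases of the orthogonal
complement of `T_xN` inside `T_xM`.
-/

open scoped RealInnerProductSpace Topology Topology.Homotopy unitInterval
open Function Set Metric

noncomputable section

namespace Paper


variable {E : Type*} [NormedAddCommGroup E] [InnerProductSpace ℝ E]

/-- The tangent space of a subset `M ⊆ E` at `x`: the span of all velocity vectors at
`x` of curves lying in `M`. -/
def SubTangent {E' : Type*} [NormedAddCommGroup E'] [NormedSpace ℝ E']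
    (M : Set E') (x : E') : Submodule ℝ E' :=
  Submodule.span ℝ {v | ∃ γ : ℝ → E', (∀ t, γ t ∈ M) ∧ γ 0 = x ∧ HasDerivAt γ v 0}

/-- Smoothness of a map on a subset: local extendability to smooth maps on open sets. -/
def SmoothOnSet {E' G : Type*} [NormedAddCommGroup E'] [NormedSpace ℝ E']
    [NormedAddCommGroup G] [NormedSpace ℝ G] (f : E' → G) (N : Set E') : Prop :=
  ∀ x ∈ N, ∃ (U : Set E') (g : E' → G), IsOpen U ∧ x ∈ U ∧
    ContDiffOn ℝ (⊤ : ℕ∞) g U ∧ Set.EqOn f g (N ∩ U)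

/-- `M` is a smooth `m`-dimensional submanifold (without boundary) of `E'`:
locally a regular level set of a smooth submersion. -/
def IsSubmanifold {E' : Type*} [NormedAddCommGroup E'] [NormedSpace ℝ E']
    (M : Set E') (m : ℕ) : Prop :=
  ∀ x ∈ M, ∃ (U : Set E')
      (Φ : E' → EuclideanSpace ℝ (Fin (Module.finrank ℝ E' - m))),
    IsOpen U ∧ x ∈ U ∧ ContDiffOn ℝ (⊤ : ℕ∞) Φ U ∧
    (∀ y ∈ U, Function.Surjective (fderiv ℝ Φ y)) ∧
    U ∩ M = U ∩ Φ ⁻¹' {0}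

/-- `L` is a derivative of `f` at `x ∈ M` along `M` (the derivative of a local smooth
extension of `f|_M`). -/
def HasDerivOn {E' G : Type*} [NormedAddCommGroup E'] [NormedSpace ℝ E']
    [NormedAddCommGroup G] [NormedSpace ℝ G]
    (f : E' → G) (M : Set E') (x : E') (L : E' →L[ℝ] G) : Prop :=
  ∃ g : E' → G, (∀ᶠ y in nhds x, y ∈ M → f y = g y) ∧ f x = g x ∧ HasFDerivAt g L x

/-- A framing of a submanifold `N ⊆ M` of codimension `p`: a smooth field of
bases of the orthogonal complement of `T_xN` inside `T_xM`. -/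
structure IsFraming (M : Set E) (N : Set E) (p : ℕ) (ν : Fin p → E → E) : Prop where
  smooth : ∀ i, SmoothOnSet (ν i) N
  mem_tangent : ∀ i, ∀ x ∈ N, ν i x ∈ SubTangent M x
  orth : ∀ i, ∀ x ∈ N, ∀ v ∈ SubTangent N x, ⟪ν i x, v⟫ = 0
  indep : ∀ x ∈ N, LinearIndependent ℝ fun i => ν i x
  spans : ∀ x ∈ N,
    SubTangent N x ⊔ Submodule.span ℝ (Set.range fun i => ν i x) = SubTangent M x

/-- `(N, ν)` is a compact framed submanifold of `M` of codimension `p`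
(`m` denotes the dimension of `M`). -/
structure IsFramedSubmanifold (M : Set E) (m : ℕ) (N : Set E) (p : ℕ)
    (ν : Fin p → E → E) : Prop where
  subset : N ⊆ M
  compact : IsCompact N
  submanifold : IsSubmanifold N (m - p)
  framing : IsFraming M N p ν

/-- The unit `p`-sphere in `ℝ^{p+1}`. -/
def sphereSet (p : ℕ) : Set (EuclideanSpace ℝ (Fin (p + 1))) :=
  Metric.sphere 0 1

/-- `w` is a positively oriented basis of the tangent space `T_y S^p`. -/
def PosOrientedTangentBasis (p : ℕ) (y : EuclideanSpace ℝ (Fin (p + 1)))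
    (w : Fin p → EuclideanSpace ℝ (Fin (p + 1))) : Prop :=
  (∀ i, ⟪y, w i⟫ = 0) ∧
  0 < Matrix.det (Matrix.of fun i j => (Fin.cons y w : Fin (p+1) → _) i j)

/-- `y` is a regular value of `f|_M`. -/
def IsRegularValue (p : ℕ) (f : E → EuclideanSpace ℝ (Fin (p + 1))) (M : Set E)
    (y : EuclideanSpace ℝ (Fin (p + 1))) : Prop :=
  ∀ x ∈ M, f x = y → ∃ L, HasDerivOn f M x L ∧
    SubTangent (sphereSet p) y ≤ Submodule.map (L : E →ₗ[ℝ] _) (SubTangent M x)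

/-- `(N, ν)` is the Pontryagin manifold `(f⁻¹(y), f^*w)` of `f`. -/
structure IsPontryaginManifold (m p : ℕ) (f : E → EuclideanSpace ℝ (Fin (p + 1)))
    (M : Set E) (y : EuclideanSpace ℝ (Fin (p + 1)))
    (w : Fin p → EuclideanSpace ℝ (Fin (p + 1)))
    (N : Set E) (ν : Fin p → E → E) : Prop where
  framed : IsFramedSubmanifold M m N p ν
  mem_sphere : y ∈ sphereSet p
  basis : PosOrientedTangentBasis p y w
  regular : IsRegularValue p f M y
  preimage : N = {x ∈ M | f x = y}
  pullback : ∀ x ∈ N, ∃ L, HasDerivOn f M x L ∧ ∀ i, L (ν i x) = w i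

/-- Smooth homotopy of maps on `M` with values in `target`. -/
def SmoothHomotopicOn {G : Type*} [NormedAddCommGroup G] [NormedSpace ℝ G]
    (M : Set E) (f g : E → G) (target : Set G) : Prop :=
  ∃ H : E × ℝ → G, SmoothOnSet H (M ×ˢ (univ : Set ℝ)) ∧
    (∀ x ∈ M, ∀ t : ℝ, H (x, t) ∈ target) ∧
    (∀ x ∈ M, H (x, 0) = f x) ∧ (∀ x ∈ M, H (x, 1) = g x)

/-- The product inner product on `E × ℝ`. -/
def prodInner (u v : E × ℝ) : ℝ := ⟪u.1, v.1⟫ + u.2 * v.2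

/-- Framed cobordism of framed submanifolds `(N, ν)`, `(N', ν')` of `M` within
`M × [0,1]`, following Milnor/Pontryagin. -/
def FramedCobordant (M : Set E) (m p : ℕ) (N : Set E) (ν : Fin p → E → E)
    (N' : Set E) (ν' : Fin p → E → E) : Prop :=
  ∃ (Xc : Set (E × ℝ)) (u : Fin p → (E × ℝ) → (E × ℝ)) (ε : ℝ),
    0 < ε ∧ ε < 1 / 2 ∧
    IsCompact Xc ∧ Xc ⊆ M ×ˢ Icc (0 : ℝ) 1 ∧
    Xc ∩ (univ ×ˢ Iio ε) = N ×ˢ Ico (0 : ℝ) ε ∧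
    Xc ∩ (univ ×ˢ Ioi (1 - ε)) = N' ×ˢ Ioc (1 - ε) 1 ∧
    IsSubmanifold (Xc ∩ (univ ×ˢ Ioo (0 : ℝ) 1)) (m - p + 1) ∧
    (∀ i, SmoothOnSet (u i) Xc) ∧
    (∀ z ∈ Xc ∩ (univ ×ˢ Ioo (0 : ℝ) 1),
      (∀ i, u i z ∈ SubTangent (M ×ˢ (univ : Set ℝ)) z) ∧
      (∀ i, ∀ v ∈ SubTangent (Xc ∩ (univ ×ˢ Ioo (0 : ℝ) 1)) z, prodInner (u i z) v = 0) ∧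
      LinearIndependent ℝ (fun i => u i z) ∧
      SubTangent (Xc ∩ (univ ×ˢ Ioo (0 : ℝ) 1)) z ⊔
          Submodule.span ℝ (Set.range fun i => u i z)
        = SubTangent (M ×ˢ (univ : Set ℝ)) z) ∧
    (∀ x t, (x, t) ∈ Xc → t < ε → ∀ i, u i (x, t) = (ν i x, 0)) ∧
    (∀ x t, (x, t) ∈ Xc → 1 - ε < t → ∀ i, u i (x, t) = (ν' i x, 0))


/-- Smooth inverse function theorem on open sets, in a convenient form. -/
theorem ift_smooth {X Y : Type*} [NormedAddCommGroup X] [NormedSpace ℝ X] [CompleteSpace X]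
    [NormedAddCommGroup Y] [NormedSpace ℝ Y] [CompleteSpace Y]
    {f : X → Y} {U : Set X} (hU : IsOpen U) (hf : ContDiffOn ℝ (⊤ : ℕ∞) f U) {x₀ : X}
    (hx₀ : x₀ ∈ U) {f' : X →L[ℝ] Y} (hf' : HasFDerivAt f f' x₀)
    (hbij : Function.Bijective f') :
    ∃ (V : Set X) (W : Set Y) (g : Y → X), IsOpen V ∧ x₀ ∈ V ∧ V ⊆ U ∧ IsOpen W ∧ f x₀ ∈ W ∧
      ContDiffOn ℝ (⊤ : ℕ∞) g W ∧ (∀ y ∈ W, g y ∈ V ∧ f (g y) = y) ∧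
      (∀ x ∈ V, f x ∈ W ∧ g (f x) = x) := by
  have hne : ((⊤ : ℕ∞) : WithTop ℕ∞) ≠ 0 := by simp
  have h1le : (1 : WithTop ℕ∞) ≤ ((⊤ : ℕ∞) : WithTop ℕ∞) := by
    exact_mod_cast (le_top : (1 : ℕ∞) ≤ ⊤)
  let e : X ≃L[ℝ] Y := ContinuousLinearEquiv.ofBijective f'
    (LinearMap.ker_eq_bot.2 hbij.1) (LinearMap.range_eq_top.2 hbij.2)
  have he : (e : X →L[ℝ] Y) = f' := by
    ext x; simp [e]
  have hcd : ContDiffAt ℝ (⊤ : ℕ∞) f x₀ := hf.contDiffAt (hU.mem_nhds hx₀)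
  have hfe : HasFDerivAt f (e : X →L[ℝ] Y) x₀ := by rw [he]; exact hf'
  let Θ := hcd.toOpenPartialHomeomorph f hfe hne
  have hΘ : ∀ x, Θ x = f x := fun x => by
    simp [Θ, ContDiffAt.toOpenPartialHomeomorph_coe]
  have hsrc : x₀ ∈ Θ.source := hcd.mem_toOpenPartialHomeomorph_source hfe hne
  let D : Set X := U ∩ fderiv ℝ f ⁻¹' (range ((↑) : (X ≃L[ℝ] Y) → X →L[ℝ] Y))
  have hD : IsOpen D :=
    (hf.continuousOn_fderiv_of_isOpen hU h1le).isOpen_inter_preimage hU ContinuousLinearEquiv.isOpen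
  have hx₀D : x₀ ∈ D := ⟨hx₀, e, by rw [he, hf'.fderiv]⟩
  let Θ' := Θ.restrOpen D hD
  have hΘ' : ∀ x, Θ' x = f x := fun x => by
    rw [← hΘ x]; rfl
  have hsrc' : Θ'.source = Θ.source ∩ D := Θ.restrOpen_source D hD
  have hxs : x₀ ∈ Θ'.source := by rw [hsrc']; exact ⟨hsrc, hx₀D⟩
  refine ⟨Θ'.source, Θ'.target, Θ'.symm, Θ'.open_source, hxs, ?_, Θ'.open_target, ?_, ?_, ?_, ?_⟩
  · rw [hsrc']; exact fun x hx => hx.2.1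
  · rw [← hΘ']; exact Θ'.map_source hxs
  · intro y hy
    have h1 := Θ'.map_target hy
    have h2 : Θ'.symm y ∈ D := by rw [hsrc'] at h1; exact h1.2
    obtain ⟨e', he'⟩ := h2.2
    have h3 : ContDiffAt ℝ (⊤ : ℕ∞) f (Θ'.symm y) := hf.contDiffAt (hU.mem_nhds h2.1)
    have hfun : (Θ' : X → Y) = f := funext hΘ'
    refine (Θ'.contDiffAt_symm (f₀' := e') hy ?_ ?_).contDiffWithinAt
    · rw [hfun, he']
      exact (h3.differentiableAt hne).hasFDerivAt
    · rw [hfun]; exact h3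
  · intro y hy
    refine ⟨Θ'.map_target hy, ?_⟩
    rw [← hΘ']; exact Θ'.right_inv hy
  · intro x hx
    refine ⟨?_, ?_⟩
    · rw [← hΘ']; exact Θ'.map_source hx
    · rw [← hΘ']; exact Θ'.left_inv hx

/-- Local analysis of the tubular map. -/
theorem local_tube {X F G : Type*} [NormedAddCommGroup X] [NormedSpace ℝ X]
    [FiniteDimensional ℝ X] [NormedAddCommGroup F] [NormedSpace ℝ F] [FiniteDimensional ℝ F]
    [NormedAddCommGroup G] [NormedSpace ℝ G] [FiniteDimensional ℝ G]
    {U : Set X} (hU : IsOpen U) {x₀ : X} (hx₀ : x₀ ∈ U)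
    {Φ : X → G} (hΦ : ContDiffOn ℝ (⊤ : ℕ∞) Φ U) (hΦ0 : Φ x₀ = 0)
    {β : X → F →L[ℝ] X} (hβ : ContDiffOn ℝ (⊤ : ℕ∞) β U)
    (hinj : ∀ u ζ, u + β x₀ ζ = 0 → fderiv ℝ Φ x₀ u = 0 → u = 0 ∧ ζ = 0)
    (hsurj : ∀ y z, ∃ u ζ, u + β x₀ ζ = y ∧ fderiv ℝ Φ x₀ u = z) :
    ∃ (η : ℝ) (ρ : X → X) (κ : X → F), 0 < η ∧ ball x₀ (2 * η) ⊆ U ∧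
      ContDiffOn ℝ (⊤ : ℕ∞) ρ (ball x₀ η) ∧ ContDiffOn ℝ (⊤ : ℕ∞) κ (ball x₀ η) ∧
      ρ x₀ = x₀ ∧ κ x₀ = 0 ∧
      (∀ y ∈ ball x₀ η, y = ρ y + β (ρ y) (κ y)) ∧
      (∀ y ∈ ball x₀ η, ∀ x ∈ ball x₀ (2 * η), Φ x = 0 → ∀ ζ, y = x + β x ζ →
        x = ρ y ∧ ζ = κ y) := by
  have hne : ((⊤ : ℕ∞) : WithTop ℕ∞) ≠ 0 := by simp
  have : CompleteSpace X := FiniteDimensional.complete ℝ X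
  have : CompleteSpace F := FiniteDimensional.complete ℝ F
  have : CompleteSpace G := FiniteDimensional.complete ℝ G
  let Ξ : X × F → X × G := fun q => (q.1 + β q.1 q.2, Φ q.1)
  have hU' : IsOpen (U ×ˢ (univ : Set F)) := hU.prod isOpen_univ
  have hfst : ContDiffOn ℝ (⊤ : ℕ∞) (fun q : X × F => q.1) (U ×ˢ (univ : Set F)) :=
    contDiff_fst.contDiffOn
  have hmaps : MapsTo (fun q : X × F => q.1) (U ×ˢ (univ : Set F)) U := fun q hq => hq.1
  have hΞ : ContDiffOn ℝ (⊤ : ℕ∞) Ξ (U ×ˢ (univ : Set F)) :=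
    (hfst.add ((hβ.comp hfst hmaps).clm_apply contDiff_snd.contDiffOn)).prodMk
      (hΦ.comp hfst hmaps)
  have hβd : HasFDerivAt β (fderiv ℝ β x₀) x₀ :=
    ((hβ.contDiffAt (hU.mem_nhds hx₀)).differentiableAt hne).hasFDerivAt
  have hΦd : HasFDerivAt Φ (fderiv ℝ Φ x₀) x₀ :=
    ((hΦ.contDiffAt (hU.mem_nhds hx₀)).differentiableAt hne).hasFDerivAt
  have hf1 : HasFDerivAt (fun q : X × F => q.1) (ContinuousLinearMap.fst ℝ X F) (x₀, (0 : F)) :=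
    hasFDerivAt_fst
  have hΞd := (hf1.add ((HasFDerivAt.comp (x₀, (0 : F)) (f := fun q : X × F => q.1)
    hβd hf1).clm_apply (hasFDerivAt_snd (𝕜 := ℝ) (p := (x₀, (0 : F)))))).prodMk
      (HasFDerivAt.comp (x₀, (0 : F)) (f := fun q : X × F => q.1) hΦd hf1)
  obtain ⟨V, W, g, hV, hxV, hVU, hW, hxW, hg, hgW, hgV⟩ :=
    ift_smooth hU' hΞ (x₀ := (x₀, (0 : F))) ⟨hx₀, mem_univ _⟩ hΞd (by
      constructor
      · rw [injective_iff_map_eq_zero]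
        rintro ⟨u, ζ⟩ h
        simp at h
        obtain ⟨h1, h2⟩ := hinj u ζ h.1 h.2
        simp [h1, h2]
      · rintro ⟨y, z⟩
        obtain ⟨u, ζ, h1, h2⟩ := hsurj y z
        exact ⟨(u, ζ), by simp [h1, h2]⟩)
  have hΞ0 : Ξ (x₀, 0) = (x₀, 0) := by simp [Ξ, hΦ0]
  rw [show ((fun q : X × F => q.1) + fun y : X × F => (β ∘ fun q => q.1) y y.2) = 
    fun q : X × F => q.1 + β q.1 q.2 from rfl] at *
  have hxW' : (x₀, (0 : G)) ∈ W := hΞ0 ▸ hxW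
  obtain ⟨ε₁, hε₁, hVb⟩ := Metric.isOpen_iff.1 hV _ hxV
  obtain ⟨ε₂, hε₂, hWb⟩ := Metric.isOpen_iff.1 hW _ hxW'
  obtain ⟨K, hK, hKa⟩ := LinearMap.exists_antilipschitzWith (β x₀ : F →ₗ[ℝ] X) (by
    rw [LinearMap.ker_eq_bot']
    intro ζ hζ
    exact (hinj 0 ζ (by simpa using hζ) (by simp)).2)
  have hKa' : ∀ ζ, ‖ζ‖ ≤ K * ‖β x₀ ζ‖ := fun ζ => by
    have := hKa.le_mul_dist ζ 0
    simpa using this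
  have hKpos : (0 : ℝ) < K := hK
  have hβc : ContinuousAt β x₀ := hβd.continuousAt
  obtain ⟨ε₃, hε₃, hβb⟩ := Metric.continuousAt_iff.1 hβc (1 / (2 * K)) (by positivity)
  obtain ⟨ε₄, hε₄, hUb⟩ := Metric.isOpen_iff.1 hU _ hx₀
  obtain ⟨η, hη, h1, h2, h3, h4, h5⟩ : ∃ η : ℝ, 0 < η ∧ 2 * η ≤ ε₁ ∧ η ≤ ε₂ ∧ 2 * η ≤ ε₃ ∧
      2 * η ≤ ε₄ ∧ 6 * K * η ≤ ε₁ := by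
    refine ⟨min (ε₁ / 2) (min ε₂ (min (ε₃ / 2) (min (ε₄ / 2) (ε₁ / (6 * K))))), by positivity,
      ?_, ?_, ?_, ?_, ?_⟩
    · have := min_le_left (ε₁ / 2) (min ε₂ (min (ε₃ / 2) (min (ε₄ / 2) (ε₁ / (6 * K)))))
      linarith
    · exact (min_le_right _ _).trans (min_le_left _ _)
    · have : min (ε₁ / 2) (min ε₂ (min (ε₃ / 2) (min (ε₄ / 2) (ε₁ / (6 * K))))) ≤ ε₃ / 2 :=
        (min_le_right _ _).trans ((min_le_right _ _).trans (min_le_left _ _))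
      linarith
    · have : min (ε₁ / 2) (min ε₂ (min (ε₃ / 2) (min (ε₄ / 2) (ε₁ / (6 * K))))) ≤ ε₄ / 2 :=
        (min_le_right _ _).trans ((min_le_right _ _).trans
          ((min_le_right _ _).trans (min_le_left _ _)))
      linarith
    · have : min (ε₁ / 2) (min ε₂ (min (ε₃ / 2) (min (ε₄ / 2) (ε₁ / (6 * K))))) ≤ ε₁ / (6 * K) :=
        (min_le_right _ _).trans ((min_le_right _ _).trans
          ((min_le_right _ _).trans (min_le_right _ _)))
      rw [le_div_iff₀ (by positivity)] at this
      linarith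
  have hyW : ∀ y ∈ ball x₀ η, (y, (0 : G)) ∈ W := fun y hy => hWb (by
    rw [mem_ball, Prod.dist_eq]
    simp only [dist_self]
    exact max_lt (lt_of_lt_of_le hy h2) hε₂)
  have hS : ContDiffOn ℝ (⊤ : ℕ∞) (fun y => g (y, (0 : G))) (ball x₀ η) :=
    hg.comp (contDiff_id.prodMk contDiff_const).contDiffOn hyW
  have hg0 : g (x₀, 0) = (x₀, 0) := by
    have := (hgV _ hxV).2
    rw [← hΞ0]
    exact this
  refine ⟨η, fun y => (g (y, 0)).1, fun y => (g (y, 0)).2, hη, ?_, hS.fst, hS.snd, ?_, ?_, ?_, ?_⟩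
  · exact (ball_subset_ball h4).trans hUb
  · simp [hg0]
  · simp [hg0]
  · intro y hy
    have := (hgW _ (hyW y hy)).2
    exact (congrArg Prod.fst this).symm
  · intro y hy x hx hΦx ζ hyx
    have hsmall : ‖ζ‖ ≤ 2 * K * ‖y - x‖ := by
      have e1 := hKa' ζ
      have e2 : β x₀ ζ = (y - x) - (β x - β x₀) ζ := by
        rw [hyx]; simp
      have e3 : ‖(β x - β x₀) ζ‖ ≤ 1 / (2 * K) * ‖ζ‖ := by
        refine (ContinuousLinearMap.le_opNorm _ _).trans ?_
        gcongr
        have := hβb (lt_of_lt_of_le hx h3)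
        rw [dist_eq_norm] at this
        exact this.le
      have e4 : ‖β x₀ ζ‖ ≤ ‖y - x‖ + 1 / (2 * K) * ‖ζ‖ := by
        rw [e2]; exact (norm_sub_le _ _).trans (by gcongr)
      have e5 : (K : ℝ) * ‖β x₀ ζ‖ ≤ K * (‖y - x‖ + 1 / (2 * K) * ‖ζ‖) := by gcongr
      have e6 : (K : ℝ) * (‖y - x‖ + 1 / (2 * K) * ‖ζ‖) = K * ‖y - x‖ + ‖ζ‖ / 2 := by
        field_simp
      linarith
    have hyx3 : ‖y - x‖ < 3 * η := by
      rw [← dist_eq_norm]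
      have := dist_triangle_right y x x₀
      rw [mem_ball] at hy hx
      linarith
    have hζ : ‖ζ‖ < ε₁ := by
      have : 2 * K * ‖y - x‖ < 2 * K * (3 * η) := by gcongr
      linarith
    have hmem : (x, ζ) ∈ V := hVb (by
      rw [mem_ball, Prod.dist_eq]
      refine max_lt (lt_of_lt_of_le hx h1) (by simpa using hζ))
    have := (hgV _ hmem).2
    have hv : Ξ (x, ζ) = (y, 0) := by simp [Ξ, hΦx, ← hyx]
    have h7 : g (y, 0) = (x, ζ) := by rw [← hv]; exact this
    simp [h7]

/-- Local form of the product neighborhood theorem, for maps between vector spaces. -/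
theorem local_full {X P Λ G H : Type*} [NormedAddCommGroup X] [NormedSpace ℝ X]
    [FiniteDimensional ℝ X] [NormedAddCommGroup P] [NormedSpace ℝ P] [FiniteDimensional ℝ P]
    [NormedAddCommGroup Λ] [NormedSpace ℝ Λ] [FiniteDimensional ℝ Λ]
    [NormedAddCommGroup G] [NormedSpace ℝ G] [FiniteDimensional ℝ G]
    [NormedAddCommGroup H] [NormedSpace ℝ H] [FiniteDimensional ℝ H]
    {U : Set X} (hU : IsOpen U) {x₀ : X} (hx₀ : x₀ ∈ U)
    {Φ : X → G} (hΦ : ContDiffOn ℝ (⊤ : ℕ∞) Φ U) (hΦ0 : Φ x₀ = 0)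
    {Ψ : X → H} (hΨ : ContDiffOn ℝ (⊤ : ℕ∞) Ψ U) (hΨ0 : Ψ x₀ = 0)
    {β : X → P × Λ →L[ℝ] X} (hβ : ContDiffOn ℝ (⊤ : ℕ∞) β U)
    (hinj : ∀ u ζ, u + β x₀ ζ = 0 → fderiv ℝ Φ x₀ u = 0 → u = 0 ∧ ζ = 0)
    (hsurj : ∀ y z, ∃ u ζ, u + β x₀ ζ = y ∧ fderiv ℝ Φ x₀ u = z)
    (hbij : Function.Bijective fun l : Λ => fderiv ℝ Ψ x₀ (β x₀ (0, l)))
    (hker : ∀ w : P, fderiv ℝ Ψ x₀ (β x₀ (w, 0)) = 0) :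
    ∃ (η : ℝ) (ρ : X → X) (κ : X → P × Λ) (W : Set (X × P)) (g : X × P → X),
      0 < η ∧ ball x₀ (2 * η) ⊆ U ∧
      ContDiffOn ℝ (⊤ : ℕ∞) ρ (ball x₀ η) ∧ ContDiffOn ℝ (⊤ : ℕ∞) κ (ball x₀ η) ∧
      (∀ y ∈ ball x₀ η, ∀ x ∈ ball x₀ (2 * η), Φ x = 0 → ∀ ζ, y = x + β x ζ →
        x = ρ y ∧ ζ = κ y) ∧
      IsOpen W ∧ (x₀, 0) ∈ W ∧ ContDiffOn ℝ (⊤ : ℕ∞) g W ∧ g (x₀, 0) = x₀ ∧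
      (∀ q ∈ W, Φ q.1 = 0 → q.1 ∈ U → g q ∈ ball x₀ η ∧ Ψ (g q) = 0 ∧ ρ (g q) = q.1 ∧
        (κ (g q)).1 = q.2) ∧
      (∀ y ∈ ball x₀ η, Ψ y = 0 → (ρ y, (κ y).1) ∈ W ∧ g (ρ y, (κ y).1) = y) ∧
      (∀ w : P, HasDerivAt (fun s : ℝ => g (x₀, s • w)) (β x₀ (w, 0)) 0) := by
  have hne : ((⊤ : ℕ∞) : WithTop ℕ∞) ≠ 0 := by simp
  have : CompleteSpace X := FiniteDimensional.complete ℝ X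
  have : CompleteSpace P := FiniteDimensional.complete ℝ P
  have : CompleteSpace Λ := FiniteDimensional.complete ℝ Λ
  have : CompleteSpace H := FiniteDimensional.complete ℝ H
  obtain ⟨η₀, ρ, κ, hη₀, hbU, hρ, hκ, hρ0, hκ0, hdec, huniq⟩ :=
    local_tube hU hx₀ hΦ hΦ0 hβ hinj hsurj
  -- the map `(x, v, l) ↦ x + β x (v, l)`
  let T : (X × P) × Λ → X := fun q => q.1.1 + β q.1.1 (q.1.2, q.2)
  let S : Set ((X × P) × Λ) := {q | q.1.1 ∈ U}
  have hS : IsOpen S := hU.preimage (by fun_prop : Continuous fun q : (X × P) × Λ => q.1.1)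
  have hfst : ContDiff ℝ (⊤ : ℕ∞) (fun q : (X × P) × Λ => q.1.1) :=
    contDiff_fst.comp contDiff_fst
  have hsnd : ContDiff ℝ (⊤ : ℕ∞) (fun q : (X × P) × Λ => (q.1.2, q.2)) :=
    (contDiff_snd.comp contDiff_fst).prodMk contDiff_snd
  have hT : ContDiffOn ℝ (⊤ : ℕ∞) T S :=
    hfst.contDiffOn.add ((hβ.comp hfst.contDiffOn (fun q hq => hq)).clm_apply hsnd.contDiffOn)
  let S' : Set ((X × P) × Λ) := S ∩ T ⁻¹' U
  have hS' : IsOpen S' := hT.continuousOn.isOpen_inter_preimage hS hU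
  let q₀ : (X × P) × Λ := ((x₀, 0), 0)
  have hT0 : T q₀ = x₀ := by
    change x₀ + β x₀ ((0 : P), (0 : Λ)) = x₀
    rw [Prod.mk_zero_zero, map_zero, add_zero]
  have hq₀ : q₀ ∈ S' := ⟨hx₀, by change T q₀ ∈ U; rw [hT0]; exact hx₀⟩
  let Om : (X × P) × Λ → (X × P) × H := fun q => (q.1, Ψ (T q))
  have hTS' : ContDiffOn ℝ (⊤ : ℕ∞) T S' := hT.mono inter_subset_left
  have hmaps : MapsTo T S' U := fun q hq => hq.2
  have hΨTS : ContDiffOn ℝ (⊤ : ℕ∞) (Ψ ∘ T) S' := hΨ.comp hTS' hmaps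
  have hOm : ContDiffOn ℝ (⊤ : ℕ∞) Om S' := contDiff_fst.contDiffOn.prodMk hΨTS
  have hβd : HasFDerivAt β (fderiv ℝ β x₀) x₀ :=
    ((hβ.contDiffAt (hU.mem_nhds hx₀)).differentiableAt hne).hasFDerivAt
  have hΨd : HasFDerivAt Ψ (fderiv ℝ Ψ x₀) x₀ :=
    ((hΨ.contDiffAt (hU.mem_nhds hx₀)).differentiableAt hne).hasFDerivAt
  have hf1 : HasFDerivAt (fun q : (X × P) × Λ => q.1.1)
      ((ContinuousLinearMap.fst ℝ X P).comp (ContinuousLinearMap.fst ℝ (X × P) Λ)) q₀ :=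
    ContinuousLinearMap.hasFDerivAt
      ((ContinuousLinearMap.fst ℝ X P).comp (ContinuousLinearMap.fst ℝ (X × P) Λ))
  have hf2 : HasFDerivAt (fun q : (X × P) × Λ => (q.1.2, q.2))
      (((ContinuousLinearMap.snd ℝ X P).comp (ContinuousLinearMap.fst ℝ (X × P) Λ)).prod
        (ContinuousLinearMap.snd ℝ (X × P) Λ)) q₀ :=
    ContinuousLinearMap.hasFDerivAt
      (((ContinuousLinearMap.snd ℝ X P).comp (ContinuousLinearMap.fst ℝ (X × P) Λ)).prod
        (ContinuousLinearMap.snd ℝ (X × P) Λ))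
  have hTd' := hf1.add ((HasFDerivAt.comp q₀ (f := fun q : (X × P) × Λ => q.1.1)
    hβd hf1).clm_apply hf2)
  obtain ⟨T', hTd, hT'⟩ : ∃ T' : (X × P) × Λ →L[ℝ] X, HasFDerivAt T T' q₀ ∧
      ∀ u v l, T' ((u, v), l) = u + β x₀ (v, l) := by
    refine ⟨_, hTd', ?_⟩
    intro u v l
    have h0 : (fderiv ℝ β x₀ u) ((0 : P), (0 : Λ)) = 0 := by
      rw [Prod.mk_zero_zero, map_zero]
    simp [q₀, h0]
  have hΨT : HasFDerivAt (fun q => Ψ (T q)) ((fderiv ℝ Ψ x₀).comp T') q₀ := by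
    have h := hΨd
    rw [← hT0] at h
    have := HasFDerivAt.comp q₀ h hTd
    rw [hT0] at this
    exact this
  have hOmd : HasFDerivAt Om ((ContinuousLinearMap.fst ℝ (X × P) Λ).prod
      ((fderiv ℝ Ψ x₀).comp T')) q₀ := (hasFDerivAt_fst (p := q₀)).prodMk hΨT
  have hβ0 : β x₀ ((0 : P), (0 : Λ)) = 0 := by rw [Prod.mk_zero_zero, map_zero]
  have hsplit : ∀ v l, β x₀ (v, l) = β x₀ (v, 0) + β x₀ (0, l) := fun v l => by
    rw [← map_add]; simp
  obtain ⟨V, W, G', hV, hqV, hVS, hW, hqW, hG, hGW, hGV⟩ := ift_smooth hS' hOm hq₀ hOmd (by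
    constructor
    · rw [injective_iff_map_eq_zero]
      rintro ⟨⟨u, v⟩, l⟩ h
      simp only [ContinuousLinearMap.prod_apply, ContinuousLinearMap.coe_fst',
        ContinuousLinearMap.comp_apply, hT', Prod.mk_eq_zero] at h
      obtain ⟨⟨rfl, rfl⟩, h⟩ := h
      have : l = 0 := hbij.1 (by simpa [hβ0] using h)
      simp [this]
    · rintro ⟨⟨u, v⟩, z⟩
      obtain ⟨l, hl⟩ := hbij.2 (z - fderiv ℝ Ψ x₀ (u + β x₀ (v, 0)))
      refine ⟨((u, v), l), ?_⟩
      simp only [ContinuousLinearMap.prod_apply, ContinuousLinearMap.coe_fst',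
        ContinuousLinearMap.comp_apply, hT']
      rw [hsplit, ← add_assoc, map_add, show fderiv ℝ Ψ x₀ (β x₀ (0, l)) = _ from hl]
      simp)
  have hOm0 : Om q₀ = ((x₀, 0), 0) := by
    simp only [Om, hT0, hΨ0]; rfl
  rw [hOm0] at hqW
  have hG0 : G' ((x₀, 0), 0) = q₀ := by
    rw [← hOm0]; exact (hGV _ hqV).2
  -- the local inverse
  let g : X × P → X := fun q => T (G' (q, 0))
  let W₁ : Set (X × P) := {q | (q, (0 : H)) ∈ W}
  have hW₁ : IsOpen W₁ := hW.preimage (by fun_prop : Continuous fun q : X × P => (q, (0 : H)))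
  have hG1 : ContDiffOn ℝ (⊤ : ℕ∞) (fun q : X × P => G' (q, (0 : H))) W₁ :=
    hG.comp (contDiff_id.prodMk contDiff_const).contDiffOn (fun q hq => hq)
  have hg : ContDiffOn ℝ (⊤ : ℕ∞) g W₁ :=
    hT.comp hG1 (fun q hq => (hVS (hGW _ hq).1).1)
  have hg0 : g (x₀, 0) = x₀ := by simp only [g, hG0, hT0]
  have hgW : ∀ q ∈ W₁, Ψ (g q) = 0 ∧ ∃ l, G' (q, 0) = (q, l) ∧ g q = q.1 + β q.1 (q.2, l) := by
    intro q hq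
    have h := (hGW _ hq).2
    have h1 : (G' (q, 0)).1 = q := congrArg Prod.fst h
    have h2 : Ψ (T (G' (q, 0))) = 0 := congrArg Prod.snd h
    refine ⟨h2, (G' (q, 0)).2, Prod.ext h1 rfl, ?_⟩
    simp only [g, T, h1]
  -- choose a smaller radius
  have hcont : ContinuousAt (fun y => ((ρ y, (κ y).1), (κ y).2)) x₀ := by
    have h1 := hρ.continuousOn.continuousAt (ball_mem_nhds x₀ hη₀)
    have h2 := hκ.continuousOn.continuousAt (ball_mem_nhds x₀ hη₀)
    fun_prop
  have hval : ((ρ x₀, (κ x₀).1), (κ x₀).2) = q₀ := by simp [hρ0, hκ0, q₀]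
  have hnear : ∀ᶠ y in 𝓝 x₀, ((ρ y, (κ y).1), (κ y).2) ∈ V ∩ {q | q.1.1 ∈ ball x₀ (2 * η₀)} := by
    refine hcont.eventually_mem ?_
    rw [hval]
    refine Filter.inter_mem (hV.mem_nhds hqV) ?_
    refine (isOpen_ball.preimage
      (by fun_prop : Continuous fun q : (X × P) × Λ => q.1.1)).mem_nhds ?_
    change x₀ ∈ ball x₀ (2 * η₀)
    exact mem_ball_self (by linarith)
  obtain ⟨η₁, hη₁, hη₁b⟩ := Metric.eventually_nhds_iff_ball.1 hnear
  let η := min η₀ η₁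
  have hη : 0 < η := lt_min hη₀ hη₁
  have hηle : η ≤ η₀ := min_le_left _ _
  have hsub : ball x₀ η ⊆ ball x₀ η₀ := ball_subset_ball hηle
  have hsub2 : ball x₀ (2 * η) ⊆ ball x₀ (2 * η₀) := ball_subset_ball (by linarith)
  let W₂ : Set (X × P) := (W₁ ∩ g ⁻¹' ball x₀ η) ∩ {q | q.1 ∈ ball x₀ (2 * η₀)}
  have hW₂ : IsOpen W₂ := (hg.continuousOn.isOpen_inter_preimage hW₁ isOpen_ball).inter
    (isOpen_ball.preimage continuous_fst)
  have hx₀W₂ : (x₀, (0 : P)) ∈ W₂ := by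
    refine ⟨⟨hqW, ?_⟩, ?_⟩
    · rw [mem_preimage]
      rw [hg0]; exact mem_ball_self hη
    · change x₀ ∈ ball x₀ (2 * η₀)
      exact mem_ball_self (by linarith)
  refine ⟨η, ρ, κ, W₂, g, hη, hsub2.trans hbU, hρ.mono hsub, hκ.mono hsub,
    fun y hy x hx => huniq y (hsub hy) x (hsub2 hx), hW₂, hx₀W₂,
    hg.mono (fun q hq => hq.1.1), hg0, ?_, ?_, ?_⟩
  · intro q hq hΦq hqU
    obtain ⟨h1, l, -, h2⟩ := hgW q hq.1.1
    obtain ⟨h3, h4⟩ := huniq (g q) (hsub hq.1.2) q.1 hq.2 hΦq (q.2, l) h2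
    exact ⟨hq.1.2, h1, h3.symm, by rw [← h4]⟩
  · intro y hy hΨy
    have hm := hη₁b y (ball_subset_ball (min_le_right _ _) hy)
    have hTy : T ((ρ y, (κ y).1), (κ y).2) = y := (hdec y (hsub hy)).symm
    have hOmy : Om ((ρ y, (κ y).1), (κ y).2) = ((ρ y, (κ y).1), 0) := by
      simp only [Om, hTy, hΨy]
    obtain ⟨h1, h2⟩ := hGV _ hm.1
    rw [hOmy] at h1 h2
    have hgy : g (ρ y, (κ y).1) = y := by
      simp only [g, h2, hTy]
    refine ⟨⟨⟨h1, ?_⟩, hm.2⟩, hgy⟩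
    rw [mem_preimage]
    rw [hgy]; exact hy
  · intro w
    have hline : HasDerivAt (fun s : ℝ => (x₀, s • w)) ((0 : X), w) 0 := by
      have h1 : HasDerivAt (fun s : ℝ => s • w) ((1 : ℝ) • w) 0 := (hasDerivAt_id (0 : ℝ)).smul_const w
      rw [one_smul] at h1
      exact (hasDerivAt_const (0 : ℝ) x₀).prodMk h1
    have hl0 : (x₀, (0 : ℝ) • w) = (x₀, (0 : P)) := by simp
    have hG1d : DifferentiableAt ℝ (fun q : X × P => G' (q, (0 : H))) (x₀, (0 : ℝ) • w) := by
      rw [hl0]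
      exact (hG1.contDiffAt (hW₁.mem_nhds hqW)).differentiableAt hne
    have hld : DifferentiableAt ℝ (fun s : ℝ => (G' ((x₀, s • w), (0 : H))).2) 0 := by
      have := DifferentiableAt.comp (0 : ℝ) (f := fun s : ℝ => (x₀, s • w)) hG1d
        hline.differentiableAt
      exact this.snd
    obtain ⟨l', hl'⟩ : ∃ l', HasDerivAt (fun s : ℝ => (G' ((x₀, s • w), (0 : H))).2) l' 0 :=
      ⟨_, hld.hasDerivAt⟩
    have hev : ∀ᶠ s : ℝ in 𝓝 0, (x₀, s • w) ∈ W₁ := by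
      refine hline.continuousAt.eventually_mem ?_
      rw [hl0]; exact hW₁.mem_nhds hqW
    have hgd : HasDerivAt (fun s : ℝ => g (x₀, s • w)) (β x₀ (w, l')) 0 := by
      have h1 : HasDerivAt (fun s : ℝ => s • w) ((1 : ℝ) • w) 0 := (hasDerivAt_id (0 : ℝ)).smul_const w
      rw [one_smul] at h1
      have h2 := ((β x₀).hasFDerivAt.comp_hasDerivAt (0 : ℝ) (h1.prodMk hl')).const_add x₀
      refine h2.congr_of_eventuallyEq ?_
      filter_upwards [hev] with s hs
      obtain ⟨-, l, h3, h4⟩ := hgW _ hs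
      rw [h4]
      simp [h3]
    have hz : fderiv ℝ Ψ x₀ (β x₀ (w, l')) = 0 := by
      have hgx : g (x₀, (0 : ℝ) • w) = x₀ := by rw [hl0, hg0]
      have h := hΨd
      rw [← hgx] at h
      have h1 := h.comp_hasDerivAt (0 : ℝ) hgd
      rw [hgx] at h1
      have h2 : HasDerivAt (Ψ ∘ fun s : ℝ => g (x₀, s • w)) 0 0 := by
        refine (hasDerivAt_const (0 : ℝ) (0 : H)).congr_of_eventuallyEq ?_
        filter_upwards [hev] with s hs
        exact (hgW _ hs).1
      exact h1.unique h2
    have hl'0 : l' = 0 := by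
      rw [hsplit, map_add, hker, zero_add] at hz
      refine hbij.1 ?_
      simpa [hβ0] using hz
    rw [hl'0] at hgd
    exact hgd

/-- Smooth shrinking of Euclidean space onto a ball. -/
def shrink (p : ℕ) (ε : ℝ) (v : EuclideanSpace ℝ (Fin p)) : EuclideanSpace ℝ (Fin p) :=
  (ε / √(ε ^ 2 + ‖v‖ ^ 2)) • v

/-- The inverse of `shrink`. -/
def expand (p : ℕ) (ε : ℝ) (w : EuclideanSpace ℝ (Fin p)) : EuclideanSpace ℝ (Fin p) :=
  (ε / √(ε ^ 2 - ‖w‖ ^ 2)) • w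

theorem shrink_norm {p : ℕ} {ε : ℝ} (hε : 0 < ε) (v : EuclideanSpace ℝ (Fin p)) :
    ‖shrink p ε v‖ = ε / √(ε ^ 2 + ‖v‖ ^ 2) * ‖v‖ := by
  rw [shrink, norm_smul, Real.norm_eq_abs, abs_of_nonneg (by positivity)]

theorem shrink_norm_lt {p : ℕ} {ε : ℝ} (hε : 0 < ε) (v : EuclideanSpace ℝ (Fin p)) :
    ‖shrink p ε v‖ < ε := by
  rw [shrink_norm hε, div_mul_eq_mul_div, div_lt_iff₀ (by positivity)]
  gcongr
  refine Real.lt_sqrt_of_sq_lt ?_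
  have : 0 < ε ^ 2 := by positivity
  linarith

theorem expand_shrink {p : ℕ} {ε : ℝ} (hε : 0 < ε) (v : EuclideanSpace ℝ (Fin p)) :
    expand p ε (shrink p ε v) = v := by
  have hpos : 0 < ε ^ 2 + ‖v‖ ^ 2 := by positivity
  have h1 : ε ^ 2 - ‖shrink p ε v‖ ^ 2 = (ε ^ 2 / √(ε ^ 2 + ‖v‖ ^ 2)) ^ 2 := by
    rw [shrink_norm hε, mul_pow, div_pow, div_pow, Real.sq_sqrt hpos.le]
    field_simp
    ring
  have hs : 0 < √(ε ^ 2 + ‖v‖ ^ 2) := Real.sqrt_pos.2 hpos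
  rw [expand, h1, Real.sqrt_sq (by positivity), shrink, smul_smul]
  have : ε / (ε ^ 2 / √(ε ^ 2 + ‖v‖ ^ 2)) * (ε / √(ε ^ 2 + ‖v‖ ^ 2)) = 1 := by
    field_simp
  rw [this, one_smul]

theorem shrink_expand {p : ℕ} {ε : ℝ} (hε : 0 < ε) (w : EuclideanSpace ℝ (Fin p))
    (hw : ‖w‖ < ε) : shrink p ε (expand p ε w) = w := by
  have hpos : 0 < ε ^ 2 - ‖w‖ ^ 2 := by
    have := norm_nonneg w
    nlinarith
  have hs : 0 < √(ε ^ 2 - ‖w‖ ^ 2) := Real.sqrt_pos.2 hpos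
  have hn : ‖expand p ε w‖ = ε / √(ε ^ 2 - ‖w‖ ^ 2) * ‖w‖ := by
    rw [expand, norm_smul, Real.norm_eq_abs, abs_of_nonneg (by positivity)]
  have h1 : ε ^ 2 + ‖expand p ε w‖ ^ 2 = (ε ^ 2 / √(ε ^ 2 - ‖w‖ ^ 2)) ^ 2 := by
    rw [hn, mul_pow, div_pow, div_pow, Real.sq_sqrt hpos.le]
    field_simp
    ring
  rw [shrink, h1, Real.sqrt_sq (by positivity), expand, smul_smul]
  have : ε / (ε ^ 2 / √(ε ^ 2 - ‖w‖ ^ 2)) * (ε / √(ε ^ 2 - ‖w‖ ^ 2)) = 1 := by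
    field_simp
  rw [this, one_smul]

theorem contDiff_shrink {p : ℕ} {ε : ℝ} (hε : 0 < ε) :
    ContDiff ℝ (⊤ : ℕ∞) (shrink p ε) := by
  have h : ContDiff ℝ (⊤ : ℕ∞) fun v : EuclideanSpace ℝ (Fin p) => ε ^ 2 + ‖v‖ ^ 2 :=
    contDiff_const.add (contDiff_norm_sq ℝ)
  refine (contDiff_const.div (h.sqrt ?_) ?_).smul contDiff_id
  · intro v; positivity
  · intro v; positivity

theorem contDiffOn_expand {p : ℕ} {ε : ℝ} :
    ContDiffOn ℝ (⊤ : ℕ∞) (expand p ε) (ball 0 ε) := by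
  have hpos : ∀ w ∈ ball (0 : EuclideanSpace ℝ (Fin p)) ε, 0 < ε ^ 2 - ‖w‖ ^ 2 := by
    intro w hw
    rw [mem_ball_zero_iff] at hw
    have := norm_nonneg w
    nlinarith
  have h : ContDiff ℝ (⊤ : ℕ∞) fun v : EuclideanSpace ℝ (Fin p) => ε ^ 2 - ‖v‖ ^ 2 :=
    contDiff_const.sub (contDiff_norm_sq ℝ)
  refine (contDiffOn_const.div (h.contDiffOn.sqrt ?_) ?_).smul contDiffOn_id
  · intro v hv; exact (hpos v hv).ne'
  · intro v hv; exact (Real.sqrt_pos.2 (hpos v hv)).ne'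

/-- Velocity vectors of curves in `M` are killed by the defining function. -/
theorem subTangent_le_ker {X G : Type*} [NormedAddCommGroup X] [NormedSpace ℝ X]
    [NormedAddCommGroup G] [NormedSpace ℝ G] {M U : Set X} {Φ : X → G} (hU : IsOpen U)
    (hMU : U ∩ M = U ∩ Φ ⁻¹' {0}) {x : X} (hxU : x ∈ U) (hd : DifferentiableAt ℝ Φ x) :
    ∀ v ∈ SubTangent M x, fderiv ℝ Φ x v = 0 := by
  intro v hv
  have : SubTangent M x ≤ LinearMap.ker (fderiv ℝ Φ x : X →ₗ[ℝ] G) := by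
    refine Submodule.span_le.2 ?_
    rintro v ⟨γ, hγ, rfl, hγ'⟩
    have h1 := hd.hasFDerivAt.comp_hasDerivAt (0 : ℝ) hγ'
    have h2 : HasDerivAt (Φ ∘ γ) 0 0 := by
      refine (hasDerivAt_const (0 : ℝ) (0 : G)).congr_of_eventuallyEq ?_
      filter_upwards [hγ'.continuousAt.eventually_mem (hU.mem_nhds hxU)] with s hs
      have : γ s ∈ U ∩ Φ ⁻¹' {0} := hMU ▸ ⟨hs, hγ s⟩
      exact this.2
    exact h1.unique h2
  exact this hv

/-- The kernel of the differential of a defining function is tangent. -/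
theorem ker_le_subTangent {X G : Type*} [NormedAddCommGroup X] [NormedSpace ℝ X]
    [CompleteSpace X] [NormedAddCommGroup G] [NormedSpace ℝ G] [FiniteDimensional ℝ G]
    {M U : Set X} {Φ : X → G} (hU : IsOpen U)
    (hMU : U ∩ M = U ∩ Φ ⁻¹' {0}) {x : X} (hxU : x ∈ U) (hxM : x ∈ M)
    (hd : ContDiffAt ℝ (⊤ : ℕ∞) Φ x) (hs : Function.Surjective (fderiv ℝ Φ x)) :
    ∀ v, fderiv ℝ Φ x v = 0 → v ∈ SubTangent M x := by
  intro v hv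
  have hst : HasStrictFDerivAt Φ (fderiv ℝ Φ x) x := hd.hasStrictFDerivAt (by simp)
  have hr : (fderiv ℝ Φ x : X →ₗ[ℝ] G).range = ⊤ := LinearMap.range_eq_top.2 hs
  let φ := HasStrictFDerivAt.implicitFunction Φ (fderiv ℝ Φ x) hst hr (Φ x)
  have hφd : HasFDerivAt φ _ 0 := (hst.to_implicitFunction hr).hasFDerivAt
  have hφ0 : φ 0 = x := hst.implicitFunction_apply_image hr
  let w : (fderiv ℝ Φ x : X →ₗ[ℝ] G).ker := ⟨v, hv⟩
  have hline : HasDerivAt (fun s : ℝ => s • w) w 0 := by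
    have h1 : HasDerivAt (fun s : ℝ => s • w) ((1 : ℝ) • w) 0 :=
      (hasDerivAt_id (0 : ℝ)).smul_const w
    rwa [one_smul] at h1
  have hΦx : Φ x = 0 := by
    have : x ∈ U ∩ Φ ⁻¹' {0} := hMU ▸ ⟨hxU, hxM⟩
    exact this.2
  have hcd : HasDerivAt (fun s : ℝ => φ (s • w)) v 0 := by
    have h0 : (0 : ℝ) • w = 0 := zero_smul _ _
    rw [← h0] at hφd
    exact hφd.comp_hasDerivAt (0 : ℝ) hline
  have hev : ∀ᶠ s : ℝ in 𝓝 0, φ (s • w) ∈ M := by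
    have h1 : ∀ᶠ s : ℝ in 𝓝 0, φ (s • w) ∈ U := by
      refine hcd.continuousAt.eventually_mem ?_
      rw [zero_smul, hφ0]
      exact hU.mem_nhds hxU
    have h2 : ∀ᶠ s : ℝ in 𝓝 0, Φ (φ (s • w)) = Φ x := by
      have hc : Filter.Tendsto (fun s : ℝ => (Φ x, s • w)) (𝓝 0) (𝓝 (Φ x, 0)) := by
        have : ContinuousAt (fun s : ℝ => (Φ x, s • w)) 0 :=
          continuousAt_const.prodMk hline.continuousAt
        simpa [ContinuousAt] using this
      exact hc.eventually (hst.map_implicitFunction_eq hr)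
    filter_upwards [h1, h2] with s hs1 hs2
    have : φ (s • w) ∈ U ∩ M := by
      rw [hMU]
      exact ⟨hs1, by rw [mem_preimage, hs2, hΦx]; rfl⟩
    exact this.2
  refine Submodule.subset_span ?_
  classical
  refine ⟨fun s => if φ (s • w) ∈ M then φ (s • w) else x, ?_, ?_, ?_⟩
  · intro t
    dsimp only
    split_ifs with h
    · exact h
    · exact hxM
  · simp [hφ0]
  · refine hcd.congr_of_eventuallyEq ?_
    filter_upwards [hev] with s hs
    rw [if_pos hs]

/-- The difference to a nearest point is orthogonal to the tangent space. -/
theorem nearest_orth {N : Set E} {x y : E} (hmin : ∀ z ∈ N, dist y x ≤ dist y z) :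
    ∀ v ∈ SubTangent N x, ⟪y - x, v⟫ = 0 := by
  intro v hv
  refine Submodule.span_induction (p := fun v _ => ⟪y - x, v⟫ = 0) ?_ ?_ ?_ ?_ hv
  · rintro v ⟨γ, hγ, rfl, hγ'⟩
    have h1 : HasDerivAt (fun s => y - γ s) (-v) 0 := hγ'.const_sub y
    have h2 := h1.norm_sq
    have hm : IsLocalMin (fun s => ‖y - γ s‖ ^ 2) (0 : ℝ) := by
      refine Filter.Eventually.of_forall fun s => ?_
      have := hmin (γ s) (hγ s)
      simp only [dist_eq_norm] at this
      exact pow_le_pow_left₀ (norm_nonneg _) this 2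
    have h3 := hm.hasDerivAt_eq_zero h2
    simpa using h3
  · simp
  · intro a b _ _ ha hb
    rw [inner_add_right, ha, hb, add_zero]
  · intro c a _ ha
    rw [inner_smul_right, ha, mul_zero]

theorem finiteDimensional_of_compact {N : Set E} {k : ℕ} (hN : IsSubmanifold N k)
    (hc : IsCompact N) (hne : N.Nonempty) : FiniteDimensional ℝ E := by
  by_contra hfd
  obtain ⟨x, hx⟩ := hne
  obtain ⟨U, Φ, hU, hxU, -, -, h⟩ := hN x hx
  have hf : Module.finrank ℝ E - k = 0 := by
    rw [Module.finrank_of_not_finite hfd, Nat.zero_sub]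
  have hsub : ∀ a b : EuclideanSpace ℝ (Fin (Module.finrank ℝ E - k)), a = b := by
    intro a b
    ext i
    exact absurd i.2 (by omega)
  have hUN : U ⊆ N := by
    intro y hy
    have : y ∈ U ∩ N := by
      rw [h]; exact ⟨hy, hsub _ _⟩
    exact this.2
  obtain ⟨r, hr, hrU⟩ := Metric.nhds_basis_closedBall.mem_iff.1 (hU.mem_nhds hxU)
  exact hfd (FiniteDimensional.of_isCompact_closedBall ℝ hr
    (hc.of_isClosed_subset isClosed_closedBall (hrU.trans hUN)))

/-- The adjoint as a continuous linear map. -/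
theorem exists_adjointL (E F : Type*) [NormedAddCommGroup E] [InnerProductSpace ℝ E]
    [FiniteDimensional ℝ E] [CompleteSpace E] [NormedAddCommGroup F] [InnerProductSpace ℝ F]
    [FiniteDimensional ℝ F] [CompleteSpace F] :
    ∃ L : (E →L[ℝ] F) →L[ℝ] (F →L[ℝ] E), ∀ A, L A = ContinuousLinearMap.adjoint A := by
  let l : (E →L[ℝ] F) →ₗ[ℝ] (F →L[ℝ] E) :=
    { toFun := fun A => ContinuousLinearMap.adjoint A
      map_add' := fun A B => map_add _ A B
      map_smul' := fun c A => by simp }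
  exact ⟨LinearMap.toContinuousLinearMap l, fun A => rfl⟩

theorem adjoint_bij {E F : Type*} [NormedAddCommGroup E] [InnerProductSpace ℝ E]
    [CompleteSpace E] [NormedAddCommGroup F] [InnerProductSpace ℝ F]
    [FiniteDimensional ℝ F] [CompleteSpace F] (A : E →L[ℝ] F) (hA : Function.Surjective A) :
    Function.Bijective fun l : F => A (ContinuousLinearMap.adjoint A l) := by
  let T : F →ₗ[ℝ] F := (A.comp (ContinuousLinearMap.adjoint A) : F →L[ℝ] F)
  have hT : ∀ l, T l = A (ContinuousLinearMap.adjoint A l) := fun l => rfl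
  have hi : Function.Injective T := by
    rw [injective_iff_map_eq_zero]
    intro l hl
    have h1 : ContinuousLinearMap.adjoint A l = 0 := by
      rw [← inner_self_eq_zero (𝕜 := ℝ), ContinuousLinearMap.adjoint_inner_left, ← hT, hl,
        inner_zero_right]
    obtain ⟨u, hu⟩ := hA l
    have h2 : ⟪l, A u⟫ = 0 := by
      rw [← ContinuousLinearMap.adjoint_inner_left, h1, inner_zero_left]
    rw [hu] at h2
    exact inner_self_eq_zero.1 h2
  exact ⟨hi, LinearMap.injective_iff_surjective.1 hi⟩

theorem frame_unique {p : ℕ} {TM : Submodule ℝ E} {n : Fin p → E} (hmem : ∀ i, n i ∈ TM)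
    (hind : LinearIndependent ℝ n) {e : E} {v w : EuclideanSpace ℝ (Fin p)}
    (hv : ∀ t ∈ TM, ⟪e - ∑ i, v i • n i, t⟫ = 0)
    (hw : ∀ t ∈ TM, ⟪e - ∑ i, w i • n i, t⟫ = 0) : v = w := by
  have hs : ∑ i, (v - w) i • n i = (e - ∑ i, w i • n i) - (e - ∑ i, v i • n i) := by
    simp only [PiLp.sub_apply, sub_smul, Finset.sum_sub_distrib]
    abel
  have hmem' : ∑ i, (v - w) i • n i ∈ TM :=
    Submodule.sum_mem _ fun i _ => Submodule.smul_mem _ _ (hmem i)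
  have hz : ∑ i, (v - w) i • n i = 0 := by
    rw [← inner_self_eq_zero (𝕜 := ℝ)]
    conv_lhs => rw [hs, inner_sub_left]
    rw [← hs, hv _ hmem', hw _ hmem', sub_zero]
  have := Fintype.linearIndependent_iff.1 hind (fun i => (v - w) i) hz
  rw [← sub_eq_zero]
  ext i
  exact this i

theorem frame_linalg {p : ℕ} {F : Type*} [CompleteSpace E] [NormedAddCommGroup F]
    [InnerProductSpace ℝ F] [FiniteDimensional ℝ F] [CompleteSpace F]
    {TM TN : Submodule ℝ E} {n : Fin p → E} (A : E →L[ℝ] F) (hA : Function.Surjective A)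
    (hTM : ∀ v, v ∈ TM ↔ A v = 0) (hmem : ∀ i, n i ∈ TM) (hind : LinearIndependent ℝ n)
    (horth : ∀ i, ∀ v ∈ TN, ⟪n i, v⟫ = 0)
    (hspan : TN ⊔ Submodule.span ℝ (Set.range n) = TM) :
    (∀ e, ∃ t ∈ TN, ∃ (v : EuclideanSpace ℝ (Fin p)) (l : F),
      e = t + (∑ i, v i • n i + ContinuousLinearMap.adjoint A l)) ∧
    (∀ t ∈ TN, ∀ (v : EuclideanSpace ℝ (Fin p)) (l : F),
      t + (∑ i, v i • n i + ContinuousLinearMap.adjoint A l) = 0 → t = 0 ∧ v = 0 ∧ l = 0) ∧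
    (∀ e, (∀ t ∈ TN, ⟪e, t⟫ = 0) → ∃ (v : EuclideanSpace ℝ (Fin p)) (l : F),
      e = ∑ i, v i • n i + ContinuousLinearMap.adjoint A l) := by
  have hbij := adjoint_bij A hA
  have hNM : TN ≤ TM := hspan ▸ le_sup_left
  have hVorth : ∀ v : EuclideanSpace ℝ (Fin p), ∀ t ∈ TN, ⟪∑ i, v i • n i, t⟫ = 0 := by
    intro v t ht
    rw [sum_inner]
    refine Finset.sum_eq_zero fun i _ => ?_
    rw [inner_smul_left, horth i t ht, mul_zero]
  have hVmem : ∀ v : EuclideanSpace ℝ (Fin p), ∑ i, v i • n i ∈ TM := fun v =>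
    Submodule.sum_mem _ fun i _ => Submodule.smul_mem _ _ (hmem i)
  have hAorth : ∀ l, ∀ t ∈ TM, ⟪ContinuousLinearMap.adjoint A l, t⟫ = 0 := by
    intro l t ht
    rw [ContinuousLinearMap.adjoint_inner_left, (hTM t).1 ht, inner_zero_right]
  have hdec : ∀ e, ∃ t ∈ TN, ∃ (v : EuclideanSpace ℝ (Fin p)) (l : F),
      e = t + (∑ i, v i • n i + ContinuousLinearMap.adjoint A l) := by
    intro e
    obtain ⟨l, hl⟩ := hbij.2 (A e)
    have h1 : e - ContinuousLinearMap.adjoint A l ∈ TM := by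
      rw [hTM, map_sub, sub_eq_zero]; exact hl.symm
    rw [← hspan, Submodule.mem_sup] at h1
    obtain ⟨t, ht, s, hs, hts⟩ := h1
    obtain ⟨c, hc⟩ := (Submodule.mem_span_range_iff_exists_fun ℝ).1 hs
    refine ⟨t, ht, WithLp.toLp 2 c, l, ?_⟩
    simp only [hc]
    rw [← add_assoc, hts, sub_add_cancel]
  refine ⟨hdec, ?_, ?_⟩
  · intro t ht v l h
    have ht0 : t = 0 := by
      rw [← inner_self_eq_zero (𝕜 := ℝ)]
      have h1 : ⟪t + (∑ i, v i • n i + ContinuousLinearMap.adjoint A l), t⟫ = 0 := by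
        rw [h, inner_zero_left]
      rwa [inner_add_left, inner_add_left, hVorth v t ht, hAorth l t (hNM ht), add_zero,
        add_zero] at h1
    rw [ht0, zero_add] at h
    have hl0 : l = 0 := by
      refine hbij.1 ?_
      have h2 := congrArg A h
      rw [map_add, (hTM _).1 (hVmem v), zero_add, map_zero] at h2
      simpa using h2
    refine ⟨ht0, ?_, hl0⟩
    rw [hl0, map_zero, add_zero] at h
    have := Fintype.linearIndependent_iff.1 hind (fun i => v i) h
    ext i
    exact this i
  · intro e he
    obtain ⟨t, ht, v, l, h⟩ := hdec e
    have ht0 : t = 0 := by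
      rw [← inner_self_eq_zero (𝕜 := ℝ)]
      have h1 := he t ht
      rwa [h, inner_add_left, inner_add_left, hVorth v t ht, hAorth l t (hNM ht), add_zero,
        add_zero] at h1
    exact ⟨v, l, by rw [h, ht0, zero_add]⟩

theorem geom_local [FiniteDimensional ℝ E] {m p : ℕ} {M : Set E} (hM : IsSubmanifold M m)
    {N : Set E} {ν : Fin p → E → E} (hN : IsFramedSubmanifold M m N p ν)
    {h : E → E × EuclideanSpace ℝ (Fin p)} (h1 : ∀ y, (h y).1 ∈ N)
    (h2 : ∀ y, ∀ z ∈ N, dist y (h y).1 ≤ dist y z)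
    (h3 : ∀ y v, (∀ t ∈ SubTangent M (h y).1,
      ⟪y - (h y).1 - ∑ i, v i • ν i (h y).1, t⟫ = 0) → (h y).2 = v)
    {x₀ : E} (hx₀ : x₀ ∈ N) :
    ∃ (η : ℝ) (W : Set (E × EuclideanSpace ℝ (Fin p))) (g : E × EuclideanSpace ℝ (Fin p) → E),
      0 < η ∧ ContDiffOn ℝ (⊤ : ℕ∞) h (ball x₀ η) ∧ IsOpen W ∧ (x₀, 0) ∈ W ∧
      ContDiffOn ℝ (⊤ : ℕ∞) g W ∧ g (x₀, 0) = x₀ ∧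
      (∀ q ∈ W, q.1 ∈ N → g q ∈ M ∧ g q ∈ ball x₀ η ∧ h (g q) = q) ∧
      (∀ y ∈ M, y ∈ ball x₀ η → h y ∈ W ∧ g (h y) = y) ∧
      (∀ i, HasDerivAt (fun s : ℝ => g (x₀, s • EuclideanSpace.single i 1)) (ν i x₀) 0) := by
  have hne : ((⊤ : ℕ∞) : WithTop ℕ∞) ≠ 0 := by simp
  have : CompleteSpace E := FiniteDimensional.complete ℝ E
  obtain ⟨UM, Ψ, hUM, hxUM, hΨ, hΨs, hMU⟩ := hM x₀ (hN.subset hx₀)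
  obtain ⟨UN, Φ, hUN, hxUN, hΦ, hΦs, hNU⟩ := hN.submanifold x₀ hx₀
  choose Uν νe hUν hxUν hνe hνeq using fun i => hN.framing.smooth i x₀ hx₀
  let U : Set E := (UM ∩ UN) ∩ ⋂ i, Uν i
  have hU : IsOpen U := (hUM.inter hUN).inter (isOpen_iInter_of_finite hUν)
  have hxU : x₀ ∈ U := ⟨⟨hxUM, hxUN⟩, mem_iInter.2 hxUν⟩
  have hUUM : U ⊆ UM := fun x hx => hx.1.1
  have hUUN : U ⊆ UN := fun x hx => hx.1.2
  have hUUν : ∀ i, U ⊆ Uν i := fun i x hx => mem_iInter.1 hx.2 i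
  obtain ⟨L, hL⟩ := exists_adjointL E (EuclideanSpace ℝ (Fin (Module.finrank ℝ E - m)))
  let Λ := EuclideanSpace ℝ (Fin (Module.finrank ℝ E - m))
  let P := EuclideanSpace ℝ (Fin p)
  let β : E → P × Λ →L[ℝ] E := fun x =>
    (∑ i, (EuclideanSpace.proj (𝕜 := ℝ) i : P →L[ℝ] ℝ).smulRight (νe i x)).comp
      (ContinuousLinearMap.fst ℝ P Λ) +
    (L (fderiv ℝ Ψ x)).comp (ContinuousLinearMap.snd ℝ P Λ)
  have hβa : ∀ x v l, β x (v, l) =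
      ∑ i, v i • νe i x + ContinuousLinearMap.adjoint (fderiv ℝ Ψ x) l := by
    intro x v l
    simp [β, hL]
  have hβN : ∀ x ∈ N, x ∈ U → ∀ v l, β x (v, l) =
      ∑ i, v i • ν i x + ContinuousLinearMap.adjoint (fderiv ℝ Ψ x) l := by
    intro x hx hxU v l
    rw [hβa]
    congr 1
    refine Finset.sum_congr rfl fun i _ => ?_
    rw [hνeq i ⟨hx, hUUν i hxU⟩]
  have hβ : ContDiffOn ℝ (⊤ : ℕ∞) β U := by
    have e1 : ContDiffOn ℝ (⊤ : ℕ∞) (fun x => ∑ i,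
        (EuclideanSpace.proj (𝕜 := ℝ) i : P →L[ℝ] ℝ).smulRight (νe i x)) U :=
      ContDiffOn.sum fun i _ => contDiffOn_const.smulRight ((hνe i).mono (hUUν i))
    have e2 : ContDiffOn ℝ (⊤ : ℕ∞) (fun x => L (fderiv ℝ Ψ x)) U := by
      refine L.contDiff.comp_contDiffOn ?_
      exact ((hΨ.fderiv_of_isOpen hUM (m := ((⊤ : ℕ∞) : WithTop ℕ∞)) (by simp))).mono hUUM
    exact (e1.clm_comp contDiffOn_const).add (e2.clm_comp contDiffOn_const)
  have hΨd : ∀ x ∈ U, ContDiffAt ℝ (⊤ : ℕ∞) Ψ x := fun x hx =>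
    hΨ.contDiffAt (hUM.mem_nhds (hUUM hx))
  have hΦd : ∀ x ∈ U, ContDiffAt ℝ (⊤ : ℕ∞) Φ x := fun x hx =>
    hΦ.contDiffAt (hUN.mem_nhds (hUUN hx))
  have hTM : ∀ x ∈ N, x ∈ U → ∀ v, v ∈ SubTangent M x ↔ fderiv ℝ Ψ x v = 0 := by
    intro x hx hxU v
    exact ⟨subTangent_le_ker hUM hMU (hUUM hxU) ((hΨd x hxU).differentiableAt hne) v,
      ker_le_subTangent hUM hMU (hUUM hxU) (hN.subset hx) (hΨd x hxU) (hΨs x (hUUM hxU)) v⟩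
  have hTN : ∀ x ∈ N, x ∈ U → ∀ v, v ∈ SubTangent N x ↔ fderiv ℝ Φ x v = 0 := by
    intro x hx hxU v
    exact ⟨subTangent_le_ker hUN hNU (hUUN hxU) ((hΦd x hxU).differentiableAt hne) v,
      ker_le_subTangent hUN hNU (hUUN hxU) hx (hΦd x hxU) (hΦs x (hUUN hxU)) v⟩
  have hlin := fun x (hx : x ∈ N) (hxU : x ∈ U) =>
    frame_linalg (TM := SubTangent M x) (TN := SubTangent N x) (n := fun i => ν i x)
      (fderiv ℝ Ψ x) (hΨs x (hUUM hxU)) (hTM x hx hxU)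
      (fun i => hN.framing.mem_tangent i x hx) (hN.framing.indep x hx)
      (fun i => hN.framing.orth i x hx) (hN.framing.spans x hx)
  have hMΨ : ∀ y ∈ U, (y ∈ M ↔ Ψ y = 0) := by
    intro y hy
    have := Set.ext_iff.1 hMU y
    simpa [hUUM hy] using this
  have hNΦ : ∀ y ∈ U, (y ∈ N ↔ Φ y = 0) := by
    intro y hy
    have := Set.ext_iff.1 hNU y
    simpa [hUUN hy] using this
  obtain ⟨l1, l2, -⟩ := hlin x₀ hx₀ hxU
  have hβ0 := hβN x₀ hx₀ hxU
  obtain ⟨η, ρ, κ, W, g, hη, hηU, hρ, hκ, huniq, hW, hxW, hg, hg0, hgW, hgy, hgd⟩ :=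
    local_full (P := P) (Λ := Λ) hU hxU (hΦ.mono hUUN) ((hNΦ x₀ hxU).1 hx₀) (hΨ.mono hUUM)
      ((hMΨ x₀ hxU).1 (hN.subset hx₀)) hβ
      (by
        rintro u ⟨v, l⟩ hu hBu
        rw [hβ0] at hu
        obtain ⟨a, b, c⟩ := l2 u ((hTN x₀ hx₀ hxU u).2 hBu) v l hu
        exact ⟨a, by rw [b, c]; rfl⟩)
      (by
        intro y z
        obtain ⟨u₁, hu₁⟩ := hΦs x₀ hxUN z
        obtain ⟨t, ht, v, l, he⟩ := l1 (y - u₁)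
        refine ⟨u₁ + t, (v, l), ?_, ?_⟩
        · rw [hβ0, add_assoc, ← he]; abel
        · rw [map_add, hu₁, (hTN x₀ hx₀ hxU t).1 ht, add_zero])
      (by
        have := adjoint_bij (fderiv ℝ Ψ x₀) (hΨs x₀ hxUM)
        convert this using 3 with l
        rw [hβ0]
        simp)
      (by
        intro w
        rw [hβ0, map_zero, add_zero]
        refine (hTM x₀ hx₀ hxU _).1 ?_
        exact Submodule.sum_mem _ fun i _ => Submodule.smul_mem _ _
          (hN.framing.mem_tangent i x₀ hx₀))
  have hbU : ball x₀ η ⊆ U := (ball_subset_ball (by linarith)).trans hηU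
  -- identify `h` near `x₀`
  have hh : ∀ y ∈ ball x₀ η, h y = (ρ y, (κ y).1) := by
    intro y hy
    have hb : (h y).1 ∈ ball x₀ (2 * η) := by
      have a1 := h2 y x₀ hx₀
      have a2 := dist_triangle_left (h y).1 x₀ y
      rw [mem_ball] at hy ⊢
      linarith
    have hxU' := hηU hb
    obtain ⟨-, -, l3⟩ := hlin _ (h1 y) hxU'
    obtain ⟨v, l, hvl⟩ := l3 (y - (h y).1) (nearest_orth (h2 y))
    have hv : (h y).2 = v := by
      refine h3 y v fun t ht => ?_
      rw [hvl, add_sub_cancel_left, ContinuousLinearMap.adjoint_inner_left,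
        (hTM _ (h1 y) hxU' t).1 ht, inner_zero_right]
    obtain ⟨b1, b2⟩ := huniq y hy (h y).1 hb ((hNΦ _ hxU').1 (h1 y)) (v, l) (by
      rw [hβN _ (h1 y) hxU', ← hvl]; abel)
    refine Prod.ext b1 ?_
    rw [hv, ← b2]
  refine ⟨η, W ∩ {q | q.1 ∈ U}, g, hη, ?_, hW.inter (hU.preimage continuous_fst), ⟨hxW, hxU⟩,
    hg.mono inter_subset_left, hg0, ?_, ?_, ?_⟩
  · exact (hρ.prodMk hκ.fst).congr hh
  · intro q hq hqN
    obtain ⟨b1, b2, b3, b4⟩ := hgW q hq.1 ((hNΦ _ hq.2).1 hqN) hq.2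
    refine ⟨(hMΨ _ (hbU b1)).2 b2, b1, ?_⟩
    rw [hh _ b1, b3, b4]
  · intro y hyM hy
    obtain ⟨b1, b2⟩ := hgy y hy ((hMΨ _ (hbU hy)).1 hyM)
    have hm : (h y).1 ∈ U := by
      refine hηU ?_
      have a1 := h2 y x₀ hx₀
      have a2 := dist_triangle_left (h y).1 x₀ y
      rw [mem_ball] at hy ⊢
      linarith
    refine ⟨⟨?_, hm⟩, ?_⟩
    · rw [hh y hy]; exact b1
    · rw [hh y hy]; exact b2
  · intro i
    have := hgd (EuclideanSpace.single i 1)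
    rw [hβ0, map_zero, add_zero] at this
    convert this using 1
    simp

/-- **Product neighborhood theorem.**  A compact framed submanifold `(N, ν)` of
codimension `p` of a boundaryless smooth manifold `M` has a neighborhood in `M`
diffeomorphic to `N × ℝ^p`, by a diffeomorphism sending `x ↦ (x, 0)` and matching the
frame `ν(x)` with the standard basis of `ℝ^p`. -/
theorem product_neighborhood (m p : ℕ) (M : Set E) (hM : IsSubmanifold M m)
    (N : Set E) (ν : Fin p → E → E) (hN : IsFramedSubmanifold M m N p ν) :
    ∃ O : Set E, IsOpen O ∧ N ⊆ M ∩ O ∧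
      ∃ g : E × EuclideanSpace ℝ (Fin p) → E,
        SmoothOnSet g (N ×ˢ (univ : Set (EuclideanSpace ℝ (Fin p)))) ∧
        Set.InjOn g (N ×ˢ (univ : Set (EuclideanSpace ℝ (Fin p)))) ∧
        g '' (N ×ˢ (univ : Set (EuclideanSpace ℝ (Fin p)))) = M ∩ O ∧
        (∀ x ∈ N, g (x, 0) = x) ∧
        (∀ x ∈ N, ∀ i : Fin p,
          HasDerivAt (fun s : ℝ => g (x, s • EuclideanSpace.single i 1)) (ν i x) 0) ∧
        ∃ h : E → E × EuclideanSpace ℝ (Fin p),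
          SmoothOnSet h (M ∩ O) ∧
          (∀ q ∈ N ×ˢ (univ : Set (EuclideanSpace ℝ (Fin p))), h (g q) = q) ∧
          (∀ v ∈ M ∩ O, g (h v) = v) := by
  classical
  rcases N.eq_empty_or_nonempty with rfl | hNne
  · refine ⟨∅, isOpen_empty, by simp, fun q => q.1, ?_, by simp, by simp, by simp, by simp,
      fun y => (y, 0), ?_, by simp, by simp⟩
    · rintro x ⟨hx, -⟩
      exact absurd hx (notMem_empty _)
    · rintro x ⟨-, hx⟩
      exact absurd hx (notMem_empty _)
  have hfd : FiniteDimensional ℝ E := finiteDimensional_of_compact hN.submanifold hN.compact hNne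
  -- the nearest point map and the normal coordinates
  have hex : ∀ y : E, ∃ x ∈ N, ∀ z ∈ N, dist y x ≤ dist y z := by
    intro y
    obtain ⟨x, hx, hxd⟩ := hN.compact.exists_infDist_eq_dist hNne y
    exact ⟨x, hx, fun z hz => hxd ▸ infDist_le_dist_of_mem hz⟩
  choose r hrN hrmin using hex
  have hexc : ∀ y : E, ∃ c : EuclideanSpace ℝ (Fin p), ∀ v : EuclideanSpace ℝ (Fin p),
      (∀ t ∈ SubTangent M (r y), ⟪y - r y - ∑ i, v i • ν i (r y), t⟫ = 0) → c = v := by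
    intro y
    by_cases hv : ∃ v : EuclideanSpace ℝ (Fin p),
      ∀ t ∈ SubTangent M (r y), ⟪y - r y - ∑ i, v i • ν i (r y), t⟫ = 0
    · obtain ⟨v, hv⟩ := hv
      exact ⟨v, fun w hw => frame_unique (fun i => hN.framing.mem_tangent i _ (hrN y))
        (hN.framing.indep _ (hrN y)) hv hw⟩
    · exact ⟨0, fun w hw => absurd ⟨w, hw⟩ hv⟩
  choose c hc using hexc
  let h₀ : E → E × EuclideanSpace ℝ (Fin p) := fun y => (r y, c y)
  have hh1 : ∀ y, (h₀ y).1 ∈ N := hrN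
  have hh0 : ∀ x ∈ N, h₀ x = (x, 0) := by
    intro x hx
    have hr : r x = x := by
      have := hrmin x x hx
      rw [dist_self] at this
      exact (dist_le_zero.1 this).symm
    refine Prod.ext hr ?_
    refine hc x 0 fun t _ => ?_
    simp [hr]
  have hloc := fun x₀ : N => geom_local hM hN (h := h₀) hrN hrmin hc x₀.2
  choose η W g hη hsm hW hxW hg hg0 hgW hgy hgd using hloc
  obtain ⟨δ, hδ, hδb⟩ := lebesgue_number_lemma_of_metric (c := fun x₀ : N => ball (x₀ : E) (η x₀))
    hN.compact (fun _ => isOpen_ball)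
    (fun x hx => mem_iUnion.2 ⟨⟨x, hx⟩, mem_ball_self (hη _)⟩)
  -- uniform size in the normal direction
  let D : N → Set (E × EuclideanSpace ℝ (Fin p)) := fun x₀ =>
    W x₀ ∩ (fun q => dist (g x₀ q) q.1) ⁻¹' Iio δ
  have hD : ∀ x₀, IsOpen (D x₀) := fun x₀ =>
    (continuous_dist.comp_continuousOn
      ((hg x₀).continuousOn.prodMk continuousOn_fst)).isOpen_inter_preimage (hW x₀) isOpen_Iio
  have hxD : ∀ x₀ : N, ((x₀ : E), (0 : EuclideanSpace ℝ (Fin p))) ∈ D x₀ := by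
    intro x₀
    refine ⟨hxW x₀, ?_⟩
    simp only [mem_preimage, hg0, dist_self]
    exact hδ
  obtain ⟨u, v, -, hv, hNu, h0v, huv⟩ := generalized_tube_lemma hN.compact
    (isCompact_singleton (x := (0 : EuclideanSpace ℝ (Fin p)))) (isOpen_iUnion hD) (by
      rintro ⟨x, w⟩ ⟨hx, hw⟩
      obtain rfl : w = 0 := hw
      exact mem_iUnion.2 ⟨⟨x, hx⟩, hxD ⟨x, hx⟩⟩)
  obtain ⟨ε, hε, hεv⟩ := Metric.isOpen_iff.1 hv 0 (h0v rfl)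
  have hcover : ∀ x ∈ N, ∀ w : EuclideanSpace ℝ (Fin p), ‖w‖ < ε → ∃ x₀, (x, w) ∈ D x₀ := by
    intro x hx w hw
    exact mem_iUnion.1 (huv ⟨hNu hx, hεv (by simpa using hw)⟩)
  -- the neighborhood
  let B : Set E := ⋃ x₀ : N, ball (x₀ : E) (η x₀)
  have hB : IsOpen B := isOpen_iUnion fun _ => isOpen_ball
  have hsmB : ∀ y ∈ B, ∃ x₀ : N, y ∈ ball (x₀ : E) (η x₀) := fun y hy => mem_iUnion.1 hy
  have hcontB : ContinuousOn h₀ B := by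
    intro y hy
    obtain ⟨x₀, hyx⟩ := hsmB y hy
    exact ((hsm x₀).continuousOn.continuousAt (isOpen_ball.mem_nhds hyx)).continuousWithinAt
  let O : Set E := B ∩ (fun y => (dist y (h₀ y).1, ‖(h₀ y).2‖)) ⁻¹' (Iio δ ×ˢ Iio ε)
  have hO : IsOpen O := by
    refine ContinuousOn.isOpen_inter_preimage ?_ hB (isOpen_Iio.prod isOpen_Iio)
    exact (continuous_dist.comp_continuousOn (continuousOn_id.prodMk hcontB.fst)).prodMk hcontB.snd.norm
  have hOmem : ∀ y, y ∈ O ↔ y ∈ B ∧ dist y (h₀ y).1 < δ ∧ ‖(h₀ y).2‖ < ε := fun y => Iff.rfl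
  have hNO : N ⊆ M ∩ O := by
    intro x hx
    refine ⟨hN.subset hx, (hOmem x).2 ⟨mem_iUnion.2 ⟨⟨x, hx⟩, mem_ball_self (hη _)⟩, ?_, ?_⟩⟩
    · rw [hh0 x hx, dist_self]; exact hδ
    · rw [hh0 x hx, norm_zero]; exact hε
  have hinj : InjOn h₀ (M ∩ O) := by
    intro y hy y' hy' heq
    obtain ⟨x₀, hx₀⟩ := hδb _ (hh1 y)
    have a1 : y ∈ ball (x₀ : E) (η x₀) := hx₀ ((hOmem y).1 hy.2).2.1
    have a2 : y' ∈ ball (x₀ : E) (η x₀) := by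
      refine hx₀ ?_
      rw [heq]; exact ((hOmem y').1 hy'.2).2.1
    rw [← (hgy x₀ y hy.1 a1).2, heq, (hgy x₀ y' hy'.1 a2).2]
  have hgD : ∀ x₀ : N, ∀ q ∈ D x₀, q.1 ∈ N → ‖q.2‖ < ε → g x₀ q ∈ M ∩ O ∧ h₀ (g x₀ q) = q := by
    intro x₀ q hq hqN hqε
    obtain ⟨b1, b2, b3⟩ := hgW x₀ q hq.1 hqN
    refine ⟨⟨b1, (hOmem _).2 ⟨mem_iUnion.2 ⟨x₀, b2⟩, ?_, ?_⟩⟩, b3⟩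
    · rw [b3]; exact hq.2
    · rw [b3]; exact hqε
  let G : E × EuclideanSpace ℝ (Fin p) → E := Function.invFunOn h₀ (M ∩ O)
  have hGg : ∀ x₀ : N, ∀ q ∈ D x₀, q.1 ∈ N → ‖q.2‖ < ε → G q = g x₀ q := by
    intro x₀ q hq hqN hqε
    obtain ⟨b1, b2⟩ := hgD x₀ q hq hqN hqε
    have hq' : ∃ a ∈ M ∩ O, h₀ a = q := ⟨_, b1, b2⟩
    exact hinj (Function.invFunOn_mem hq') b1 ((Function.invFunOn_eq hq').trans b2.symm)
  have hGmem : ∀ q : E × EuclideanSpace ℝ (Fin p), q.1 ∈ N → ‖q.2‖ < ε →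
      G q ∈ M ∩ O ∧ h₀ (G q) = q := by
    intro q hqN hqε
    obtain ⟨x₀, hx₀⟩ := hcover q.1 hqN q.2 hqε
    rw [hGg x₀ q hx₀ hqN hqε]
    exact hgD x₀ q hx₀ hqN hqε
  have hGh : ∀ y ∈ M ∩ O, G (h₀ y) = y := by
    intro y hy
    obtain ⟨b1, b2⟩ := hGmem (h₀ y) (hh1 y) ((hOmem y).1 hy.2).2.2
    exact hinj b1 hy b2
  let sh : E × EuclideanSpace ℝ (Fin p) → E × EuclideanSpace ℝ (Fin p) :=
    fun q => (q.1, shrink p ε q.2)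
  have hsh : ContDiff ℝ (⊤ : ℕ∞) sh :=
    contDiff_fst.prodMk ((contDiff_shrink hε).comp contDiff_snd)
  have hshε : ∀ q, ‖(sh q).2‖ < ε := fun q => shrink_norm_lt hε _
  have hleft : ∀ q ∈ N ×ˢ (univ : Set (EuclideanSpace ℝ (Fin p))),
      ((h₀ (G (sh q))).1, expand p ε (h₀ (G (sh q))).2) = q := by
    intro q hq
    rw [(hGmem (sh q) hq.1 (hshε q)).2]
    exact Prod.ext rfl (expand_shrink hε _)
  have hright : ∀ y ∈ M ∩ O, G (sh ((h₀ y).1, expand p ε (h₀ y).2)) = y := by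
    intro y hy
    have : sh ((h₀ y).1, expand p ε (h₀ y).2) = h₀ y :=
      Prod.ext rfl (shrink_expand hε _ ((hOmem y).1 hy.2).2.2)
    rw [this, hGh y hy]
  have hsh0 : ∀ x : E, sh (x, 0) = (x, 0) := fun x => by simp [sh, shrink]
  refine ⟨O, hO, hNO, fun q => G (sh q), ?_, ?_, ?_, ?_, ?_,
    fun y => ((h₀ y).1, expand p ε (h₀ y).2), ?_, hleft, hright⟩
  · intro q hq
    obtain ⟨x₀, hx₀⟩ := hcover (sh q).1 hq.1 (sh q).2 (hshε q)
    refine ⟨sh ⁻¹' D x₀, fun q => g x₀ (sh q), (hD x₀).preimage hsh.continuous, hx₀, ?_, ?_⟩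
    · exact ((hg x₀).mono inter_subset_left).comp hsh.contDiffOn (fun q hq => hq)
    · intro q' hq'
      exact hGg x₀ (sh q') hq'.2 hq'.1.1 (hshε q')
  · intro q hq q' hq' heq
    rw [← hleft q hq, ← hleft q' hq']
    simp only at heq
    rw [heq]
  · ext y
    constructor
    · rintro ⟨q, hq, rfl⟩
      exact (hGmem (sh q) hq.1 (hshε q)).1
    · intro hy
      exact ⟨((h₀ y).1, expand p ε (h₀ y).2), ⟨hh1 y, mem_univ _⟩, hright y hy⟩
  · intro x hx
    simp only [hsh0]
    rw [← hh0 x hx, hGh x (hNO hx)]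
  · intro x hx i
    let σ' : ℝ → ℝ := fun s => ε / √(ε ^ 2 + s ^ 2) * s
    have hσ0 : σ' 0 = 0 := by simp [σ']
    have hσd : HasDerivAt σ' 1 0 := by
      have e1 : DifferentiableAt ℝ (fun s : ℝ => ε / √(ε ^ 2 + s ^ 2)) 0 := by
        have e3 : DifferentiableAt ℝ (fun s : ℝ => ε ^ 2 + s ^ 2) 0 := by fun_prop
        refine DifferentiableAt.div (by fun_prop) (e3.sqrt (by positivity)) (by positivity)
      have e2 : HasDerivAt σ' (deriv (fun s : ℝ => ε / √(ε ^ 2 + s ^ 2)) 0 * 0 +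
          ε / √(ε ^ 2 + 0 ^ 2) * 1) 0 := e1.hasDerivAt.mul (hasDerivAt_id (0 : ℝ))
      have e4 : deriv (fun s : ℝ => ε / √(ε ^ 2 + s ^ 2)) 0 * 0 +
          ε / √(ε ^ 2 + 0 ^ 2) * 1 = 1 := by
        have e5 : √(ε ^ 2 + 0 ^ 2) = ε := by
          rw [zero_pow two_ne_zero, add_zero, Real.sqrt_sq hε.le]
        rw [e5, mul_zero, zero_add, mul_one, div_self hε.ne']
      rw [e4] at e2
      exact e2
    have hshs : ∀ s : ℝ, sh (x, s • EuclideanSpace.single i 1) =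
        (x, σ' s • EuclideanSpace.single i 1) := by
      intro s
      refine Prod.ext rfl ?_
      simp only [sh, shrink, σ', norm_smul, Real.norm_eq_abs, EuclideanSpace.norm_single,
        norm_one, mul_one, sq_abs, smul_smul]
    have hcomp : HasDerivAt (fun s : ℝ => g ⟨x, hx⟩ (x, σ' s • EuclideanSpace.single i 1))
        (ν i x) 0 := by
      have e1 := hgd ⟨x, hx⟩ i
      rw [← hσ0] at e1
      have e2 := e1.scomp (0 : ℝ) hσd
      rw [one_smul] at e2
      exact e2
    refine hcomp.congr_of_eventuallyEq ?_
    have hcont : Continuous fun s : ℝ => sh (x, s • EuclideanSpace.single i (1 : ℝ)) :=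
      hsh.continuous.comp (by fun_prop)
    have hev : ∀ᶠ s : ℝ in 𝓝 0, sh (x, s • EuclideanSpace.single i (1 : ℝ)) ∈ D ⟨x, hx⟩ := by
      refine hcont.continuousAt.eventually_mem ((hD _).mem_nhds ?_)
      rw [zero_smul, hsh0]
      exact hxD ⟨x, hx⟩
    filter_upwards [hev] with s hs
    rw [hGg ⟨x, hx⟩ _ hs hx (hshε _), hshs]
  · rintro y ⟨hyM, hyO⟩
    obtain ⟨x₀, hx₀⟩ := hsmB y hyO.1
    refine ⟨ball (x₀ : E) (η x₀) ∩ O, fun y => ((h₀ y).1, expand p ε (h₀ y).2),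
      isOpen_ball.inter hO, ⟨hx₀, hyO⟩, ?_, fun _ _ => rfl⟩
    have e1 : ContDiffOn ℝ (⊤ : ℕ∞) h₀ (ball (x₀ : E) (η x₀) ∩ O) :=
      (hsm x₀).mono inter_subset_left
    refine e1.fst.prodMk (contDiffOn_expand.comp e1.snd ?_)
    intro z hz
    simpa using ((hOmem z).1 hz.2).2.2

end Paper
end
end
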